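/- arXiv:2407.15506 — 4 statements merged into one kernel-verified Lean document; each statement's English description precedes it below -/
import Mathlib

section
/- Let (W,S) be a Coxeter system, let α, β be roots (half-spaces) with α ≠ ±β, and suppose the pair {α, β} is prenilpotent (i.e. α ∩ β ≠ ∅ and (−α) ∩ (−β) ≠ ∅) and the product of the reflections r_α r_β has infinite order. Then {α, β} is nested, i.e. α ⊆ β or β ⊆ α. -/
variable {B W : Type*} [Group W] {M : CoxeterMatrix B}

/-- The simple root `α_s = {w ∈ W : ℓ(sw) > ℓ(w)}`, viewed as a half-space of chambers. -/
def simpleRoot (cs : CoxeterSystem M W) (s : B) : Set W :=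
  {w : W | cs.length w < cs.length (cs.simple s * w)}

/-- `α` is a root (half-space) with associated reflection `r`: `α = v • α_s` and
`r = v s v⁻¹` for some `v ∈ W`, `s ∈ S`.  The opposite root `-α` is the complement `αᶜ`. -/
def IsRootPair (cs : CoxeterSystem M W) (α : Set W) (r : W) : Prop :=
  ∃ (v : W) (s : B), α = (v * ·) '' simpleRoot cs s ∧ r = v * cs.simple s * v⁻¹

theorem core_aux {X : Type*} [Nonempty X] (f : X → ℤ → Bool) (r : ℤ → X → X)
    (hr : ∀ m x n, f (r m x) n = !f x (2*m-n)) (adj : X → X → Prop)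
    (hadj : ∀ x y, adj x y → f x = f y ∨ ∃ n, f y = f (r n x) ∧ ∀ k, k ≠ n → f y k = f x k)
    (conn : ∀ (P : X → Prop) x, P x → (∀ y z, P y → adj y z → P z) → ∀ y, P y) :
    ∃ c0 c1, ∀ x, f x 0 = c0 → f x 1 = c1 := by
  have hfin : ∀ x y, ∃ N : ℤ, ∀ n, N ≤ |n| → f x n = f y n := by
    intro x
    refine conn _ x ⟨0, fun _ _ => rfl⟩ ?_
    rintro y z ⟨N, hN⟩ hyz
    rcases hadj y z hyz with h | ⟨n, -, h⟩
    · exact ⟨N, by rwa [← h]⟩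
    · refine ⟨max N (|n| + 1), fun k hk => ?_⟩
      rw [hN k (le_trans (le_max_left _ _) hk), h k]
      rintro rfl
      have := le_trans (le_max_right _ _) hk
      omega
  have hev : ∀ x, ∃ N : ℤ, 0 ≤ N ∧ ∀ n, N ≤ n → f x (n+2) = f x n ∧ f x (-n) = !f x n := by
    intro x
    obtain ⟨N, hN⟩ := hfin x (r 0 x)
    obtain ⟨N', hN'⟩ := hfin x (r 1 x)
    refine ⟨|N| + |N'|, by positivity, fun n hn => ?_⟩
    have h1 := hN n (by grind)
    have h2 := hN' (n+2) (by grind)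
    rw [hr] at h1 h2
    rw [show 2 * 0 - n = -n by ring] at h1
    rw [show 2 * 1 - (n+2) = -n by ring] at h2
    rw [h2, h1]; simp
  have step : ∀ x N, (∀ n, N ≤ n → f x (n+2) = f x n) → ∀ n, N ≤ n → ∀ j : ℕ,
      f x (n + 2 * j) = f x n := by
    intro x N h n hn j
    induction j with
    | zero => simp
    | succ j ih => 
      rw [← ih, ← h (n + 2 * j) (by omega)]; congr 1; push_cast; ring
  -- the set S
  let S : (ℤ → Bool) → ℤ → Prop := fun g a => ∀ k, k ≠ a → g k = !g (2*a-k)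
  have hS2 : ∀ x, ∃ a b, a < b ∧ S (f x) a ∧ S (f x) b := by
    intro x
    by_contra hcon
    push Not at hcon
    have huniq : ∀ a b, S (f x) a → S (f x) b → a = b := by
      intro a b ha hb
      rcases lt_trichotomy a b with h | h | h
      · exact absurd hb (hcon a b h ha)
      · exact h
      · exact absurd ha (hcon b a h hb)
    by_cases hex : ∃ a, S (f x) a
    · obtain ⟨a, ha⟩ := hex
      have : ∀ y, (f y = f x ∨ f y = f (r a x)) ∧ ∀ k, k ≠ a → f y k = f x k := by
        refine conn _ x ⟨Or.inl rfl, fun _ _ => rfl⟩ ?_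
        rintro y z ⟨h1, h2⟩ hyz
        rcases hadj y z hyz with h | ⟨n, h, h'⟩
        · rw [← h]; exact ⟨h1, h2⟩
        · have hn : S (f y) n := by
            intro k hk
            rw [← h' k hk, h, hr]
          have hna : n = a := by
            rcases h1 with h1 | h1
            · rw [h1] at hn; exact huniq _ _ hn ha
            · have : S (f x) (2*a - n) := by
                intro k hk
                have := hn (2*a - k) (by omega)
                rw [h1, hr, hr] at this
                rw [show 2*a - (2*a-k) = k by ring, 
                  show 2*a - (2*n-(2*a-k)) = 2*(2*a-n)-k by ring] at this
                simpa using this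
              have := huniq _ _ this ha
              omega
          subst hna
          refine ⟨?_, fun k hk => by rw [h' k hk, h2 k hk]⟩
          rcases h1 with h1 | h1
          · right; rw [h]; funext k; rw [hr, hr, h1]
          · left; rw [h]; funext k; rw [hr, h1, hr]; simp
      have h := (this (r (a+1) x)).2 (a+1) (by omega)
      rw [hr, show 2*(a+1)-(a+1) = a+1 by ring] at h
      simp at h
    · push Not at hex
      have : ∀ y, f y = f x := by
        refine conn _ x rfl ?_
        intro y z h1 hyz
        rcases hadj y z hyz with h | ⟨n, h, h'⟩
        · rw [← h]; exact h1
        · exfalso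
          apply hex n
          intro k hk
          rw [← h1, ← h' k hk, h, hr]
      have h := congrFun (this (r 0 x)) 0
      rw [hr] at h
      simp at h
  have hS3 : ∀ x, ∃ a, S (f x) a ∧ S (f x) (a+1) := by
    intro x
    obtain ⟨a, b, hab, ha, hb⟩ := hS2 x
    by_cases h1 : b = a + 1
    · subst h1; exact ⟨a, ha, hb⟩
    exfalso
    obtain ⟨N, hN0, hN⟩ := hev x
    have hper : ∀ j : ℤ, f x (a + 1 + j * (b-a) * 2) = f x (a + 1 + (j+1) * (b-a) * 2) := by
      have key : ∀ q : ℤ, 1 + q * (b-a) ≠ 0 := by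
        intro q hq
        have : (b-a) ∣ 1 := ⟨-q, by linarith⟩
        have := Int.le_of_dvd one_pos this
        omega
      intro j
      have e1 := ha (a + 1 + j * (b-a) * 2) (by
        intro h; apply key (j*2); linarith)
      have e2 := hb (2*a - (a + 1 + j * (b-a) * 2)) (by
        intro h; apply key (j*2+1); linarith)
      rw [e1, e2, Bool.not_not]; congr 1; ring
    have hall : ∀ j : ℕ, f x (a+1 + j * (b-a) * 2) = f x (a+1) ∧ 
        f x (a+1 - j * (b-a) * 2) = f x (a+1) := by
      intro j
      induction j with
      | zero => simp
      | succ j ih =>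
        refine ⟨?_, ?_⟩
        · rw [← ih.1, hper j]; push_cast; rfl
        · rw [← ih.2]
          have := hper (-(j+1))
          convert this using 2 <;> push_cast <;> ring
    obtain ⟨J, hJ⟩ : ∃ J : ℕ, N + |a+1| ≤ J := ⟨(N + |a+1|).toNat, Int.self_le_toNat _⟩
    obtain ⟨u, v⟩ := hall J
    have hJJ : (J:ℤ) ≤ J * (b-a) := by nlinarith
    generalize (J:ℤ) * (b-a) = p at *
    have A1 := le_abs_self (a+1)
    have A2 := neg_abs_le (a+1)
    have w := (hN (-(a+1 - p*2)) (by omega)).2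
    rw [neg_neg, v] at w
    have hst := step x N (fun n hn => (hN n hn).1)
    rcases le_total (-(a+1 - p*2)) (a+1+p*2) with hle | hle
    · obtain ⟨j, hj⟩ : ∃ j : ℕ, a+1+p*2 = -(a+1-p*2) + 2 * j := ⟨(a+1).toNat, by omega⟩
      have := hst (-(a+1-p*2)) (by omega) j
      rw [← hj, u] at this
      rw [← this] at w; simp at w
    · obtain ⟨j, hj⟩ : ∃ j : ℕ, -(a+1-p*2) = a+1+p*2 + 2 * j := ⟨(-(a+1)).toNat, by omega⟩
      have := hst (a+1+p*2) (by omega) j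
      rw [← hj, u] at this
      rw [this] at w; simp at w
  obtain ⟨x0⟩ := ‹Nonempty X›
  obtain ⟨N0, hN00, hN0⟩ := hev x0
  have hst0 := step x0 N0 (fun n hn => (hN0 n hn).1)
  refine ⟨f x0 (2*N0), f x0 (2*N0+1), fun x hx => ?_⟩
  obtain ⟨a, ha, hb⟩ := hS3 x
  obtain ⟨N, hN⟩ := hfin x x0
  have hup : ∀ k, a + 1 ≤ k → f x (k+2) = f x k := by
    intro k hk
    have e1 := ha k (by omega)
    have e2 := hb (2*a-k) (by omega)
    rw [e1, e2, Bool.not_not]; congr 1; ring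
  have hlow : ∀ k, k ≤ a - 2 → f x (k+2) = f x k := by
    intro k hk
    have e1 := ha k (by omega)
    have e2 := hb (2*a-k) (by omega)
    rw [e1, e2, Bool.not_not]; congr 1; ring
  have hstx := step x (a+1) hup
  -- large index comparison
  have hbig : ∀ c, N0 ≤ c → ∀ d, a + 1 ≤ d → (∃ q, c = d + 2 * q) → f x d = f x0 c := by
    rintro c hc d hd ⟨q, hq⟩
    have C1 := le_abs_self c
    have C2 := neg_abs_le c
    have D1 := le_abs_self d
    have D2 := neg_abs_le d
    have N1 := le_abs_self N
    have N2 := abs_nonneg N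
    have e1 := hstx d hd (|N| + |c| + |d|).toNat
    rw [Int.toNat_of_nonneg (by positivity)] at e1
    have e2 := hst0 c hc ((|N| + |c| + |d|) - q).toNat
    rw [Int.toNat_of_nonneg (by omega)] at e2
    rw [← e1, ← e2, hN _ (le_trans (by omega) (le_abs_self _))]; congr 1; rw [hq]; ring
  have ha0 : a + 1 ≤ 0 := by
    by_contra hcon
    have hlow' : ∀ j : ℕ, ∀ k, k + 2 * j ≤ a → f x (k+2*j) = f x k := by
      intro j
      induction j with
      | zero => simp
      | succ j ih =>
        intro k hk
        push_cast at hk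
        rw [← ih k (by omega), ← hlow (k + 2*j) (by omega)]; congr 1; push_cast; ring
    rcases Int.even_or_odd' a with ⟨q, hq | hq⟩
    · have e := hlow' q.toNat 0 (by omega)
      rw [show (0:ℤ) + 2 * (q.toNat : ℤ) = a by omega] at e
      have e2 := hb a (by omega)
      have e3 := hbig (2*N0) (by omega) (a+2) (by omega) ⟨N0 - q - 1, by omega⟩
      rw [show 2 * (a+1) - a = a + 2 by ring, e3, ← hx, e] at e2
      simp at e2
    · have e := hlow' q.toNat 0 (by omega)
      rw [show (0:ℤ) + 2 * (q.toNat : ℤ) = a - 1 by omega] at e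
      have e2 := ha (a-1) (by omega)
      have e3 := hbig (2*N0) (by omega) (a+1) (by omega) ⟨N0 - q - 1, by omega⟩
      rw [show 2 * a - (a - 1) = a + 1 by ring, e3, ← hx, e] at e2
      simp at e2
  exact hbig (2*N0+1) (by omega) 1 (by omega) ⟨N0, by ring⟩

open Classical in
/-- The affine action of a simple reflection on functions. -/
noncomputable def gAct (cs : CoxeterSystem M W) (i : B) : Function.End (W → ZMod 2) :=
  fun f t => f (cs.simple i * t * cs.simple i) + (if t = cs.simple i then 1 else 0)

open Classical in
theorem gAct_word (cs : CoxeterSystem M W) (ω : List B) (f : W → ZMod 2) (t : W) :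
    ((ω.map (gAct cs)).prod : Function.End (W → ZMod 2)) f t =
      f ((cs.wordProd ω)⁻¹ * t * cs.wordProd ω) + (List.count t (cs.leftInvSeq ω) : ZMod 2) := by
  induction ω generalizing t with
  | nil => simp; rfl
  | cons i ω ih =>
    rw [List.map_cons, List.prod_cons]
    change gAct cs i (((ω.map (gAct cs)).prod : Function.End (W → ZMod 2)) f) t = _
    unfold gAct
    change (((ω.map (gAct cs)).prod : Function.End (W → ZMod 2)) f) _ + _ = _
    rw [ih]
    have h1 : List.count t (List.map (MulAut.conj (cs.simple i)) (cs.leftInvSeq ω)) =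
        List.count (cs.simple i * t * cs.simple i) (cs.leftInvSeq ω) := by
      have : t = MulAut.conj (cs.simple i) (cs.simple i * t * cs.simple i) := by
        simp [mul_assoc]
      conv_lhs => rw [this]
      exact List.count_map_of_injective _ _ (MulEquiv.injective _) _
    rw [CoxeterSystem.leftInvSeq, List.count_cons, h1, cs.wordProd_cons]
    simp only [mul_inv_rev, cs.inv_simple, mul_assoc, beq_iff_eq, eq_comm (a := t)]
    push_cast
    rw [add_assoc]

theorem alt_prod {G : Type*} [Monoid G] (g : B → G) (i j : B) (m : ℕ) :
    ((CoxeterSystem.alternatingWord i j (2*m)).map g).prod = (g i * g j)^m := by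
  induction m with
  | zero => simp [CoxeterSystem.alternatingWord]
  | succ m ih =>
    rw [show 2 * (m+1) = 2*m+1+1 by ring, CoxeterSystem.alternatingWord_succ',
      CoxeterSystem.alternatingWord_succ']
    simp [ih, pow_succ', mul_assoc, Nat.even_add_one]

open Classical in
theorem gAct_liftable (cs : CoxeterSystem M W) : M.IsLiftable (gAct cs) := by
  intro i j
  rw [← alt_prod]
  funext f
  funext t
  rw [gAct_word]
  have h1 : cs.wordProd (CoxeterSystem.alternatingWord i j (2 * M i j)) = 1 := by
    rw [CoxeterSystem.wordProd, alt_prod]; simp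
  have h2 : List.drop (M i j) (cs.leftInvSeq (CoxeterSystem.alternatingWord i j (2 * M i j))) =
      List.take (M i j) (cs.leftInvSeq (CoxeterSystem.alternatingWord i j (2 * M i j))) := by
    apply List.ext_getElem
    · simp; omega
    · intro k hk hk'
      simp at hk hk'
      rw [List.getElem_drop, List.getElem_take, cs.getElem_leftInvSeq_alternatingWord _ _ _ _ (by omega),
        cs.getElem_leftInvSeq_alternatingWord _ _ _ _ (by omega),
        cs.prod_alternatingWord_eq_mul_pow, cs.prod_alternatingWord_eq_mul_pow]
      have e1 : (2 * (M i j + k) + 1) / 2 = M i j + k := by omega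
      have e2 : (2 * k + 1) / 2 = k := by omega
      rw [e1, e2, pow_add]
      simp
  rw [h1, ← List.take_append_drop (M i j) (cs.leftInvSeq _), h2, List.count_append]
  push_cast
  rw [CharTwo.add_self_eq_zero]
  simp
  rfl

/-- The reflection cocycle. -/
noncomputable def eta (cs : CoxeterSystem M W) (w : W) : W → ZMod 2 :=
  (cs.lift ⟨gAct cs, gAct_liftable cs⟩ w : Function.End (W → ZMod 2)) 0

open Classical in
theorem eta_word (cs : CoxeterSystem M W) (ω : List B) (t : W) :
    eta cs (cs.wordProd ω) t = (List.count t (cs.leftInvSeq ω) : ZMod 2) := by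
  have : cs.lift ⟨gAct cs, gAct_liftable cs⟩ (cs.wordProd ω) = (ω.map (gAct cs)).prod := by
    rw [CoxeterSystem.wordProd, map_list_prod, List.map_map]
    congr 2
    funext i
    exact cs.lift_apply_simple _ i
  rw [eta, this, gAct_word]
  simp

open Classical in
theorem eta_simple_mul (cs : CoxeterSystem M W) (w : W) (i : B) :
    eta cs (cs.simple i * w) (cs.simple i) = eta cs w (cs.simple i) + 1 := by
  unfold eta
  rw [map_mul, cs.lift_apply_simple]
  change gAct cs i _ _ = _
  simp [gAct]

open Classical in
theorem eta_mul_simple (cs : CoxeterSystem M W) (w : W) (i : B) (t : W) :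
    eta cs (w * cs.simple i) t = eta cs w t + (if t = w * cs.simple i * w⁻¹ then 1 else 0) := by
  obtain ⟨ω, rfl⟩ := cs.wordProd_surjective w
  rw [← cs.wordProd_concat, eta_word, eta_word, cs.leftInvSeq_concat]
  rw [List.concat_eq_append, List.count_append, List.count_singleton]
  simp only [beq_iff_eq, eq_comm (a := t)]
  push_cast
  rw [cs.wordProd_concat]

theorem mem_simpleRoot_iff (cs : CoxeterSystem M W) (w : W) (i : B) :
    w ∈ simpleRoot cs i ↔ eta cs w (cs.simple i) = 0 := by
  classical
  have key : ∀ w, eta cs w (cs.simple i) ≠ 0 → cs.length (cs.simple i * w) < cs.length w := by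
    intro w hw
    obtain ⟨ω, hω, rfl⟩ := cs.exists_isReduced w
    rw [eta_word] at hw
    have : cs.simple i ∈ cs.leftInvSeq ω := by
      by_contra h
      rw [List.count_eq_zero_of_not_mem h] at hw
      simp at hw
    exact (cs.isLeftInversion_of_mem_leftInvSeq hω this).2
  constructor
  · intro h
    by_contra h'
    have := key w h'
    simp only [simpleRoot, Set.mem_setOf_eq] at h
    omega
  · intro h
    have := key (cs.simple i * w) (by rw [eta_simple_mul, h]; simp)
    simpa [simpleRoot] using this

theorem root_refl (cs : CoxeterSystem M W) {A : Set W} {r : W} (h : IsRootPair cs A r) (x : W) :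
    r * x ∈ A ↔ x ∉ A := by
  obtain ⟨v, s, rfl, rfl⟩ := h
  have : ∀ y, y ∈ (v * ·) '' simpleRoot cs s ↔ v⁻¹ * y ∈ simpleRoot cs s := by simp
  rw [this, this, mem_simpleRoot_iff, mem_simpleRoot_iff,
    show v⁻¹ * (v * cs.simple s * v⁻¹ * x) = cs.simple s * (v⁻¹ * x) by group, eta_simple_mul]
  generalize eta cs _ _ = z
  revert z; decide

theorem root_cross (cs : CoxeterSystem M W) {A : Set W} {r : W} (h : IsRootPair cs A r) (x : W)
    (i : B) (hx : ¬ (x * cs.simple i ∈ A ↔ x ∈ A)) : x * cs.simple i = r * x := by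
  classical
  obtain ⟨v, s, rfl, rfl⟩ := h
  have : ∀ y, y ∈ (v * ·) '' simpleRoot cs s ↔ v⁻¹ * y ∈ simpleRoot cs s := by simp
  rw [this, this, mem_simpleRoot_iff, mem_simpleRoot_iff, ← mul_assoc, eta_mul_simple] at hx
  split_ifs at hx with h
  · rw [h]; group
  · simp at hx

theorem root_sq (cs : CoxeterSystem M W) {A : Set W} {r : W} (h : IsRootPair cs A r) :
    r * r = 1 := by
  obtain ⟨v, s, rfl, rfl⟩ := h
  simp [mul_assoc]

/-- If `α ≠ ±β` are roots forming a prenilpotent pair and `r_α r_β`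
has infinite order, then `{α, β}` is nested. -/
theorem stmt4 (cs : CoxeterSystem M W) (α β : Set W) (rα rβ : W)
    (hα : IsRootPair cs α rα) (hβ : IsRootPair cs β rβ)
    (hne : α ≠ β) (hnopp : α ≠ βᶜ)
    (hpre1 : (α ∩ β).Nonempty) (hpre2 : (αᶜ ∩ βᶜ).Nonempty)
    (hinf : ¬ IsOfFinOrder (rα * rβ)) :
    α ⊆ β ∨ β ⊆ α := by
  classical
  have ha2 := root_sq cs hα
  have hb2 := root_sq cs hβ
  have hai : rα⁻¹ = rα := inv_eq_of_mul_eq_one_left ha2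
  have hbi : rβ⁻¹ = rβ := inv_eq_of_mul_eq_one_left hb2
  obtain ⟨τ, hτ⟩ : ∃ τ, τ = rβ * rα := ⟨_, rfl⟩
  have hτinf : ∀ m n : ℤ, τ ^ m = τ ^ n → m = n := by
    have : ¬ IsOfFinOrder τ := by
      rw [← isOfFinOrder_inv_iff, hτ, mul_inv_rev, hai, hbi]; exact hinf
    intro m n h
    exact injective_zpow_iff_not_isOfFinOrder.2 this h
  have hβτ : rβ = τ * rα := by rw [hτ, mul_assoc, ha2, mul_one]
  have hca : ∀ k : ℤ, rα * τ ^ k = τ ^ (-k) * rα := by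
    intro k
    have h1 : rα * τ * rα⁻¹ = τ⁻¹ := by
      rw [hτ, mul_inv_rev, hai, hbi]
      simp only [mul_assoc, ha2, mul_one]
    have h2 : rα * τ ^ k * rα⁻¹ = τ ^ (-k) := by
      rw [← conj_zpow, h1]; simp
    rw [← h2]; group
  let f : W → ℤ → Bool := fun x n =>
    if Even n then decide (τ ^ (-(n/2)) * x ∈ α) else decide (τ ^ (-(n/2)) * x ∈ β)
  have fe : ∀ x k, f x (2*k) = decide (τ ^ (-k) * x ∈ α) := by
    intro x k
    have : 2 * k / 2 = k := by omega
    simp [f, this]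
  have fo : ∀ x k, f x (2*k+1) = decide (τ ^ (-k) * x ∈ β) := by
    intro x k
    have : (2 * k + 1) / 2 = k := by omega
    simp only [f, this]
    rw [if_neg]
    simp
  let r : ℤ → W → W := fun n x => τ ^ n * rα * x
  obtain ⟨c0, c1, hc⟩ := core_aux f r (by
      intro m x n
      rcases Int.even_or_odd' n with ⟨k, rfl | rfl⟩
      · rw [show 2 * m - 2 * k = 2 * (m-k) by ring, fe, fe]
        have : τ ^ (-k) * r m x = rα * (τ ^ (-(m-k)) * x) := by
          simp only [r]
          rw [← mul_assoc rα, hca, ← mul_assoc, ← mul_assoc, ← zpow_add]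
          congr 3; ring
        rw [this]
        simp [root_refl cs hα]
      · rw [show 2 * m - (2 * k + 1) = 2 * (m-k-1) + 1 by ring, fo, fo]
        have : τ ^ (-k) * r m x = rβ * (τ ^ (-(m-k-1)) * x) := by
          simp only [r]
          rw [hβτ, ← mul_assoc (τ * rα), mul_assoc τ, hca, ← mul_assoc, ← mul_assoc, ← mul_assoc,
            ← zpow_add, ← zpow_one_add]
          congr 3; ring
        rw [this]
        simp [root_refl cs hβ])
    (fun x y => ∃ i, y = x * cs.simple i) (by
      rintro x y ⟨i, rfl⟩
      have cross : ∀ n, f (x * cs.simple i) n ≠ f x n → x * cs.simple i = r n x := by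
        intro n hn
        rcases Int.even_or_odd' n with ⟨k, rfl | rfl⟩
        · rw [fe, fe] at hn
          have := root_cross cs hα (τ ^ (-k) * x) i (by
            rw [mul_assoc]; intro h; apply hn; simp only [h])
          have h2 : x * cs.simple i = τ ^ k * (τ ^ (-k) * x * cs.simple i) := by group
          rw [h2, this, ← mul_assoc rα, hca]
          simp only [r, ← mul_assoc, ← zpow_add]
          congr 3; ring
        · rw [fo, fo] at hn
          have := root_cross cs hβ (τ ^ (-k) * x) i (by
            rw [mul_assoc]; intro h; apply hn; simp only [h])
          have h2 : x * cs.simple i = τ ^ k * (τ ^ (-k) * x * cs.simple i) := by group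
          rw [h2, this, hβτ, ← mul_assoc (τ * rα), mul_assoc τ, hca]
          simp only [r, ← mul_assoc, ← zpow_add, ← zpow_add_one]
          congr 3; ring
      by_cases h : f x = f (x * cs.simple i)
      · exact Or.inl h
      · right
        obtain ⟨n, hn⟩ := Function.ne_iff.1 h
        have e := cross n (Ne.symm hn)
        refine ⟨n, by rw [e], fun k hk => ?_⟩
        by_contra hcon
        have e' := cross k hcon
        rw [e] at e'
        simp only [r] at e'
        exact hk (hτinf _ _ (mul_right_cancel (mul_right_cancel e'))).symm)
    (by
      intro P x hx hP y
      have : P (x * (x⁻¹ * y)) := by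
        refine cs.simple_induction_right (p := fun w => P (x * w)) (x⁻¹ * y) (by simpa using hx) ?_
        intro w i hw
        exact hP _ _ hw ⟨i, by rw [mul_assoc]⟩
      simpa using this)
  have f0 : ∀ x, f x 0 = decide (x ∈ α) := by
    intro x; simpa using fe x 0
  have f1 : ∀ x, f x 1 = decide (x ∈ β) := by
    intro x; simpa using fo x 0
  simp only [f0, f1] at hc
  obtain ⟨p, hp1, hp2⟩ := hpre1
  obtain ⟨q, hq1, hq2⟩ := hpre2
  rcases c0 with _ | _ <;> rcases c1 with _ | _ <;> simp at hc
  · right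
    intro x hx
    by_contra h
    exact hc x h hx
  · exact absurd (hc q hq1) hq2
  · exact absurd hp2 (hc p hp1)
  · exact Or.inl hc
end

section
/- Let (W,S) be a Coxeter system, let α ≠ ±β be roots with o(r_α r_β) < ∞ and γ ∈ (α, β). Then there exists a spherical rank-2 residue R with R ∈ ∂²α ∩ ∂²β ∩ ∂²γ, and both o(r_α r_γ) and o(r_β r_γ) are finite. -/
variable {B W : Type*} [Group W] {M : CoxeterMatrix B}

/-- A spherical rank-2 residue of the chamber system `Σ(W,S)`: a coset `c⟨s,t⟩` with
`s ≠ t` and `⟨s,t⟩` finite. -/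
def IsSphRank2Residue (cs : CoxeterSystem M W) (R : Set W) : Prop :=
  ∃ (c : W) (s t : B), s ≠ t ∧
    (Subgroup.closure {cs.simple s, cs.simple t} : Set W).Finite ∧
    R = (c * ·) '' (Subgroup.closure {cs.simple s, cs.simple t} : Set W)

/-- `∂²α`: the spherical rank-2 residues stabilized by the reflection `r = r_α`. -/
def res2 (cs : CoxeterSystem M W) (r : W) : Set (Set W) :=
  {R | IsSphRank2Residue cs R ∧ (r * ·) '' R = R}


namespace CoxAux

open Classical in
/-- the generator action on `W × ZMod 2` -/
noncomputable def actFun (cs : CoxeterSystem M W) (i : B) (p : W × ZMod 2) : W × ZMod 2 :=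
  (cs.simple i * p.1 * cs.simple i, p.2 + if p.1 = cs.simple i then 1 else 0)

theorem actFun_invol (cs : CoxeterSystem M W) (i : B) (p : W × ZMod 2) :
    actFun cs i (actFun cs i p) = p := by
  obtain ⟨r, e⟩ := p
  have h2 : (1 : ZMod 2) + 1 = 0 := by decide
  have key : cs.simple i * r * cs.simple i = cs.simple i ↔ r = cs.simple i := by
    constructor
    · intro h
      have := congrArg (fun x => cs.simple i * x * cs.simple i) h
      simpa [mul_assoc] using this
    · rintro rfl; simp
  by_cases h : r = cs.simple i
  · subst h; simp [actFun, add_assoc, h2]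
  · have h' := mt key.1 h
    simp [actFun, h, h']
    simp [mul_assoc]

noncomputable def actPerm (cs : CoxeterSystem M W) (i : B) : Equiv.Perm (W × ZMod 2) where
  toFun := actFun cs i
  invFun := actFun cs i
  left_inv := actFun_invol cs i
  right_inv := actFun_invol cs i

theorem xinv (cs : CoxeterSystem M W) (i j : B) (k : ℕ) :
    cs.simple j * (cs.simple i * cs.simple j) ^ k * cs.simple j
      = ((cs.simple i * cs.simple j) ^ k)⁻¹ := by
  have h := conj_pow (i := k) (a := cs.simple j) (b := cs.simple i * cs.simple j)
  rw [cs.inv_simple] at h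
  rw [← h, ← inv_pow]
  simp [mul_assoc]

open Classical in
theorem act_pow (cs : CoxeterSystem M W) (i j : B) (k : ℕ) (r : W) (e : ZMod 2) :
    ((actPerm cs i * actPerm cs j) ^ k) (r, e) =
      ((cs.simple i * cs.simple j) ^ k * r * ((cs.simple i * cs.simple j) ^ k)⁻¹,
       e + ∑ n ∈ Finset.range (2 * k),
        if r = cs.simple j * (cs.simple i * cs.simple j) ^ n then 1 else 0) := by
  induction k with
  | zero => simp
  | succ k ih =>
    rw [pow_succ', Equiv.Perm.mul_apply, ih, show 2 * (k + 1) = 2 * k + 1 + 1 by ring,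
      Finset.sum_range_succ, Finset.sum_range_succ, Equiv.Perm.mul_apply]
    set x := cs.simple i * cs.simple j with hx
    have hxk := xinv cs i j k
    rw [← hx] at hxk
    have hxs : x * cs.simple j = cs.simple i := by simp [hx]
    have e1 : x ^ k * r * (x ^ k)⁻¹ = cs.simple j ↔ r = cs.simple j * x ^ (2 * k) := by
      rw [mul_inv_eq_iff_eq_mul, ← eq_inv_mul_iff_mul_eq, ← hxk]
      simp [mul_assoc, two_mul, pow_add]
    have e2 : cs.simple j * (x ^ k * r * (x ^ k)⁻¹) * cs.simple j = cs.simple i ↔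
        r = cs.simple j * x ^ (2 * k + 1) := by
      have : cs.simple j * (x ^ k * r * (x ^ k)⁻¹) * cs.simple j = cs.simple i ↔
          x ^ k * r * (x ^ k)⁻¹ = cs.simple j * x := by
        constructor
        · intro h
          have := congrArg (fun y => cs.simple j * y * cs.simple j) h
          simpa [mul_assoc, hx] using this
        · intro h; rw [h]; simp [hx]
      rw [this, mul_inv_eq_iff_eq_mul, ← eq_inv_mul_iff_mul_eq, ← hxk]
      rw [show 2 * k + 1 = k + (1 + k) by ring, pow_add, pow_add, pow_one]
      simp [mul_assoc]
    simp only [actPerm, Equiv.coe_fn_mk, actFun, e1, e2, Prod.mk.injEq]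
    refine ⟨?_, by ring⟩
    rw [pow_succ', mul_inv_rev]
    simp [hx, mul_assoc]

theorem liftable (cs : CoxeterSystem M W) : M.IsLiftable (actPerm cs) := by
  classical
  intro i j
  ext1 ⟨r, e⟩
  rw [act_pow, cs.simple_mul_simple_pow, two_mul, Finset.sum_range_add]
  simp only [pow_add, cs.simple_mul_simple_pow, one_mul]
  rw [CharTwo.add_self_eq_zero]
  simp

noncomputable def act (cs : CoxeterSystem M W) : W →* Equiv.Perm (W × ZMod 2) :=
  cs.lift ⟨actPerm cs, liftable cs⟩

theorem act_simple (cs : CoxeterSystem M W) (i : B) : act cs (cs.simple i) = actPerm cs i :=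
  cs.lift_apply_simple _ i

theorem act_fst (cs : CoxeterSystem M W) (w : W) (p : W × ZMod 2) :
    (act cs w p).1 = w * p.1 * w⁻¹ ∧ ∀ e, (act cs w (p.1, p.2 + e)).2 = (act cs w p).2 + e := by
  induction w using cs.simple_induction_left generalizing p with
  | one => simp
  | mul_simple_left w i ih =>
    simp only [map_mul, act_simple, Equiv.Perm.mul_apply]
    have h1 := fun e => (ih (p.1, p.2 + e)).1
    have h2 := (ih p).2
    have h3 := (ih p).1
    simp only [] at h1
    constructor
    · simp [actPerm, actFun, h3, mul_assoc]
    · intro e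
      simp only [actPerm, Equiv.coe_fn_mk, actFun, h2]
      rw [h1, h3]
      ring

/-- Abstract half-space with reflection `r`. -/
structure Half (cs : CoxeterSystem M W) (α : Set W) (r : W) : Prop where
  invol : r * r = 1
  swap : ∀ c, r * c ∈ α ↔ c ∉ α
  cross : ∀ c t, c ∈ α → c * cs.simple t ∉ α → r * c = c * cs.simple t

variable {cs : CoxeterSystem M W} {α : Set W} {r : W}

theorem Half.compl (h : Half cs α r) : Half cs αᶜ r where
  invol := h.invol
  swap c := by simpa using (not_congr (h.swap c))
  cross c t hc hct := by
    have hc' : c ∉ α := hc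
    have hct' : c * cs.simple t ∈ α := by simpa using hct
    have := h.cross (c * cs.simple t) t hct' (by simpa using hc')
    have h2 := congrArg (fun y => y * cs.simple t) this
    simpa [mul_assoc] using h2

theorem Half.translate (h : Half cs α r) (u : W) : Half cs {w | u * w ∈ α} (u⁻¹ * r * u) where
  invol := by
    have := h.invol
    calc u⁻¹ * r * u * (u⁻¹ * r * u) = u⁻¹ * (r * r) * u := by group
      _ = 1 := by rw [this]; group
  swap c := by
    have := h.swap (u * c)
    simpa [mul_assoc] using this
  cross c t hc hct := by
    have := h.cross (u * c) t hc (by simpa [mul_assoc] using hct)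
    calc u⁻¹ * r * u * c = u⁻¹ * (r * (u * c)) := by group
      _ = _ := by rw [this]; group

theorem Half.gal (h : Half cs α r) (ω : List B) (c : W) (hc : c ∈ α)
    (hc' : c * cs.wordProd ω ∉ α) :
    ∃ ω₁ t ω₂, ω = ω₁ ++ t :: ω₂ ∧ c * cs.wordProd ω₁ ∈ α ∧
      c * cs.wordProd ω₁ * cs.simple t ∉ α ∧
      r * (c * cs.wordProd ω₁) = c * cs.wordProd ω₁ * cs.simple t := by
  induction ω generalizing c with
  | nil => simp at hc'; contradiction
  | cons i ω ih =>
    by_cases hi : c * cs.simple i ∈ α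
    · rw [cs.wordProd_cons, ← mul_assoc] at hc'
      obtain ⟨ω₁, t, ω₂, rfl, h1, h2, h3⟩ := ih _ hi hc'
      refine ⟨i :: ω₁, t, ω₂, rfl, ?_⟩
      rw [cs.wordProd_cons, ← mul_assoc]
      exact ⟨h1, h2, h3⟩
    · exact ⟨[], i, ω, rfl, by simpa using hc, by simpa using hi, by simpa using h.cross c i hc hi⟩

theorem Half.length_lt (h : Half cs α r) (h1 : (1 : W) ∈ α) {x : W} (hx : x ∈ α) :
    cs.length x < cs.length (r * x) := by
  obtain ⟨ω, hω, hω'⟩ := cs.exists_isReduced (r * x)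
  have hn : 1 * cs.wordProd ω ∉ α := by
    rw [one_mul, ← hω', h.swap]; simpa using hx
  obtain ⟨ω₁, t, ω₂, rfl, h2, h3, h4⟩ := h.gal ω 1 h1 hn
  simp only [one_mul] at h4
  have hx' : x = cs.wordProd (ω₁ ++ ω₂) := by
    have : x = r * (r * x) := by rw [← mul_assoc, h.invol, one_mul]
    rw [this, hω', cs.wordProd_append, cs.wordProd_cons, ← mul_assoc, h4, cs.wordProd_append]
    simp [mul_assoc]
  have := cs.length_wordProd_le (ω₁ ++ ω₂)
  rw [← hx'] at this
  rw [hω', hω.eq]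
  simp at this ⊢
  omega

theorem half_simple (cs : CoxeterSystem M W) (s : B) : Half cs (simpleRoot cs s) (cs.simple s) := by
  classical
  set A : Set W := {w | (act cs w⁻¹ (cs.simple s, 0)).2 = 0} with hA
  have hz : ∀ e : ZMod 2, e + 1 = 0 ↔ ¬ e = 0 := by decide
  have hh : Half cs A (cs.simple s) := by
    refine ⟨by simp, ?_, ?_⟩
    · intro c
      have := (act_fst cs c⁻¹ (cs.simple s, 0)).2 1
      simp only [hA, Set.mem_ofPred_eq, mul_inv_rev, map_mul, Equiv.Perm.mul_apply, cs.inv_simple,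
        act_simple]
      have e1 : actPerm cs s (cs.simple s, 0) = (cs.simple s, 0 + 1) := by
        simp [actPerm, actFun]
      rw [e1, this, hz]
    · intro c t hc hct
      simp only [hA, Set.mem_ofPred_eq, mul_inv_rev, map_mul, Equiv.Perm.mul_apply, cs.inv_simple,
        act_simple] at hc hct
      have h1 := (act_fst cs c⁻¹ (cs.simple s, 0)).1
      simp only [actPerm, Equiv.coe_fn_mk, actFun, h1, hc] at hct
      by_contra hne
      apply hct
      rw [if_neg]
      · simp
      · intro h
        apply hne
        rw [← h]; group
  have h1 : (1 : W) ∈ A := by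
    change (act cs 1⁻¹ (cs.simple s, 0)).2 = 0
    rw [inv_one, map_one]; rfl
  have : simpleRoot cs s = A := by
    ext w
    constructor
    · intro hw
      by_contra hn
      have := hh.length_lt h1 ((hh.swap w).2 hn)
      simp at this
      have hw' : cs.length w < cs.length (cs.simple s * w) := hw
      omega
    · intro hw
      exact hh.length_lt h1 hw
  rw [this]; exact hh

theorem half_of_root {α : Set W} {r : W} (h : IsRootPair cs α r) : Half cs α r := by
  obtain ⟨v, s, rfl, rfl⟩ := h
  have := (half_simple cs s).translate v⁻¹
  convert this using 1
  · ext w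
    simp
  · simp

abbrev WJ (cs : CoxeterSystem M W) (a b : B) : Subgroup W :=
  Subgroup.closure {cs.simple a, cs.simple b}

theorem word_of_mem {a b : B} {x : W} (hx : x ∈ WJ cs a b) :
    ∃ ω : List B, (∀ i ∈ ω, i = a ∨ i = b) ∧ cs.wordProd ω = x := by
  induction hx using Subgroup.closure_induction with
  | mem x hx =>
    rcases hx with rfl | rfl
    · exact ⟨[a], by simp, by simp⟩
    · exact ⟨[b], by simp, by simp⟩
  | one => exact ⟨[], by simp, by simp⟩
  | mul x y _ _ hx hy =>
    obtain ⟨ω, h, rfl⟩ := hx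
    obtain ⟨ω', h', rfl⟩ := hy
    refine ⟨ω ++ ω', ?_, cs.wordProd_append _ _⟩
    intro i hi
    rcases List.mem_append.1 hi with hi | hi
    · exact h i hi
    · exact h' i hi
  | inv x _ hx =>
    obtain ⟨ω, h, rfl⟩ := hx
    exact ⟨ω.reverse, by simpa using h, by simp⟩

theorem simple_mem {a b j : B} (hj : j = a ∨ j = b) : cs.simple j ∈ WJ cs a b := by
  apply Subgroup.subset_closure
  rcases hj with rfl | rfl
  · exact Or.inl rfl
  · exact Or.inr rfl

theorem wordProd_mem {a b : B} {ω : List B} (h : ∀ i ∈ ω, i = a ∨ i = b) :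
    cs.wordProd ω ∈ WJ cs a b := by
  induction ω with
  | nil => rw [cs.wordProd_nil]; exact one_mem _
  | cons i ω ih =>
    rw [cs.wordProd_cons]
    exact mul_mem (simple_mem (h i (by simp))) (ih fun k hk => h k (by simp [hk]))

/-- crossing inside a residue -/
theorem Half.crossJ (h : Half cs α r) {a b : B} {c x : W} (hx : x ∈ WJ cs a b)
    (hc : c ∈ α) (hcx : c * x ∉ α) :
    ∃ y ∈ WJ cs a b, ∃ j, (j = a ∨ j = b) ∧ c * y ∈ α ∧ c * y * cs.simple j ∉ α ∧
      r = c * y * cs.simple j * (c * y)⁻¹ := by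
  obtain ⟨ω, hω, rfl⟩ := word_of_mem hx
  obtain ⟨ω₁, t, ω₂, rfl, h2, h3, h4⟩ := h.gal ω c hc hcx
  refine ⟨cs.wordProd ω₁, wordProd_mem fun i hi => hω i (by simp [hi]), t, hω t (by simp), h2, h3, ?_⟩
  rw [← h4]; group

theorem descentJ {a b : B} {x : W} (hx : x ∈ WJ cs a b) (h1 : x ≠ 1) :
    ∃ j, (j = a ∨ j = b) ∧ cs.length (x * cs.simple j) < cs.length x := by
  classical
  have hex : ∃ n, ∃ ω : List B, (∀ i ∈ ω, i = a ∨ i = b) ∧ cs.wordProd ω = x ∧ ω.length = n := by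
    obtain ⟨ω, h, h'⟩ := word_of_mem hx
    exact ⟨_, ω, h, h', rfl⟩
  obtain ⟨ω, hω, hωx, hn⟩ := Nat.find_spec hex
  have hmin := fun m => Nat.find_min' hex (m := m)
  rw [← hn] at hmin
  rcases List.eq_nil_or_concat ω with rfl | ⟨ω', j, rfl⟩
  · simp at hωx; exact absurd hωx.symm h1
  refine ⟨j, hω j (by simp), ?_⟩
  by_contra hcon
  have hne := cs.length_mul_simple_ne x j
  have hH := half_simple cs j
  have hxH : x⁻¹ ∈ simpleRoot cs j := by
    change cs.length x⁻¹ < cs.length (cs.simple j * x⁻¹)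
    rw [← cs.length_inv (cs.simple j * x⁻¹), cs.length_inv x]
    simp; omega
  have hxi : x⁻¹ = cs.simple j * cs.wordProd ω'.reverse := by
    rw [← hωx, List.concat_eq_append, cs.wordProd_append]; simp
  have hj : cs.simple j ∈ (simpleRoot cs j)ᶜ := by
    change ¬ cs.length (cs.simple j) < cs.length (cs.simple j * cs.simple j)
    simp
  obtain ⟨ω₁, t, ω₂, he, h2, h3, h4⟩ := hH.compl.gal ω'.reverse (cs.simple j) hj
    (by rw [← hxi]; simpa using hxH)
  have hx2 : x⁻¹ = cs.wordProd (ω₁ ++ ω₂) := by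
    rw [hxi, he, cs.wordProd_append, cs.wordProd_append, cs.wordProd_cons, ← mul_assoc,
      ← mul_assoc, ← h4]
    simp
  have hlen := congrArg List.length he
  have hmem : ∀ i ∈ ω₁ ++ ω₂, i = a ∨ i = b := by
    intro i hi
    apply hω i
    have : i ∈ ω'.reverse := by
      rw [he]; simp at hi ⊢; tauto
    simp at this ⊢
    exact Or.inl this
  have := hmin (ω₁ ++ ω₂).reverse.length ⟨_, by simpa [or_comm] using hmem, by
    rw [cs.wordProd_reverse, ← hx2, inv_inv], rfl⟩
  simp at this hlen
  omega

theorem minimal_up {a b j : B} {w x : W} (hmin : ∀ y ∈ WJ cs a b, cs.length w ≤ cs.length (w * y))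
    (hx : x ∈ WJ cs a b) (hj : j = a ∨ j = b) (hl : cs.length x < cs.length (x * cs.simple j)) :
    cs.length (w * x) < cs.length (w * x * cs.simple j) := by
  have hH := (half_simple cs j).translate (x⁻¹ * w⁻¹)
  set ρ := (x⁻¹ * w⁻¹)⁻¹ * cs.simple j * (x⁻¹ * w⁻¹) with hρ
  set β := {y | x⁻¹ * w⁻¹ * y ∈ simpleRoot cs j} with hβ
  have hw : w ∈ β := by
    change x⁻¹ * w⁻¹ * w ∈ simpleRoot cs j
    rw [inv_mul_cancel_right]
    change cs.length x⁻¹ < cs.length (cs.simple j * x⁻¹)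
    rw [← cs.length_inv (cs.simple j * x⁻¹), cs.length_inv x]
    simpa using hl
  have hwx : w * x ∈ β := by
    change x⁻¹ * w⁻¹ * (w * x) ∈ simpleRoot cs j
    rw [show x⁻¹ * w⁻¹ * (w * x) = 1 by group]
    change cs.length 1 < cs.length (cs.simple j * 1)
    simp
  have h1 : (1 : W) ∈ β := by
    by_contra hn
    have hρw : ρ * w ∈ βᶜ := by
      intro h
      exact (hH.swap w).1 h hw
    have := hH.compl.length_lt hn hρw
    rw [← mul_assoc, hH.invol, one_mul] at this
    have h2 : ρ * w = w * (x * cs.simple j * x⁻¹) := by rw [hρ]; group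
    rw [h2] at this
    have h3 := hmin _ (mul_mem (mul_mem hx (simple_mem hj)) (inv_mem hx))
    omega
  have := hH.length_lt h1 hwx
  rwa [show ρ * (w * x) = w * x * cs.simple j by rw [hρ]; group] at this

/-- alternating product ending in `a` -/
def alt (a b : W) : ℕ → W
  | 0 => 1
  | n + 1 => alt b a n * a

theorem alt_eq {a b : B} (n : ℕ) {x : W} (hx : x ∈ WJ cs a b) (hn : cs.length x = n)
    (hd : x ≠ 1 → cs.length (x * cs.simple a) < cs.length x) :
    x = alt (cs.simple a) (cs.simple b) n := by
  induction n generalizing a b x with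
  | zero => simpa [alt] using hn
  | succ n ih =>
    have hx1 : x ≠ 1 := by rintro rfl; simp at hn
    have h := hd hx1
    have hl : cs.length (x * cs.simple a) = n := by
      rcases cs.length_mul_simple x a with h' | h' <;> omega
    have hm : x * cs.simple a ∈ WJ cs a b := mul_mem hx (simple_mem (Or.inl rfl))
    have := ih (a := b) (b := a) (x := x * cs.simple a) (by rw [WJ, Set.pair_comm]; exact hm) hl (by
      intro hne
      obtain ⟨j, hj, hj'⟩ := descentJ hm hne
      rcases hj with rfl | rfl
      · simp at hj'; omega
      · exact hj')
    rw [alt, ← this]; simp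

theorem alt_formula {a b : W} (ha : a * a = 1) (hb : b * b = 1) (n : ℕ) :
    alt a b (2 * n) = (b * a) ^ n ∧ alt a b (2 * n + 1) = (a * b) ^ n * a := by
  induction n generalizing a b with
  | zero => simp [alt]
  | succ n ih =>
    have h1 : alt a b (2 * (n + 1)) = (b * a) ^ (n + 1) := by
      rw [show 2 * (n + 1) = (2 * n + 1) + 1 by ring, alt, (ih hb ha).2, pow_succ, mul_assoc]
    have h2 : alt b a (2 * (n + 1)) = (a * b) ^ (n + 1) := by
      rw [show 2 * (n + 1) = (2 * n + 1) + 1 by ring, alt, (ih ha hb).2, pow_succ, mul_assoc]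
    exact ⟨h1, by rw [alt, h2]⟩

theorem pow_of_alt {a b : W} (ha : a * a = 1) (hb : b * b = 1) (n : ℕ)
    (h : alt a b n = alt b a n) : (a * b) ^ n = 1 := by
  have hinv : b * a = (a * b)⁻¹ := by
    rw [mul_inv_rev, ← eq_inv_of_mul_eq_one_left ha, ← eq_inv_of_mul_eq_one_left hb]
  rcases Nat.even_or_odd' n with ⟨k, rfl | rfl⟩
  · rw [(alt_formula ha hb k).1, (alt_formula hb ha k).1, hinv, inv_pow, inv_eq_iff_mul_eq_one] at h
    rw [two_mul, pow_add, h]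
  · rw [(alt_formula ha hb k).2, (alt_formula hb ha k).2, hinv, inv_pow] at h
    have h2 : (a * b) ^ k * ((a * b) ^ k * a) = b := by rw [h]; group
    rw [pow_succ, two_mul, pow_add]
    calc _ = (a * b) ^ k * ((a * b) ^ k * a) * b := by group
      _ = 1 := by rw [h2, hb]

theorem finite_dihedral {a b : W} (ha : a * a = 1) (hb : b * b = 1) {n : ℕ} (hn : 0 < n)
    (h : (a * b) ^ n = 1) : (Subgroup.closure {a, b} : Set W).Finite := by
  have hf : (Subgroup.zpowers (a * b) : Set W).Finite := by
    have : IsOfFinOrder (a * b) := isOfFinOrder_iff_pow_eq_one.2 ⟨n, hn, h⟩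
    exact finite_zpowers.2 this
  refine (hf.union (hf.image (· * a))).subset ?_
  intro x hx
  have hb' : b = (a * b)⁻¹ * a := by
    rw [mul_inv_rev, mul_assoc, inv_mul_cancel, mul_one]; exact eq_inv_of_mul_eq_one_left hb
  have hz : a * b ∈ Subgroup.zpowers (a * b) := Subgroup.mem_zpowers _
  have hain : a⁻¹ = a := (eq_inv_of_mul_eq_one_left ha).symm
  have hbin : b⁻¹ = b := (eq_inv_of_mul_eq_one_left hb).symm
  have step : ∀ x, x ∈ (Subgroup.zpowers (a * b) : Set W) ∪
      (· * a) '' (Subgroup.zpowers (a * b) : Set W) → ∀ y ∈ ({a, b} : Set W),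
      x * y ∈ (Subgroup.zpowers (a * b) : Set W) ∪
      (· * a) '' (Subgroup.zpowers (a * b) : Set W) := by
    rintro x (hx | ⟨z, hz', rfl⟩) y (rfl | rfl)
    · exact Or.inr ⟨x, hx, rfl⟩
    · refine Or.inr ⟨x * (a * y)⁻¹, mul_mem hx (inv_mem hz), ?_⟩
      change x * (a * y)⁻¹ * a = x * y
      rw [mul_assoc, ← hb']
    · left
      change z * y * y ∈ _
      rw [mul_assoc, ha, mul_one]; exact hz'
    · left
      change z * a * y ∈ _
      rw [mul_assoc]; exact mul_mem hz' hz
  induction hx using Subgroup.closure_induction_right with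
  | one => exact Or.inl (one_mem _)
  | mul_right x hx y hy ih => exact step x ih y hy
  | mul_inv_cancel x hx y hy ih =>
    have : y⁻¹ = y := by rcases hy with rfl | rfl <;> assumption
    rw [this]; exact step x ih y hy

theorem exists_min (cs : CoxeterSystem M W) (a b : B) (w : W) : ∃ x ∈ WJ cs a b,
    ∀ y ∈ WJ cs a b, cs.length (w * x) ≤ cs.length (w * x * y) := by
  obtain ⟨x, hx, hm⟩ := WellFounded.has_min
    (InvImage.wf (fun x => cs.length (w * x)) Nat.lt_wfRel.wf) (WJ cs a b : Set W) ⟨1, one_mem _⟩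
  refine ⟨x, hx, fun y hy => ?_⟩
  have := hm (x * y) (mul_mem hx hy)
  rw [mul_assoc]
  exact not_lt.1 this

theorem finite_of_descents {a b : B} {z : W}
    (ha : cs.length (z * cs.simple a) < cs.length z)
    (hb : cs.length (z * cs.simple b) < cs.length z) : (WJ cs a b : Set W).Finite := by
  obtain ⟨x, hx, hm⟩ := exists_min cs a b z
  have hd : ∀ j, (j = a ∨ j = b) → cs.length (z * cs.simple j) < cs.length z →
      cs.length (x⁻¹ * cs.simple j) < cs.length x⁻¹ := by
    intro j hj hlt
    by_contra hcon
    have hne := cs.length_mul_simple_ne x⁻¹ j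
    have := minimal_up hm (inv_mem hx) hj (by omega)
    rw [mul_inv_cancel_right] at this
    omega
  have hxa := hd a (Or.inl rfl) ha
  have hxb := hd b (Or.inr rfl) hb
  have e1 := alt_eq (cs := cs) (a := a) (b := b) _ (inv_mem hx) rfl (fun _ => hxa)
  have e2 := alt_eq (cs := cs) (a := b) (b := a) _
    (by rw [WJ, Set.pair_comm]; exact inv_mem hx) rfl (fun _ => hxb)
  exact finite_dihedral (by simp) (by simp) (n := cs.length x⁻¹) (by omega)
    (pow_of_alt (by simp) (by simp) _ (e1.symm.trans e2))

theorem step {s t : B} {w : W} (hw : w ≠ 1) (hst : cs.simple s * w = w * cs.simple t)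
    (hl : cs.length w < cs.length (w * cs.simple t)) :
    ∃ t', t' ≠ t ∧ (WJ cs t t' : Set W).Finite ∧ ∃ x ∈ WJ cs t t', ∃ j,
      cs.simple s * (w * x) = w * x * cs.simple j ∧ cs.length (w * x) < cs.length w := by
  obtain ⟨t', ht'⟩ := cs.exists_rightDescent_of_ne_one hw
  have ht' : cs.length (w * cs.simple t') < cs.length w := ht'
  have hne : t' ≠ t := by rintro rfl; omega
  refine ⟨t', hne, ?_, ?_⟩
  · apply finite_of_descents (z := w * cs.simple t)
    · simpa using hl
    · rw [← hst, mul_assoc]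
      have := cs.length_mul_le (cs.simple s) (w * cs.simple t')
      rw [cs.length_simple] at this
      rw [← hst] at hl
      omega
  · obtain ⟨x, hx, hm⟩ := exists_min cs t t' w
    have hlx : cs.length (w * x) < cs.length w := by
      have := hm (x⁻¹ * cs.simple t') (mul_mem (inv_mem hx) (simple_mem (Or.inr rfl)))
      rw [← mul_assoc, mul_inv_cancel_right] at this
      omega
    set w' := w * x with hw'
    set ρ := x⁻¹ * cs.simple t * x with hρ
    have hρm : ρ ∈ WJ cs t t' := mul_mem (mul_mem (inv_mem hx) (simple_mem (Or.inl rfl))) hx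
    have hsw : cs.simple s * w' = w' * ρ := by
      rw [hw', hρ, ← mul_assoc, hst]; group
    have hρ1 : ρ ≠ 1 := by
      intro h
      rw [h] at hsw
      have := cs.length_simple_mul_ne w' s
      rw [hsw, mul_one] at this
      exact this rfl
    have hup : cs.length w' < cs.length (cs.simple s * w') := by
      have h1 := hm ρ hρm
      have h2 := cs.length_simple_mul_ne w' s
      rw [← hsw] at h1
      omega
    obtain ⟨j, hj, hjl⟩ := descentJ hρm hρ1
    have h3 := minimal_up hm (mul_mem hρm (simple_mem hj)) hj (by simpa using hjl)
    rw [← mul_assoc, ← hsw] at h3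
    simp only [CoxeterSystem.simple_mul_simple_cancel_right] at h3
    refine ⟨x, hx, j, ?_, hlx⟩
    apply (half_simple cs s).cross w' j hup
    change ¬ cs.length (w' * cs.simple j) < cs.length (cs.simple s * (w' * cs.simple j))
    have h4 := hm (cs.simple j) (simple_mem hj)
    have h5 := cs.length_mul_simple_ne w' j
    have h6 := cs.length_simple_mul w' s
    rw [← mul_assoc]
    omega

/-- residues -/
def res (cs : CoxeterSystem M W) (v : W) (a b : B) : Set W := (v * ·) '' (WJ cs a b : Set W)

theorem mem_res {v c : W} {a b : B} : c ∈ res cs v a b ↔ v⁻¹ * c ∈ WJ cs a b := by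
  simp [res]

theorem wall_conn {β : Set W} {rβ : W} (hβ : Half cs β rβ) (hne : r ≠ rβ) (n : ℕ) :
    ∀ (u v : W) (s t : B), r * u = u * cs.simple s → r * v = v * cs.simple t → u ∈ β → v ∉ β →
      cs.length (u⁻¹ * v) = n →
      ∃ (v : W) (a b : B), a ≠ b ∧ (WJ cs a b : Set W).Finite ∧ v⁻¹ * r * v ∈ WJ cs a b ∧
        ∃ c ∈ res cs v a b, ∃ d ∈ res cs v a b, c ∈ β ∧ d ∉ β := by
  induction n using Nat.strong_induction_on with
  | _ n ih =>
  have main : ∀ (u v : W) (s t : B), r * u = u * cs.simple s → r * v = v * cs.simple t → u ∈ β →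
      v ∉ β → cs.length (u⁻¹ * v) ≤ n → cs.length (u⁻¹ * v) < cs.length (u⁻¹ * v * cs.simple t) →
      ∃ (v : W) (a b : B), a ≠ b ∧ (WJ cs a b : Set W).Finite ∧ v⁻¹ * r * v ∈ WJ cs a b ∧
        ∃ c ∈ res cs v a b, ∃ d ∈ res cs v a b, c ∈ β ∧ d ∉ β := by
    intro u v s t hu hv hub hvb hn hl
    have hw : u⁻¹ * v ≠ 1 := by
      intro h
      rw [inv_mul_eq_one] at h
      subst h; contradiction
    have hst : cs.simple s * (u⁻¹ * v) = u⁻¹ * v * cs.simple t := by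
      rw [mul_assoc u⁻¹, ← hv]
      have : cs.simple s = u⁻¹ * r * u := by rw [mul_assoc, hu]; group
      rw [this]; group
    obtain ⟨t', htt, hfin, x, hx, j, hj, hjl⟩ := step hw hst hl
    by_cases hvx : v * x ∈ β
    · refine ⟨v, t, t', htt.symm, hfin, ?_, v * x, ?_, v, ?_, hvx, hvb⟩
      · rw [mul_assoc, hv, inv_mul_cancel_left]; exact simple_mem (Or.inl rfl)
      · rw [mem_res]; simpa using hx
      · rw [mem_res]; simp
    · refine ih (cs.length (u⁻¹ * (v * x))) ?_ u (v * x) s j hu ?_ hub hvx rfl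
      · rw [← mul_assoc]; omega
      · have : r = u * cs.simple s * u⁻¹ := by rw [← hu]; group
        rw [this]
        calc _ = u * (cs.simple s * (u⁻¹ * v * x)) := by group
          _ = _ := by rw [hj]; group
  intro u v s t hu hv hub hvb hn
  by_cases hl : cs.length (u⁻¹ * v) < cs.length (u⁻¹ * v * cs.simple t)
  · exact main u v s t hu hv hub hvb hn.le hl
  · have hne' := cs.length_mul_simple_ne (u⁻¹ * v) t
    refine main u (v * cs.simple t) s t hu ?_ hub ?_ ?_ ?_
    · rw [← mul_assoc, hv]
    · intro h
      have := hβ.compl.cross v t hvb (by simpa using h)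
      apply hne
      exact mul_right_cancel (hv.trans this.symm)
    · rw [← mul_assoc]; omega
    · simp [← mul_assoc]; omega

theorem stab_of_cross {β : Set W} {rβ : W} (hβ : Half cs β rβ) {v : W} {a b : B} {c d : W}
    (hc : c ∈ res cs v a b) (hd : d ∈ res cs v a b) (hcb : c ∈ β) (hdb : d ∉ β) :
    v⁻¹ * rβ * v ∈ WJ cs a b ∧ ∃ e ∈ res cs v a b, ∃ j, (j = a ∨ j = b) ∧ e ∈ β ∧
      e * cs.simple j ∉ β ∧ rβ = e * cs.simple j * e⁻¹ := by
  rw [mem_res] at hc hd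
  have hx : c⁻¹ * d ∈ WJ cs a b := by
    have := mul_mem (inv_mem hc) hd
    rwa [show (v⁻¹ * c)⁻¹ * (v⁻¹ * d) = c⁻¹ * d by group] at this
  obtain ⟨y, hy, j, hj, h1, h2, h3⟩ := hβ.crossJ hx hcb (by simpa using hdb)
  have hcy : v⁻¹ * (c * y) ∈ WJ cs a b := by rw [← mul_assoc]; exact mul_mem hc hy
  refine ⟨?_, c * y, mem_res.2 hcy, j, hj, h1, h2, h3⟩
  rw [h3]
  have := mul_mem (mul_mem hcy (simple_mem hj)) (inv_mem hcy)
  convert this using 1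
  group

theorem res_mul {v c g : W} {a b : B} (hg : v⁻¹ * g * v ∈ WJ cs a b) :
    g * c ∈ res cs v a b ↔ c ∈ res cs v a b := by
  rw [mem_res, mem_res, show v⁻¹ * (g * c) = (v⁻¹ * g * v) * (v⁻¹ * c) by group]
  exact Subgroup.mul_mem_cancel_left _ hg

theorem res_image {v g : W} {a b : B} (hg : v⁻¹ * g * v ∈ WJ cs a b) :
    (g * ·) '' res cs v a b = res cs v a b := by
  ext c
  constructor
  · rintro ⟨d, hd, rfl⟩; exact (res_mul hg).2 hd
  · intro hc
    refine ⟨g⁻¹ * c, ?_, by simp⟩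
    rw [← res_mul hg]; simpa using hc

theorem finOrder_of_stab {v g : W} {a b : B} (hf : (WJ cs a b : Set W).Finite)
    (hg : v⁻¹ * g * v ∈ WJ cs a b) : IsOfFinOrder g := by
  have : Finite (WJ cs a b) := hf
  have h1 : IsOfFinOrder (⟨_, hg⟩ : WJ cs a b) := isOfFinOrder_of_finite _
  have h2 : IsOfFinOrder (v⁻¹ * g * v) := Submonoid.isOfFinOrder_coe.2 h1
  rw [isOfFinOrder_iff_pow_eq_one] at h2 ⊢
  obtain ⟨n, hn, h⟩ := h2
  refine ⟨n, hn, ?_⟩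
  have h3 := conj_pow (i := n) (a := v⁻¹) (b := g)
  rw [inv_inv, h] at h3
  have : g ^ n = v * (v⁻¹ * g ^ n * v) * v⁻¹ := by group
  rw [this, ← h3]; group

theorem eq_of_refl_eq {β : Set W} (hα : Half cs α r) (hβ : Half cs β r) : α = β ∨ α = βᶜ := by
  have hside : ∀ {γ : Set W}, Half cs γ r → ∀ c t, (c * cs.simple t ∈ γ ↔ c ∈ γ) ∨
      r * c = c * cs.simple t := by
    intro γ hγ c t
    by_cases h1 : c ∈ γ <;> by_cases h2 : c * cs.simple t ∈ γ
    · left; tauto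
    · right; exact hγ.cross c t h1 h2
    · right; exact hγ.compl.cross c t h1 (by simpa using h2)
    · left; tauto
  have key : ∀ w, (w ∈ α ↔ w ∈ β) ↔ ((1 : W) ∈ α ↔ (1 : W) ∈ β) := by
    intro w
    induction w using cs.simple_induction_right with
    | one => rfl
    | mul_simple_right w i ih =>
      rw [← ih]
      by_cases h : r * w = w * cs.simple i
      · rw [← h, hα.swap, hβ.swap]; tauto
      · have h1 := (hside hα w i).resolve_right h
        have h2 := (hside hβ w i).resolve_right h
        rw [h1, h2]
  by_cases h : ((1 : W) ∈ α ↔ (1 : W) ∈ β)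
  · left; ext w; exact (key w).2 h
  · right; ext w
    have := mt (key w).1 h
    simp only [Set.mem_compl_iff]
    tauto

/-- in a residue stabilised by both reflections the quadrant is nonempty -/
theorem quadrant {β : Set W} {rβ : W} (hα : Half cs α r) (hβ : Half cs β rβ) (hne : r ≠ rβ)
    {v : W} {a b : B} (hf : (WJ cs a b : Set W).Finite) (h1 : v⁻¹ * r * v ∈ WJ cs a b)
    (h2 : v⁻¹ * rβ * v ∈ WJ cs a b) : ∃ x ∈ res cs v a b, x ∈ α ∧ x ∈ β := by
  by_contra! hcon
  have hR : (res cs v a b).Finite := hf.image _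
  have hhalf : ∀ {γ : Set W} {ρ : W}, Half cs γ ρ → v⁻¹ * ρ * v ∈ WJ cs a b →
      (res cs v a b ∩ γᶜ).ncard = (res cs v a b ∩ γ).ncard := by
    intro γ ρ hγ hρ
    rw [← Set.ncard_image_of_injective (res cs v a b ∩ γ) (mul_right_injective ρ)]
    congr 1
    ext c
    constructor
    · rintro ⟨hc, hc'⟩
      exact ⟨ρ * c, ⟨(res_mul hρ).2 hc, (hγ.swap c).2 hc'⟩, by
        change ρ * (ρ * c) = c
        rw [← mul_assoc, hγ.invol, one_mul]⟩
    · rintro ⟨d, ⟨hd, hd'⟩, rfl⟩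
      refine ⟨(res_mul hρ).2 hd, ?_⟩
      intro h
      exact (hγ.swap d).1 h hd'
  have hsum : ∀ γ : Set W, (res cs v a b ∩ γ).ncard + (res cs v a b ∩ γᶜ).ncard =
      (res cs v a b).ncard := by
    intro γ
    have := Set.ncard_inter_add_ncard_sdiff_eq_ncard (res cs v a b) γ hR
    rwa [Set.sdiff_eq] at this
  have hsub : res cs v a b ∩ α ⊆ res cs v a b ∩ βᶜ := fun x hx => ⟨hx.1, hcon x hx.1 hx.2⟩
  have heq : res cs v a b ∩ α = res cs v a b ∩ βᶜ := by
    apply Set.eq_of_subset_of_ncard_le hsub _ (hR.inter_of_left _)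
    have e1 := hhalf hα h1
    have e2 := hhalf hβ h2
    have e3 := hsum α
    have e4 := hsum β
    omega
  have hvR : v ∈ res cs v a b := by rw [mem_res]; simp
  have hex : ∃ c ∈ res cs v a b, ∃ d ∈ res cs v a b, c ∈ α ∧ d ∉ α := by
    by_cases hv : v ∈ α
    · exact ⟨v, hvR, r * v, (res_mul h1).2 hvR, hv, fun h => (hα.swap v).1 h hv⟩
    · exact ⟨r * v, (res_mul h1).2 hvR, v, hvR, (hα.swap v).2 hv, hv⟩
  obtain ⟨c, hc, d, hd, hcα, hdα⟩ := hex
  obtain ⟨-, e, he, j, hj, h3, h4, h5⟩ := stab_of_cross hα hc hd hcα hdα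
  have he2 : e * cs.simple j ∈ res cs v a b := by
    rw [mem_res] at he ⊢
    rw [← mul_assoc]; exact mul_mem he (simple_mem hj)
  have h6 : e ∈ βᶜ := (heq ▸ (⟨he, h3⟩ : e ∈ res cs v a b ∩ α) : e ∈ res cs v a b ∩ βᶜ).2
  have h7 : e * cs.simple j ∉ βᶜ := by
    intro h
    exact h4 ((heq ▸ (⟨he2, h⟩ : _ ∈ res cs v a b ∩ βᶜ) : _ ∈ res cs v a b ∩ α).2)
  have := hβ.compl.cross e j h6 h7
  apply hne
  rw [h5, ← this]; group

/-- finite order excludes strict nesting -/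
theorem no_nest {β : Set W} {rβ : W} (hα : Half cs α r) (hβ : Half cs β rβ)
    (hfin : IsOfFinOrder (r * rβ)) (hsub : β ⊆ α) : α = β := by
  have hinvl : ∀ c, r * (r * c) = c := fun c => by rw [← mul_assoc, hα.invol, one_mul]
  have hinvb : ∀ c, rβ * (rβ * c) = c := fun c => by rw [← mul_assoc, hβ.invol, one_mul]
  have hstep : ∀ c, c ∉ α → rβ * c ∈ β := fun c hc => (hβ.swap c).2 fun h => hc (hsub h)
  have hg : ∀ c, c ∉ α → (r * rβ) * c ∉ α := by
    intro c hc h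
    rw [mul_assoc] at h
    exact (hα.swap _).1 h (hsub (hstep c hc))
  have hgn : ∀ n c, c ∉ α → (r * rβ) ^ n * c ∉ α := by
    intro n
    induction n with
    | zero => intro c hc; simpa using hc
    | succ n ih => intro c hc; rw [pow_succ, mul_assoc]; exact ih _ (hg c hc)
  obtain ⟨n, hn, h⟩ := isOfFinOrder_iff_pow_eq_one.1 hfin
  obtain ⟨m, rfl⟩ : ∃ m, n = m + 1 := ⟨n - 1, by omega⟩
  refine Set.Subset.antisymm (fun x hx => ?_) hsub
  by_contra hxb
  have h1 : r * x ∉ α := fun h' => (hα.swap x).1 h' hx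
  have h2 := hgn m _ h1
  have h3 : (r * rβ) ^ m = rβ * r := by
    rw [pow_succ] at h
    rw [eq_inv_of_mul_eq_one_left h, mul_inv_rev, ← eq_inv_of_mul_eq_one_left hα.invol,
      ← eq_inv_of_mul_eq_one_left hβ.invol]
  rw [h3, mul_assoc, hinvl] at h2
  exact h2 (hsub ((hβ.swap x).2 hxb))

/-- if no wall chamber of `α` lies in `β`, then `β` is on one side -/
theorem one_side {β : Set W} {rβ : W} (hα : Half cs α r) (hβ : Half cs β rβ)
    (hno : ∀ u s, r * u = u * cs.simple s → u ∉ β) : β ⊆ α ∨ β ⊆ αᶜ := by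
  by_contra! hcon
  obtain ⟨h1, h2⟩ := hcon
  obtain ⟨d, hd, hd'⟩ := Set.not_subset.1 h1
  obtain ⟨c, hc, hc'⟩ := Set.not_subset.1 h2
  obtain ⟨ω, hω, hω'⟩ := cs.exists_isReduced (c⁻¹ * d)
  have hc'' : c ∈ α := by simpa using hc'
  obtain ⟨ω₁, t, ω₂, rfl, h3, h4, h5⟩ := hα.gal ω c hc'' (by rw [← hω']; simpa using hd')
  have he := hno _ t h5
  set e := c * cs.wordProd ω₁ with hedef
  have hre : rβ * e ∈ β := (hβ.swap e).2 he
  have hlt : ∀ u ∈ β, cs.length (u⁻¹ * (rβ * e)) < cs.length (u⁻¹ * e) := by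
    intro u hu
    have h6 := (hβ.translate u).length_lt (x := u⁻¹ * (rβ * e))
      (by change u * 1 ∈ β; simpa using hu)
      (by change u * (u⁻¹ * (rβ * e)) ∈ β; simpa using hre)
    have h7 : u⁻¹ * rβ * u * (u⁻¹ * (rβ * e)) = u⁻¹ * (rβ * rβ) * e := by group
    rw [h7, hβ.invol, mul_one] at h6
    exact h6
  have hl1 := hlt c hc
  have hl2 := hlt d hd
  have e1 : c⁻¹ * e = cs.wordProd ω₁ := by rw [hedef]; group
  have e2 : d⁻¹ * e = (cs.wordProd (t :: ω₂))⁻¹ := by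
    rw [cs.wordProd_append] at hω'
    have : d = c * (cs.wordProd ω₁ * cs.wordProd (t :: ω₂)) := by rw [← hω']; group
    rw [this, hedef]; group
  rw [e1] at hl1
  rw [e2, cs.length_inv] at hl2
  have h8 := cs.length_wordProd_le ω₁
  have h9 := cs.length_wordProd_le (t :: ω₂)
  have h10 := hω.eq
  rw [← hω'] at h10
  have h11 := cs.length_mul_le (c⁻¹ * (rβ * e)) (d⁻¹ * (rβ * e))⁻¹
  rw [cs.length_inv, show c⁻¹ * (rβ * e) * (d⁻¹ * (rβ * e))⁻¹ = c⁻¹ * d by group] at h11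
  rw [List.length_append] at h10
  omega

theorem exists_wall {β : Set W} {rβ : W} (hα : Half cs α r) (hβ : Half cs β rβ)
    (hne : α ≠ β) (hnopp : α ≠ βᶜ) (hfin : IsOfFinOrder (r * rβ)) :
    ∃ u s, r * u = u * cs.simple s ∧ u ∈ β := by
  by_contra! hno
  rcases one_side hα hβ hno with h | h
  · exact hne (no_nest hα hβ hfin h)
  · exact hnopp (by rw [← no_nest hα.compl hβ hfin h, compl_compl])

theorem main {β γ : Set W} {rβ rγ : W} (hα : Half cs α r) (hβ : Half cs β rβ) (hγ : Half cs γ rγ)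
    (hne : α ≠ β) (hnopp : α ≠ βᶜ) (hfin : IsOfFinOrder (r * rβ))
    (h1 : α ∩ β ⊆ γ) (h2 : αᶜ ∩ βᶜ ⊆ γᶜ) :
    ∃ (v : W) (a b : B), a ≠ b ∧ (WJ cs a b : Set W).Finite ∧ v⁻¹ * r * v ∈ WJ cs a b ∧
      v⁻¹ * rβ * v ∈ WJ cs a b ∧ v⁻¹ * rγ * v ∈ WJ cs a b := by
  have hr : r ≠ rβ := by
    rintro rfl
    exact (eq_of_refl_eq hα hβ).elim hne hnopp
  obtain ⟨u, s, hu, hub⟩ := exists_wall hα hβ hne hnopp hfin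
  obtain ⟨u', s', hu', hub'⟩ := exists_wall hα hβ.compl hnopp (by rwa [compl_compl]) hfin
  obtain ⟨v, a, b, hab, hf, hv, c, hc, d, hd, hcb, hdb⟩ :=
    wall_conn hβ hr _ u u' s s' hu hu' hub hub' rfl
  have hv2 := (stab_of_cross hβ hc hd hcb hdb).1
  obtain ⟨x, hx, hxa, hxb⟩ := quadrant hα hβ hr hf hv hv2
  obtain ⟨y, hy, hya, hyb⟩ := quadrant hα.compl hβ.compl hr hf hv hv2
  exact ⟨v, a, b, hab, hf, hv, hv2,
    (stab_of_cross hγ hx hy (h1 ⟨hxa, hxb⟩) (h2 ⟨hya, hyb⟩)).1⟩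

end CoxAux

/-- If `α ≠ ±β` are roots with `o(r_α r_β) < ∞` and `γ ∈ (α, β)`, then
`∂²α ∩ ∂²β ∩ ∂²γ ≠ ∅` and `o(r_α r_γ), o(r_β r_γ) < ∞`. -/
theorem stmt7 (cs : CoxeterSystem M W)
    (hM : ∀ s t : B, s ≠ t → M.M s t ∈ ({0, 2, 3, 4, 6, 8} : Set ℕ))
    (α β γ : Set W) (rα rβ rγ : W)
    (hα : IsRootPair cs α rα) (hβ : IsRootPair cs β rβ) (hγ : IsRootPair cs γ rγ)
    (hne : α ≠ β) (hnopp : α ≠ βᶜ)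
    (hfin : IsOfFinOrder (rα * rβ))
    -- `γ ∈ (α, β)`:
    (h1 : α ∩ β ⊆ γ) (h2 : αᶜ ∩ βᶜ ⊆ γᶜ) (h3 : γ ≠ α) (h4 : γ ≠ β) :
    (∃ R : Set W, R ∈ res2 cs rα ∧ R ∈ res2 cs rβ ∧ R ∈ res2 cs rγ) ∧
      IsOfFinOrder (rα * rγ) ∧ IsOfFinOrder (rβ * rγ) := by
  obtain ⟨v, a, b, hab, hf, ha, hb, hc⟩ := CoxAux.main (CoxAux.half_of_root hα)
    (CoxAux.half_of_root hβ) (CoxAux.half_of_root hγ) hne hnopp hfin h1 h2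
  have hR : IsSphRank2Residue cs (CoxAux.res cs v a b) := ⟨v, a, b, hab, hf, rfl⟩
  refine ⟨⟨_, ⟨hR, CoxAux.res_image ha⟩, ⟨hR, CoxAux.res_image hb⟩, ⟨hR, CoxAux.res_image hc⟩⟩,
    CoxAux.finOrder_of_stab (v := v) hf ?_, CoxAux.finOrder_of_stab (v := v) hf ?_⟩
  · convert mul_mem ha hc using 1
    group
  · convert mul_mem hb hc using 1
    group
end

section
/- Let (W,S) be a 2-spherical Coxeter system whose Coxeter diagram is the complete graph (m_{st} ≥ 3 for all s ≠ t), and suppose also m_{pq} ≠ 3 for all p,q. Let w ∈ W and s ≠ t ∈ S with ℓ(ws) = ℓ(w)+1 = ℓ(wt), and let w' ∈ ⟨s,t⟩ with ℓ(w') ≥ 2. Then for each r ∈ S \ {s,t} and f ∈ S \ {r}, ℓ(ww'rf) = ℓ(w) + ℓ(w') + 2. -/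
namespace CoxAux

open CoxeterSystem

variable {B W : Type*} [Group W] {M : CoxeterMatrix B}

/-- simple root -/
noncomputable def e (i : B) : B →₀ ℝ := Finsupp.single i 1

/-- the coefficient `2 cos (π / m)` -/
noncomputable def c (M : CoxeterMatrix B) (i j : B) : ℝ := 2 * Real.cos (Real.pi / (M i j : ℝ))

noncomputable def bet (M : CoxeterMatrix B) (i : B) : (B →₀ ℝ) →ₗ[ℝ] ℝ :=
  Finsupp.linearCombination ℝ (fun j => - c M i j)

noncomputable def R (M : CoxeterMatrix B) (i : B) : Module.End ℝ (B →₀ ℝ) :=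
  LinearMap.id - (bet M i).smulRight (e i)

lemma R_apply (i : B) (v : B →₀ ℝ) : R M i v = v - bet M i v • e i := rfl

lemma bet_e (i j : B) : bet M i (e j) = - c M i j := by
  simp [bet, e]

lemma c_self (i : B) : c M i i = -2 := by
  simp [c]

lemma c_symm (i j : B) : c M i j = c M j i := by
  rw [c, c, M.symmetric]

lemma R_self (i : B) : R M i (e i) = - e i := by
  rw [R_apply, bet_e, c_self]; module

lemma R_e (i j : B) : R M i (e j) = e j + c M i j • e i := by
  rw [R_apply, bet_e]; module

lemma R_R (i : B) (v : B →₀ ℝ) : R M i (R M i v) = v := by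
  rw [R_apply i v, map_sub, map_smul, R_self, R_apply]; module

lemma e_apply_self (i : B) : e i i = 1 := by simp [e]

lemma e_apply_ne {i j : B} (h : i ≠ j) : e i j = 0 := by simp [e, h]

lemma e_nonneg (i : B) : 0 ≤ e i := by
  intro j
  by_cases h : i = j
  · subst h; simp [e]
  · simp [e_apply_ne h]

lemma theta_pos (hgt : ∀ s t : B, s ≠ t → 3 < M s t) {i j : B} (h : i ≠ j) :
    0 < Real.pi / (M i j : ℝ) ∧ Real.pi / (M i j : ℝ) ≤ Real.pi / 4 ∧
      (M i j : ℝ) * (Real.pi / (M i j : ℝ)) = Real.pi := by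
  have h4 : (4 : ℝ) ≤ M i j := by exact_mod_cast hgt i j h
  have := Real.pi_pos
  refine ⟨by positivity, by gcongr, ?_⟩
  field_simp

lemma sin_theta_pos (hgt : ∀ s t : B, s ≠ t → 3 < M s t) {i j : B} (h : i ≠ j) :
    0 < Real.sin (Real.pi / (M i j : ℝ)) := by
  obtain ⟨h1, h2, h3⟩ := theta_pos hgt h
  apply Real.sin_pos_of_pos_of_lt_pi h1
  linarith [Real.pi_pos]

lemma c_bounds (hgt : ∀ s t : B, s ≠ t → 3 < M s t) {i j : B} (h : i ≠ j) :
    0 ≤ c M i j ∧ 2 ≤ c M i j ^ 2 := by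
  obtain ⟨h1, h2, h3⟩ := theta_pos hgt h
  have hc : Real.sqrt 2 / 2 ≤ Real.cos (Real.pi / (M i j : ℝ)) := by
    rw [← Real.cos_pi_div_four]
    apply Real.cos_le_cos_of_nonneg_of_le_pi h1.le _ h2
    linarith [Real.pi_pos]
  have h5 := Real.sqrt_nonneg 2
  have h6 : Real.sqrt 2 ^ 2 = 2 := Real.sq_sqrt (by norm_num)
  have h7 : Real.sqrt 2 ≤ c M i j := by unfold c; linarith
  refine ⟨h5.trans h7, ?_⟩
  nlinarith

lemma c_sq_lt (hgt : ∀ s t : B, s ≠ t → 3 < M s t) {i j : B} (h : i ≠ j) :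
    c M i j ^ 2 < 4 := by
  have h1 := sin_theta_pos hgt h
  have h2 := Real.sin_sq_add_cos_sq (Real.pi / (M i j : ℝ))
  unfold c
  nlinarith

lemma RR_comb (i j : B) (x y : ℝ) :
    R M i (R M j (x • e i + y • e j)) =
      (c M i j * (c M i j * x - y) - x) • e i + (c M i j * x - y) • e j := by
  simp only [map_add, map_smul, R_e, c_self, c_symm j i]
  module

lemma pow_ei (i j : B) (n : ℕ) :
    Real.sin (Real.pi / (M i j : ℝ)) • ((R M i * R M j) ^ n) (e i) =
      Real.sin ((2 * n + 1) * (Real.pi / (M i j : ℝ))) • e i +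
      Real.sin ((2 * n) * (Real.pi / (M i j : ℝ))) • e j := by
  induction n with
  | zero => simp
  | succ n ih =>
    rw [pow_succ', Module.End.mul_apply, ← map_smul, ih, Module.End.mul_apply, RR_comb]
    unfold c
    generalize Real.pi / (M i j : ℝ) = θ
    have key : ∀ x : ℝ, 2 * Real.cos θ * Real.sin (x + θ) - Real.sin x = Real.sin (x + 2 * θ) := by
      intro x
      rw [Real.sin_add, Real.sin_add, Real.sin_two_mul, Real.cos_two_mul]; ring
    have k1 := key (2 * n * θ)
    have k2 := key ((2 * n + 1) * θ)
    push_cast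
    rw [show (2 * n + 1 : ℝ) * θ = 2 * n * θ + θ by ring, k1]
    rw [show (2 * n + 1 : ℝ) * θ + θ = 2 * n * θ + 2 * θ by ring,
      show (2 * n + 1 : ℝ) * θ = 2 * n * θ + θ by ring] at k2
    rw [k2]
    congr 3 <;> ring_nf

lemma pow_ej (i j : B) (n : ℕ) :
    Real.sin (Real.pi / (M i j : ℝ)) • ((R M i * R M j) ^ n) (e j) =
      (- Real.sin ((2 * n) * (Real.pi / (M i j : ℝ)))) • e i +
      (- Real.sin ((2 * n - 1) * (Real.pi / (M i j : ℝ)))) • e j := by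
  induction n with
  | zero => simp
  | succ n ih =>
    rw [pow_succ', Module.End.mul_apply, ← map_smul, ih, Module.End.mul_apply, RR_comb]
    unfold c
    generalize Real.pi / (M i j : ℝ) = θ
    have key : ∀ x : ℝ, 2 * Real.cos θ * Real.sin (x + θ) - Real.sin x = Real.sin (x + 2 * θ) := by
      intro x
      rw [Real.sin_add, Real.sin_add, Real.sin_two_mul, Real.cos_two_mul]; ring
    have k1 := key ((2 * n - 1) * θ)
    have k2 := key (2 * n * θ)
    push_cast
    rw [show (2 * n - 1 : ℝ) * θ + θ = 2 * n * θ by ring,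
      show (2 * n - 1 : ℝ) * θ + 2 * θ = 2 * n * θ + θ by ring] at k1
    rw [show 2 * Real.cos θ * -Real.sin (2 * n * θ) - -Real.sin ((2 * n - 1) * θ)
      = - Real.sin (2 * n * θ + θ) by linarith,
      show 2 * Real.cos θ * -Real.sin (2 * n * θ + θ) - -Real.sin (2 * n * θ)
      = - Real.sin (2 * n * θ + 2 * θ) by linarith]
    congr 3 <;> ring_nf

lemma liftable_s11 (hgt : ∀ s t : B, s ≠ t → 3 < M s t) : M.IsLiftable (R M) := by
  intro i j
  by_cases h : i = j
  · subst h
    rw [M.diagonal, pow_one]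
    ext1 v
    ext1
    simp [R_R]
  have hs := sin_theta_pos hgt h
  obtain ⟨h1, h2, h3⟩ := theta_pos hgt h
  have hi := pow_ei (M := M) i j (M i j)
  have hj := pow_ej (M := M) i j (M i j)
  rw [show (2 * (M i j : ℝ) + 1) * (Real.pi / (M i j : ℝ)) =
    Real.pi / (M i j : ℝ) + 2 * Real.pi by linear_combination 2 * h3,
    show (2 * (M i j : ℝ)) * (Real.pi / (M i j : ℝ)) = 2 * Real.pi by linear_combination 2 * h3,
    Real.sin_add_two_pi, Real.sin_two_pi, zero_smul, add_zero] at hi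
  rw [show (2 * (M i j : ℝ) - 1) * (Real.pi / (M i j : ℝ)) =
    -(Real.pi / (M i j : ℝ)) + 2 * Real.pi by linear_combination 2 * h3,
    show (2 * (M i j : ℝ)) * (Real.pi / (M i j : ℝ)) = 2 * Real.pi by linear_combination 2 * h3,
    Real.sin_add_two_pi, Real.sin_two_pi, neg_zero, zero_smul, zero_add, Real.sin_neg, neg_neg] at hj
  have hi' := smul_right_injective _ hs.ne' hi
  have hj' := smul_right_injective _ hs.ne' hj
  have hfix : ∀ v : B →₀ ℝ, bet M i v = 0 → bet M j v = 0 →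
      ((R M i * R M j) ^ (M i j)) v = v := by
    intro v a b
    have : (R M i * R M j) v = v := by
      rw [Module.End.mul_apply, R_apply j, b, zero_smul, sub_zero, R_apply, a, zero_smul, sub_zero]
    generalize M i j = n
    induction n with
    | zero => simp
    | succ n ih => rw [pow_succ, Module.End.mul_apply, this, ih]
  refine LinearMap.ext fun v => ?_
  have hc := c_sq_lt hgt h
  have hd : 4 - c M i j ^ 2 ≠ 0 := by linarith
  set d := 4 - c M i j ^ 2
  set x := (2 * bet M i v + c M i j * bet M j v) / d
  set y := (2 * bet M j v + c M i j * bet M i v) / d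
  have e1 : bet M i (v - (x • e i + y • e j)) = 0 := by
    simp only [map_sub, map_add, map_smul, bet_e, c_self, smul_eq_mul]
    simp only [x, y]; field_simp; simp only [d]; ring
  have e2 : bet M j (v - (x • e i + y • e j)) = 0 := by
    simp only [map_sub, map_add, map_smul, bet_e, c_self, smul_eq_mul, c_symm j i]
    simp only [x, y]; field_simp; simp only [d]; ring
  have e3 := hfix _ e1 e2
  rw [map_sub, map_add, map_smul, map_smul, hi', hj'] at e3
  simpa using e3

/-- the geometric representation -/
noncomputable def rho (cs : CoxeterSystem M W) (hgt : ∀ s t : B, s ≠ t → 3 < M s t) :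
    W →* Module.End ℝ (B →₀ ℝ) := cs.lift ⟨R M, liftable_s11 hgt⟩

variable (cs : CoxeterSystem M W)

lemma rho_simple (hgt : ∀ s t : B, s ≠ t → 3 < M s t) (i : B) : rho cs hgt (cs.simple i) = R M i :=
  cs.lift_apply_simple (liftable_s11 hgt) i

lemma rho_mul_simple (hgt : ∀ s t : B, s ≠ t → 3 < M s t) (w : W) (i : B) (v : B →₀ ℝ) :
    rho cs hgt (w * cs.simple i) v = rho cs hgt w (R M i v) := by
  rw [map_mul, rho_simple, Module.End.mul_apply]

lemma rho_simple_mul (hgt : ∀ s t : B, s ≠ t → 3 < M s t) (w : W) (i : B) (v : B →₀ ℝ) :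
    rho cs hgt (cs.simple i * w) v = R M i (rho cs hgt w v) := by
  rw [map_mul, rho_simple, Module.End.mul_apply]

lemma rho_inv (hgt : ∀ s t : B, s ≠ t → 3 < M s t) (w : W) (v : B →₀ ℝ) : rho cs hgt w⁻¹ (rho cs hgt w v) = v := by
  rw [← Module.End.mul_apply, ← map_mul]; simp

lemma alt_formula_s11 (hgt : ∀ s t : B, s ≠ t → 3 < M s t) (i j : B) (k : ℕ) :
    Real.sin (Real.pi / (M i j : ℝ)) • rho cs hgt (cs.wordProd (alternatingWord i j k)) (e i) =
      Real.sin ((k + 1) * (Real.pi / (M i j : ℝ))) • e (if Even k then i else j) +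
      Real.sin (k * (Real.pi / (M i j : ℝ))) • e (if Even k then j else i) := by
  induction k with
  | zero => simp [alternatingWord]
  | succ k ih =>
    rw [alternatingWord_succ', cs.wordProd_cons, rho_simple_mul, ← map_smul, ih, map_add,
      map_smul, map_smul, R_self, R_e]
    have hc : c M (if Even k then j else i) (if Even k then i else j) =
        2 * Real.cos (Real.pi / (M i j : ℝ)) := by
      split_ifs
      · rw [c_symm]; rfl
      · rfl
    rw [hc]
    generalize Real.pi / (M i j : ℝ) = θ
    have key : 2 * Real.cos θ * Real.sin ((k + 1) * θ) - Real.sin (k * θ) =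
        Real.sin ((k + 1 + 1) * θ) := by
      rw [show ((k : ℝ) + 1 + 1) * θ = k * θ + 2 * θ by ring,
        show ((k : ℝ) + 1) * θ = k * θ + θ by ring,
        Real.sin_add, Real.sin_add, Real.sin_two_mul, Real.cos_two_mul]; ring
    push_cast
    rw [← key]
    by_cases hk : Even k
    · have : ¬ Even (k + 1) := by simp [hk, parity_simps]
      simp only [hk, this, if_true, if_false]
      module
    · have : Even (k + 1) := by simp [hk, parity_simps]
      simp only [hk, this, if_true, if_false]
      module

lemma exists_max (P : ℕ → Prop) (N : ℕ) (h1 : P 1) (hN : ∀ k, P k → k ≤ N) :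
    ∃ k, 1 ≤ k ∧ P k ∧ ¬ P (k + 1) := by
  by_contra! hcon
  have : ∀ n, P (n + 1) := by
    intro n
    induction n with
    | zero => exact h1
    | succ n ih => exact hcon _ (by omega) ih
  have := hN _ (this N)
  omega

theorem root_pos (hgt : ∀ s t : B, s ≠ t → 3 < M s t) (n : ℕ) : ∀ (w : W) (i : B), cs.length w = n →
    ¬ cs.IsRightDescent w i → 0 ≤ rho cs hgt w (e i) := by
  induction n using Nat.strong_induction_on with
  | _ n IH =>
  intro w i hn hi
  by_cases hw : w = 1
  · subst hw
    simpa using e_nonneg i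
  obtain ⟨j, hj⟩ := cs.exists_rightDescent_of_ne_one hw
  have hij : i ≠ j := by rintro rfl; exact hi hj
  obtain ⟨k, hk1, ⟨v, hwv, hlv⟩, hk2⟩ := exists_max
    (fun k => ∃ v, w = v * cs.wordProd (alternatingWord i j k) ∧ cs.length v + k = cs.length w)
    (cs.length w) ⟨w * cs.simple j, by simp [alternatingWord], cs.isRightDescent_iff.1 hj⟩
    (by rintro k ⟨v, -, h⟩; omega)
  have hq : ¬ cs.IsRightDescent v (if Even k then j else i) := by
    intro hd
    rw [cs.isRightDescent_iff] at hd
    refine hk2 ⟨v * cs.simple (if Even k then j else i), ?_, by omega⟩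
    rw [alternatingWord_succ', cs.wordProd_cons, ← mul_assoc, cs.simple_mul_simple_cancel_right]
    exact hwv
  have hp : ¬ cs.IsRightDescent v (if Even k then i else j) := by
    intro hd
    rw [cs.isRightDescent_iff] at hd
    obtain ⟨k', rfl⟩ : ∃ k', k = k' + 1 := ⟨k - 1, by omega⟩
    have hpk : (if Even (k' + 1) then i else j) = (if Even k' then j else i) := by
      by_cases hk : Even k'
      · have : ¬ Even (k' + 1) := by simp [hk, parity_simps]
        simp only [hk, this, if_true, if_false]
      · have : Even (k' + 1) := by simp [hk, parity_simps]
        simp only [hk, this, if_true, if_false]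
    rw [hpk] at hd
    rw [alternatingWord_succ', cs.wordProd_cons, ← mul_assoc] at hwv
    have h1 := cs.length_mul_le (v * cs.simple (if Even k' then j else i))
      (cs.wordProd (alternatingWord i j k'))
    have h2 := cs.length_wordProd_le (alternatingWord i j k')
    rw [length_alternatingWord] at h2
    rw [← hwv] at h1
    omega
  have hM := hgt i j hij
  have hle := cs.length_mul_le v (cs.wordProd (alternatingWord i j k))
  rw [← hwv] at hle
  have hle2 := cs.length_wordProd_le (alternatingWord i j k)
  rw [length_alternatingWord] at hle2
  have hkM : k < M i j := by
    by_contra! hcon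
    rcases hcon.lt_or_eq with h | h
    · apply cs.not_isReduced_alternatingWord i j (by omega) h
      rw [CoxeterSystem.IsReduced, length_alternatingWord]
      omega
    · have hb := cs.wordProd_braidWord_eq i j
      unfold braidWord at hb
      rw [M.symmetric j i, h] at hb
      rw [hb] at hwv
      obtain ⟨k', rfl⟩ : ∃ k', k = k' + 1 := ⟨k - 1, by omega⟩
      rw [alternatingWord_succ, cs.wordProd_concat, ← mul_assoc] at hwv
      have h1 := cs.length_mul_le v (cs.wordProd (alternatingWord i j k'))
      have h2 := cs.length_wordProd_le (alternatingWord i j k')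
      rw [length_alternatingWord] at h2
      apply hi
      rw [IsRightDescent]
      nth_rw 1 [hwv]
      rw [cs.simple_mul_simple_cancel_right]
      omega
  have rp := IH (cs.length v) (by omega) v _ rfl hp
  have rq := IH (cs.length v) (by omega) v _ rfl hq
  have hf := congrArg (rho cs hgt v) (alt_formula_s11 cs hgt i j k)
  rw [map_smul, ← Module.End.mul_apply, ← map_mul, ← hwv, map_add, map_smul, map_smul] at hf
  have hs := sin_theta_pos hgt hij
  obtain ⟨t1, t2, t3⟩ := theta_pos hgt hij
  have hkM' : (k : ℝ) + 1 ≤ M i j := by exact_mod_cast hkM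
  have s1 : 0 ≤ Real.sin ((k + 1) * (Real.pi / (M i j : ℝ))) := by
    apply Real.sin_nonneg_of_nonneg_of_le_pi (by positivity)
    nlinarith
  have s2 : 0 ≤ Real.sin (k * (Real.pi / (M i j : ℝ))) := by
    apply Real.sin_nonneg_of_nonneg_of_le_pi (by positivity)
    nlinarith
  intro b
  have hb := DFunLike.congr_fun hf b
  simp only [Finsupp.smul_apply, Finsupp.add_apply, smul_eq_mul] at hb
  refine (mul_nonneg_iff_of_pos_left hs).1 ?_
  rw [hb]
  exact add_nonneg (mul_nonneg s1 (rp b)) (mul_nonneg s2 (rq b))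

lemma descent_neg (hgt : ∀ s t : B, s ≠ t → 3 < M s t) {w : W} {i : B} (h : cs.IsRightDescent w i) : rho cs hgt w (e i) ≤ 0 := by
  have h' := cs.isRightDescent_iff_not_isRightDescent_mul.1 h
  have := root_pos cs hgt _ _ i rfl h'
  rw [rho_mul_simple, R_self, map_neg] at this
  simpa using this

lemma nondescent_pos (hgt : ∀ s t : B, s ≠ t → 3 < M s t) {w : W} {i : B} (h : ¬ cs.IsRightDescent w i) : 0 ≤ rho cs hgt w (e i) :=
  root_pos cs hgt _ _ i rfl h

lemma rho_e_ne (hgt : ∀ s t : B, s ≠ t → 3 < M s t) (w : W) (i : B) : rho cs hgt w (e i) ≠ 0 := by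
  intro h
  have := rho_inv cs hgt w (e i)
  rw [h, map_zero] at this
  have := DFunLike.congr_fun this i
  rw [e_apply_self] at this
  simp at this

lemma descent_of_neg (hgt : ∀ s t : B, s ≠ t → 3 < M s t) {w : W} {i : B} (h : rho cs hgt w (e i) ≤ 0) : cs.IsRightDescent w i := by
  by_contra hcon
  exact rho_e_ne cs hgt w i (le_antisymm h (nondescent_pos cs hgt hcon))

lemma nondescent_of_pos (hgt : ∀ s t : B, s ≠ t → 3 < M s t) {w : W} {i : B} (h : 0 ≤ rho cs hgt w (e i)) :
    ¬ cs.IsRightDescent w i := fun hcon =>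
  rho_e_ne cs hgt w i (le_antisymm (descent_neg cs hgt hcon) h)

lemma comb_nonpos {u v : B →₀ ℝ} {x y : ℝ} (hx : 0 ≤ x) (hy : 0 ≤ y) (hu : u ≤ 0) (hv : v ≤ 0) :
    x • u + y • v ≤ 0 := by
  intro b
  have h1 := mul_nonpos_of_nonneg_of_nonpos hx (hu b)
  have h2 := mul_nonpos_of_nonneg_of_nonpos hy (hv b)
  simpa using add_nonpos h1 h2

/-- from descents `a, b` get a chain of descents -/
lemma descent_chain (hgt : ∀ s t : B, s ≠ t → 3 < M s t) {z : W} {a b : B} (hab : a ≠ b) (ha : cs.IsRightDescent z a)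
    (hb : cs.IsRightDescent z b) :
    cs.IsRightDescent (z * cs.simple a) b ∧
    cs.IsRightDescent (z * cs.simple a * cs.simple b) a ∧
    cs.IsRightDescent (z * cs.simple a * cs.simple b * cs.simple a) b := by
  have na := descent_neg cs hgt ha
  have nb := descent_neg cs hgt hb
  obtain ⟨c0, c2⟩ := c_bounds hgt hab
  refine ⟨?_, ?_, ?_⟩ <;> apply descent_of_neg cs hgt <;>
    simp only [rho_mul_simple, R_e, c_self, c_symm b a, map_add, map_smul]
  · have := comb_nonpos c0 zero_le_one na nb
    convert this using 1; module
  · have := comb_nonpos (x := c M a b ^ 2 - 1) (by linarith) c0 na nb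
    convert this using 1; module
  · have := comb_nonpos (x := c M a b * (c M a b ^ 2 - 2)) (y := c M a b ^ 2 - 1)
      (mul_nonneg c0 (by linarith)) (by linarith) na nb
    convert this using 1; module

lemma no_triangle (hgt : ∀ s t : B, s ≠ t → 3 < M s t) (n : ℕ) : ∀ (z : W) (a b d : B), cs.length z = n → a ≠ b → b ≠ d → a ≠ d →
    cs.IsRightDescent z a → cs.IsRightDescent z b → cs.IsRightDescent (z * cs.simple a) d →
    False := by
  induction n with
  | zero =>
    intro z a b d hz _ _ _ ha
    rw [IsRightDescent] at ha
    omega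
  | succ n ih =>
    intro z a b d hz hab hbd had ha hb hd
    obtain ⟨h1, h2, -⟩ := descent_chain cs hgt hab ha hb
    have hl := cs.isRightDescent_iff.1 ha
    exact ih (z * cs.simple a) b d a (by omega) hbd had.symm hab.symm h1 hd h2

/-- Action of the dihedral parabolic. -/
lemma closure_act (hgt : ∀ s t : B, s ≠ t → 3 < M s t) {s t : B} {w' : W} (hw' : w' ∈ Subgroup.closure {cs.simple s, cs.simple t})
    (v : B →₀ ℝ) : ∃ x y : ℝ, rho cs hgt w' v = v + x • e s + y • e t := by
  induction hw' using Subgroup.closure_induction generalizing v with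
  | mem g hg =>
    rcases hg with rfl | rfl
    · exact ⟨- bet M s v, 0, by rw [rho_simple, R_apply]; module⟩
    · exact ⟨0, - bet M t v, by rw [rho_simple, R_apply]; module⟩
  | one => exact ⟨0, 0, by simp⟩
  | mul g h _ _ ihg ihh =>
    obtain ⟨x, y, h1⟩ := ihh v
    obtain ⟨x', y', h2⟩ := ihg (v + x • e s + y • e t)
    refine ⟨x + x', y + y', ?_⟩
    rw [map_mul, Module.End.mul_apply, h1, h2]; module
  | inv g _ ih =>
    obtain ⟨x, y, h1⟩ := ih (rho cs hgt g⁻¹ v)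
    refine ⟨-x, -y, ?_⟩
    have h2 := rho_inv cs hgt g⁻¹ v
    rw [inv_inv] at h2
    rw [h2] at h1
    nth_rw 2 [h1]; module

lemma closure_descent (hgt : ∀ s t : B, s ≠ t → 3 < M s t) {s t : B} {w' : W} (hw' : w' ∈ Subgroup.closure {cs.simple s, cs.simple t})
    (h : 1 ≤ cs.length w') : ∃ a, (a = s ∨ a = t) ∧ cs.IsRightDescent w' a := by
  have hne : w' ≠ 1 := by rintro rfl; simp at h
  obtain ⟨a, ha⟩ := cs.exists_rightDescent_of_ne_one hne
  refine ⟨a, ?_, ha⟩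
  by_contra! hcon
  obtain ⟨x, y, hxy⟩ := closure_act cs hgt hw' (e a)
  have hn := descent_neg cs hgt ha a
  rw [hxy] at hn
  simp [e_apply_self, e_apply_ne hcon.1.symm, e_apply_ne hcon.2.symm] at hn
  linarith

lemma closure_mul_mem {s t a : B} {w' : W}
    (hw' : w' ∈ Subgroup.closure {cs.simple s, cs.simple t}) (ha : a = s ∨ a = t) :
    w' * cs.simple a ∈ Subgroup.closure {cs.simple s, cs.simple t} := by
  apply Subgroup.mul_mem _ hw'
  apply Subgroup.subset_closure
  rcases ha with rfl | rfl <;> simp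

lemma closure_sign (hgt : ∀ s t : B, s ≠ t → 3 < M s t) {s t a : B} (hst : s ≠ t) {w w' : W} (hs : ¬ cs.IsRightDescent w s)
    (ht : ¬ cs.IsRightDescent w t) (hw' : w' ∈ Subgroup.closure {cs.simple s, cs.simple t})
    (ha : a = s ∨ a = t) (h : cs.IsRightDescent w' a) : cs.IsRightDescent (w * w') a := by
  have ps := nondescent_pos cs hgt hs
  have pt := nondescent_pos cs hgt ht
  have hn := descent_neg cs hgt h
  obtain ⟨x, y, hxy⟩ : ∃ x y : ℝ, rho cs hgt w' (e a) = x • e s + y • e t := by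
    obtain ⟨x, y, hxy⟩ := closure_act cs hgt hw' (e a)
    rcases ha with rfl | rfl
    · exact ⟨1 + x, y, by rw [hxy]; module⟩
    · exact ⟨x, 1 + y, by rw [hxy]; module⟩
  rw [hxy] at hn
  have hx := hn s
  have hy := hn t
  simp [e_apply_self, e_apply_ne hst, e_apply_ne hst.symm] at hx hy
  apply descent_of_neg cs hgt
  rw [map_mul, Module.End.mul_apply, hxy, map_add, map_smul, map_smul]
  have := comb_nonpos (x := -x) (y := -y) (by linarith) (by linarith)
    (neg_nonpos.2 ps) (neg_nonpos.2 pt)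
  convert this using 1; module

lemma closure_sign' (hgt : ∀ s t : B, s ≠ t → 3 < M s t) {s t a : B} (hst : s ≠ t) {w w' : W} (hs : ¬ cs.IsRightDescent w s)
    (ht : ¬ cs.IsRightDescent w t) (hw' : w' ∈ Subgroup.closure {cs.simple s, cs.simple t})
    (ha : a = s ∨ a = t) (h : cs.IsRightDescent (w * w') a) : cs.IsRightDescent w' a := by
  by_contra hcon
  rw [cs.isRightDescent_iff_not_isRightDescent_mul, not_not] at hcon
  have := closure_sign cs hgt hst hs ht (closure_mul_mem cs hw' ha) ha hcon
  rw [cs.isRightDescent_iff_not_isRightDescent_mul, ← mul_assoc,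
    cs.simple_mul_simple_cancel_right] at this
  exact this h

lemma closure_length (hgt : ∀ s t : B, s ≠ t → 3 < M s t) {s t : B} (hst : s ≠ t) {w : W} (hs : ¬ cs.IsRightDescent w s)
    (ht : ¬ cs.IsRightDescent w t) (n : ℕ) : ∀ w' : W, cs.length w' = n →
    w' ∈ Subgroup.closure {cs.simple s, cs.simple t} →
    cs.length (w * w') = cs.length w + cs.length w' := by
  induction n with
  | zero =>
    intro w' h _
    rw [cs.length_eq_zero_iff] at h
    simp [h]
  | succ n ih =>
    intro w' h hw'
    obtain ⟨a, ha, hd⟩ := closure_descent cs hgt hw' (by omega)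
    have h1 := cs.isRightDescent_iff.1 (closure_sign cs hgt hst hs ht hw' ha hd)
    have h2 := cs.isRightDescent_iff.1 hd
    have h3 := ih (w' * cs.simple a) (by omega) (closure_mul_mem cs hw' ha)
    rw [← mul_assoc] at h3
    omega

/-- first step -/
lemma step_one (hgt : ∀ s t : B, s ≠ t → 3 < M s t) {s t : B} (hst : s ≠ t) {w w' : W} (hs : ¬ cs.IsRightDescent w s)
    (ht : ¬ cs.IsRightDescent w t) (hw' : w' ∈ Subgroup.closure {cs.simple s, cs.simple t})
    (hlen : 2 ≤ cs.length w') {r : B} (hrs : r ≠ s) (hrt : r ≠ t) :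
    ¬ cs.IsRightDescent (w * w') r := by
  intro hr
  obtain ⟨a, ha, hd⟩ := closure_descent cs hgt hw' (by omega)
  have hl := cs.isRightDescent_iff.1 hd
  have hm := closure_mul_mem cs hw' ha
  obtain ⟨b, hb, hd'⟩ := closure_descent cs hgt hm (by omega)
  have hab : a ≠ b := by
    rintro rfl
    exact cs.isRightDescent_iff_not_isRightDescent_mul.1 hd hd'
  have h1 := closure_sign cs hgt hst hs ht hw' ha hd
  have h2 := closure_sign cs hgt hst hs ht hm hb hd'
  rw [← mul_assoc] at h2
  have hra : r ≠ a := by rcases ha with rfl | rfl <;> assumption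
  have hrb : r ≠ b := by rcases hb with rfl | rfl <;> assumption
  exact no_triangle cs hgt _ (w * w') a r b rfl hra.symm hrb hab h1 hr h2

lemma step_two (hgt : ∀ s t : B, s ≠ t → 3 < M s t) {s t : B} (hst : s ≠ t) {w w' : W} (hs : ¬ cs.IsRightDescent w s)
    (ht : ¬ cs.IsRightDescent w t) (hw' : w' ∈ Subgroup.closure {cs.simple s, cs.simple t})
    (hlen : 2 ≤ cs.length w') {r f : B} (hrs : r ≠ s) (hrt : r ≠ t) (hf : f ≠ r) :
    ¬ cs.IsRightDescent (w * w' * cs.simple r) f := by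
  intro hcon
  have hr := step_one cs hgt hst hs ht hw' hlen hrs hrt
  have hzr : cs.IsRightDescent (w * w' * cs.simple r) r := by
    rw [cs.isRightDescent_iff_not_isRightDescent_mul, cs.simple_mul_simple_cancel_right]
    exact hr
  obtain ⟨h1, h2, h3⟩ := descent_chain cs hgt hf.symm hzr hcon
  rw [cs.simple_mul_simple_cancel_right] at h1 h2 h3
  have hfa : f = s ∨ f = t := by
    by_contra! hne
    exact step_one cs hgt hst hs ht hw' hlen hne.1 hne.2 h1
  have hd := closure_sign' cs hgt hst hs ht hw' hfa h1
  have hl := cs.isRightDescent_iff.1 hd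
  have hm := closure_mul_mem cs hw' hfa
  obtain ⟨b, hb, hd'⟩ := closure_descent cs hgt hm (by omega)
  have hab : f ≠ b := by
    rintro rfl
    exact cs.isRightDescent_iff_not_isRightDescent_mul.1 hd hd'
  have h4 := closure_sign cs hgt hst hs ht hm hb hd'
  rw [← mul_assoc] at h4
  have hrb : r ≠ b := by rcases hb with rfl | rfl <;> assumption
  exact no_triangle cs hgt _ _ r b f rfl hrb hab.symm hf.symm h2 h4 h3

end CoxAux

/-- In a 2-spherical Coxeter system whose diagram is the complete graph
with `m_{pq} ≠ 3` for all `p, q` (i.e. `3 < m_{st} < ∞` for all `s ≠ t`):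
if `ℓ(ws) = ℓ(w)+1 = ℓ(wt)`, `w' ∈ ⟨s,t⟩` with `ℓ(w') ≥ 2`, then for `r ∉ {s,t}` and
`f ≠ r` we have `ℓ(ww'rf) = ℓ(w) + ℓ(w') + 2`. -/
theorem stmt11 {B W : Type*} [Group W] {M : CoxeterMatrix B} (cs : CoxeterSystem M W)
    (h2sph : ∀ s t : B, s ≠ t → M.M s t ≠ 0)
    (hgt3 : ∀ s t : B, s ≠ t → 3 < M.M s t)
    (w : W) (s t : B) (hst : s ≠ t)
    (hs : cs.length (w * cs.simple s) = cs.length w + 1)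
    (ht : cs.length (w * cs.simple t) = cs.length w + 1)
    (w' : W) (hw' : w' ∈ Subgroup.closure {cs.simple s, cs.simple t})
    (hlen : 2 ≤ cs.length w')
    (r : B) (hrs : r ≠ s) (hrt : r ≠ t) (f : B) (hf : f ≠ r) :
    cs.length (w * w' * cs.simple r * cs.simple f) = cs.length w + cs.length w' + 2 := by

  have hs' := cs.not_isRightDescent_iff.2 hs
  have ht' := cs.not_isRightDescent_iff.2 ht
  have h1 := CoxAux.closure_length cs hgt3 hst hs' ht' _ w' rfl hw'
  have h2 := cs.not_isRightDescent_iff.1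
    (CoxAux.step_one cs hgt3 hst hs' ht' hw' hlen hrs hrt)
  have h3 := cs.not_isRightDescent_iff.1
    (CoxAux.step_two cs hgt3 hst hs' ht' hw' hlen hrs hrt hf)
  omega
end

section
/- Let (W,S) be a 2-spherical cyclic hyperbolic Coxeter system of rank 3 (3 ≤ m_{rs}, m_{rt}, m_{st} with not all equal to 3). Then every combinatorial triangle T of roots contains a unique chamber: |⋂_{α∈T} α| = 1. -/
variable {B W : Type*} [Group W] {M : CoxeterMatrix B}

/-! ### Part 1: orders of products of two simple reflections -/

section Part1

variable {B W : Type*} [Group W] {M : CoxeterMatrix B}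

noncomputable def geoF (M : CoxeterMatrix B) [Fintype B] (i : B) : Module.Dual ℝ (B → ℝ) :=
  ∑ j, (-2 * Real.cos (Real.pi / (M.M i j : ℝ))) • LinearMap.proj j

theorem geoF_single [Fintype B] [DecidableEq B] (i j : B) :
    geoF M i (Pi.single j (1 : ℝ)) = -2 * Real.cos (Real.pi / (M.M i j : ℝ)) := by
  simp [geoF, Pi.single_apply]

theorem geoF_self [Fintype B] [DecidableEq B] (i : B) :
    geoF M i (Pi.single i (1 : ℝ)) = 2 := by
  rw [geoF_single, M.diagonal]; simp

theorem geo_S_zero (m : ℕ) (hm : 3 ≤ m) (t : ℝ) (ht : t = 2 * Real.cos (2 * Real.pi / m)) :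
    ((Polynomial.Chebyshev.S ℝ (((m : ℤ) - 2) / 2)).eval t *
      ((Polynomial.Chebyshev.S ℝ (((m : ℤ) - 1) / 2)).eval t +
        (Polynomial.Chebyshev.S ℝ (((m : ℤ) - 3) / 2)).eval t) = 0) ∧
    ((Polynomial.Chebyshev.S ℝ (((m : ℤ) - 1) / 2)).eval t *
      ((Polynomial.Chebyshev.S ℝ ((m : ℤ) / 2)).eval t +
        (Polynomial.Chebyshev.S ℝ (((m : ℤ) - 2) / 2)).eval t) = 0) := by
  have hm0 : (0 : ℝ) < m := by positivity
  have hm3 : (3 : ℝ) ≤ m := by exact_mod_cast hm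
  set θ := 2 * Real.pi / m with hθ
  have hθm : (m : ℝ) * θ = 2 * Real.pi := by rw [hθ]; field_simp
  have hsin : Real.sin θ ≠ 0 := by
    apply ne_of_gt
    apply Real.sin_pos_of_pos_of_lt_pi
    · rw [hθ]; positivity
    · rw [hθ, div_lt_iff₀ hm0]; nlinarith [Real.pi_pos]
  have hS : ∀ n : ℤ, (Polynomial.Chebyshev.S ℝ n).eval t * Real.sin θ = Real.sin ((n + 1) * θ) := by
    intro n; rw [ht]; exact Polynomial.Chebyshev.S_two_mul_real_cos θ n
  rcases Nat.even_or_odd' m with ⟨k, hk | hk⟩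
  · have h1 : ((m : ℤ) - 2) / 2 = k - 1 := by omega
    have h2 : ((m : ℤ) - 1) / 2 = k - 1 := by omega
    have h0 : (Polynomial.Chebyshev.S ℝ ((k : ℤ) - 1)).eval t = 0 := by
      apply (mul_eq_zero.mp _).resolve_right hsin
      rw [hS]
      have : ((((k : ℤ) - 1 : ℤ) : ℝ) + 1) * θ = Real.pi := by
        have : (m : ℝ) = 2 * k := by exact_mod_cast hk
        push_cast; rw [this] at hθm; linarith
      rw [this, Real.sin_pi]
    rw [h1, h2, h0]; simp
  · have h1 : ((m : ℤ) - 1) / 2 = k := by omega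
    have h2 : ((m : ℤ) - 3) / 2 = k - 1 := by omega
    have h3 : ((m : ℤ) - 2) / 2 = k - 1 := by omega
    have h4 : ((m : ℤ)) / 2 = k := by omega
    have h0 : (Polynomial.Chebyshev.S ℝ (k : ℤ)).eval t +
        (Polynomial.Chebyshev.S ℝ ((k : ℤ) - 1)).eval t = 0 := by
      apply (mul_eq_zero.mp _).resolve_right hsin
      rw [add_mul, hS, hS]
      have hmk : (m : ℝ) = 2 * k + 1 := by exact_mod_cast hk
      have : (((k : ℤ) : ℝ) + 1) * θ = 2 * Real.pi - (((k : ℤ) - 1 : ℤ) + 1 : ℝ) * θ := by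
        push_cast; rw [hmk] at hθm; linarith
      rw [this, Real.sin_two_pi_sub]; simp
    rw [h1, h2, h3, h4, h0]; simp

theorem geo_liftable [Fintype B] [DecidableEq B] (h3 : ∀ s t : B, s ≠ t → 3 ≤ M.M s t) :
    M.IsLiftable (fun i : B => (Module.reflection (geoF_self (M := M) i) :
      (B → ℝ) ≃ₗ[ℝ] (B → ℝ))) := by
  intro i j
  by_cases hij : i = j
  · subst hij
    have h1 : M i i = 1 := M.diagonal i
    rw [h1, pow_one]
    ext z : 1
    exact Module.involutive_reflection _ z
  · have hm := h3 i j hij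
    ext z : 1
    have ht : 2 * Real.cos (2 * Real.pi / (M.M i j : ℝ)) =
        geoF M i (Pi.single j (1 : ℝ)) * geoF M j (Pi.single i (1 : ℝ)) - 2 := by
      rw [geoF_single, geoF_single, M.symmetric j i, mul_div_assoc, Real.cos_two_mul]; ring
    obtain ⟨e1, e2⟩ := geo_S_zero (M.M i j) hm _ rfl
    have := Module.reflection_mul_reflection_pow_apply (geoF_self (M := M) i) (geoF_self (M := M) j)
      (M.M i j) z _ ht
    rw [e1, e2] at this
    simpa using this

theorem order_facts [Fintype B] (cs : CoxeterSystem M W) (h3 : ∀ s t : B, s ≠ t → 3 ≤ M.M s t)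
    {i j : B} (hij : i ≠ j) :
    cs.simple i * cs.simple j ≠ 1 ∧ (cs.simple i * cs.simple j) ^ 2 ≠ 1 ∧
      ((cs.simple i * cs.simple j) ^ 3 = 1 → M.M i j = 3) := by
  classical
  let φ := cs.lift ⟨_, geo_liftable (M := M) h3⟩
  have hφ : ∀ i, φ (cs.simple i) = Module.reflection (geoF_self (M := M) i) :=
    fun i => cs.lift_apply_simple _ i
  have hm := h3 i j hij
  have hm0 : (0 : ℝ) < M.M i j := by positivity
  have hm3 : (3 : ℝ) ≤ M.M i j := by exact_mod_cast hm
  set c := Real.cos (Real.pi / (M.M i j : ℝ)) with hc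
  have hcpos : 0 < c := by
    apply Real.cos_pos_of_mem_Ioo
    constructor
    · have : 0 < Real.pi / (M.M i j : ℝ) := by positivity
      linarith [Real.pi_pos]
    · rw [div_lt_div_iff₀ hm0 (by norm_num)]; nlinarith [Real.pi_pos]
  have key : ∀ n : ℕ, (cs.simple i * cs.simple j) ^ n = 1 →
      (Polynomial.Chebyshev.S ℝ ((n : ℤ) - 1)).eval (4 * c ^ 2 - 2) = 0 ∧
      (Polynomial.Chebyshev.S ℝ (n : ℤ)).eval (4 * c ^ 2 - 2) = 1 := by
    intro n hn
    have h1 : (Module.reflection (geoF_self (M := M) i) *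
        Module.reflection (geoF_self (M := M) j)) ^ n = 1 := by
      rw [← hφ, ← hφ, ← map_mul, ← map_pow, hn, map_one]
    have ht : 4 * c ^ 2 - 2 =
        geoF M i (Pi.single j (1 : ℝ)) * geoF M j (Pi.single i (1 : ℝ)) - 2 := by
      rw [geoF_single, geoF_single, M.symmetric j i]; ring
    have h2 := Module.reflection_mul_reflection_pow_apply_self (geoF_self (M := M) i)
      (geoF_self (M := M) j) n _ ht
    have hg : geoF M j (Pi.single i (1 : ℝ)) = -2 * c := by
      rw [geoF_single, M.symmetric j i]
    rw [h1, hg] at h2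
    have h3 := congrFun h2 j
    have h4 := congrFun h2 i
    simp [hij, hij.symm] at h3 h4
    have h5 := h3.resolve_right hcpos.ne'
    exact ⟨h5, by rw [h5] at h4; linarith⟩
  refine ⟨fun h => ?_, fun h => ?_, fun h => ?_⟩
  · have := (key 1 (by simpa using h)).1
    simp at this
  · obtain ⟨h1, h2⟩ := key 2 h
    norm_num [Polynomial.Chebyshev.S_two] at h1 h2
    rw [h1] at h2; norm_num at h2
  · obtain ⟨h1, h2⟩ := key 3 h
    have e3 : Polynomial.Chebyshev.S ℝ 3 = Polynomial.X * (Polynomial.X ^ 2 - 1) - Polynomial.X := by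
      have := Polynomial.Chebyshev.S_add_two ℝ 1
      norm_num [Polynomial.Chebyshev.S_two] at this
      exact this
    norm_num [Polynomial.Chebyshev.S_two, e3] at h1 h2
    rw [h1] at h2
    have hc2 : c = 1 / 2 := by nlinarith
    rw [hc, ← Real.cos_pi_div_three] at hc2
    have := Real.injOn_cos ⟨by positivity, div_le_self Real.pi_pos.le (by linarith)⟩
      ⟨by positivity, div_le_self Real.pi_pos.le (by norm_num)⟩ hc2
    have h6 : (M.M i j : ℝ) = 3 := by
      have hp := Real.pi_ne_zero
      field_simp at this
      linarith
    exact_mod_cast h6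

end Part1

/-! ### Part 2: the reflection cocycle -/

namespace Cox

section Part2

variable {B W : Type*} [Group W] {M : CoxeterMatrix B} (cs : CoxeterSystem M W)

open Classical in
noncomputable def cocPerm (i : B) : Equiv.Perm (W × ZMod 2) :=
  Function.Involutive.toPerm
    (fun p => (cs.simple i * p.1 * cs.simple i, p.2 + if p.1 = cs.simple i then 1 else 0)) (by
      rintro ⟨t, e⟩
      have h1 : cs.simple i * (cs.simple i * t * cs.simple i) * cs.simple i = t := by
        simp [mul_assoc]
      have h2 : (cs.simple i * t * cs.simple i = cs.simple i) ↔ t = cs.simple i := by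
        constructor
        · intro h; rw [← h1, h]; simp
        · rintro rfl; simp
      simp only [h1, h2, Prod.mk.injEq, true_and]
      by_cases h : t = cs.simple i
      · simp only [h, if_true]; rw [add_assoc, CharTwo.add_self_eq_zero, add_zero]
      · simp [h])

open Classical in
theorem cocPerm_apply (i : B) (t : W) (e : ZMod 2) : cocPerm cs i (t, e) =
    (cs.simple i * t * cs.simple i, e + if t = cs.simple i then 1 else 0) := rfl

open Classical in
theorem cocPerm_pow (i j : B) (n : ℕ) (t : W) (e : ZMod 2) :
    ((cocPerm cs i * cocPerm cs j) ^ n) (t, e) =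
      ((cs.simple i * cs.simple j) ^ n * t * ((cs.simple i * cs.simple j) ^ n)⁻¹,
        e + ∑ l ∈ Finset.range (2 * n),
          if t = cs.simple j * (cs.simple i * cs.simple j) ^ l then 1 else 0) := by
  induction n with
  | zero => simp
  | succ n ih =>
    rw [pow_succ', Equiv.Perm.mul_apply, ih, Equiv.Perm.mul_apply, cocPerm_apply, cocPerm_apply]
    set g := cs.simple i * cs.simple j with hg
    have hinv : g⁻¹ = cs.simple j * cs.simple i := by simp [hg]
    have hcomm : ∀ k : ℕ, (g ^ k)⁻¹ * cs.simple j = cs.simple j * g ^ k := by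
      intro k
      induction k with
      | zero => simp
      | succ k ihk =>
        have e0 : g ^ (k + 1) = g ^ k * g := pow_succ g k
        have e1 : g ^ (k + 1) = g * g ^ k := pow_succ' g k
        calc (g ^ (k + 1))⁻¹ * cs.simple j = g⁻¹ * ((g ^ k)⁻¹ * cs.simple j) := by
              rw [e0, mul_inv_rev, mul_assoc]
          _ = cs.simple j * (cs.simple i * cs.simple j * g ^ k) := by
              rw [ihk, hinv]; simp only [mul_assoc]
          _ = cs.simple j * g ^ (k + 1) := by rw [e1]
    have e1 : (g ^ n * t * (g ^ n)⁻¹ = cs.simple j) ↔ t = cs.simple j * g ^ (2 * n) := by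
      rw [two_mul, pow_add, ← mul_assoc, ← hcomm n]
      constructor
      · intro h; rw [← h]; group
      · intro h; rw [h]; group
    have e2 : (cs.simple j * (g ^ n * t * (g ^ n)⁻¹) * cs.simple j = cs.simple i) ↔
        t = cs.simple j * g ^ (2 * n + 1) := by
      have : cs.simple j * g ^ (2 * n + 1) = (g ^ n)⁻¹ * (cs.simple j * cs.simple i * cs.simple j) * g ^ n := by
        have e3 : cs.simple j * cs.simple i * cs.simple j = cs.simple j * g := by rw [hg, mul_assoc]
        rw [e3, ← mul_assoc, hcomm n, show 2 * n + 1 = n + 1 + n by ring, pow_add, pow_succ]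
        simp only [mul_assoc]
      rw [this]
      constructor
      · intro h; rw [← h]; simp [mul_assoc]
      · intro h; rw [h]; simp [mul_assoc]
    rw [show 2 * (n + 1) = 2 * n + 1 + 1 by ring, Finset.sum_range_succ, Finset.sum_range_succ]
    simp only [e1, e2]
    refine Prod.ext ?_ ?_
    · simp only
      rw [pow_succ', mul_inv_rev, hinv]
      simp only [mul_assoc, hg]
    · simp only [add_assoc]

theorem coc_liftable : M.IsLiftable (cocPerm cs) := by
  classical
  intro i j
  ext1 ⟨t, e⟩
  rw [cocPerm_pow, cs.simple_mul_simple_pow, two_mul, Finset.sum_range_add]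
  have : ∀ l, (cs.simple i * cs.simple j) ^ (M i j + l) = (cs.simple i * cs.simple j) ^ l := by
    intro l; rw [pow_add, cs.simple_mul_simple_pow, one_mul]
  simp only [this, CharTwo.add_self_eq_zero]
  simp

noncomputable def cocHom : W →* Equiv.Perm (W × ZMod 2) := cs.lift ⟨_, coc_liftable cs⟩

noncomputable def coc (w t : W) : ZMod 2 := (cocHom cs w⁻¹ (t, 0)).2

theorem cocHom_simple (i : B) : cocHom cs (cs.simple i) = cocPerm cs i :=
  cs.lift_apply_simple _ i

theorem cocHom_apply (w t : W) (e : ZMod 2) :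
    cocHom cs w (t, e) = (w * t * w⁻¹, e + coc cs w⁻¹ t) := by
  unfold coc
  rw [inv_inv]
  induction w using cs.simple_induction_left generalizing t e with
  | one => simp
  | mul_simple_left w i ih =>
    rw [map_mul, Equiv.Perm.mul_apply, Equiv.Perm.mul_apply, ih t e, ih t 0, cocHom_simple,
      cocPerm_apply, cocPerm_apply]
    simp [mul_assoc, add_assoc]

theorem coc_mul (v w t : W) : coc cs (v * w) t = coc cs v t + coc cs w (v⁻¹ * t * v) := by
  have h : cocHom cs (v * w)⁻¹ (t, 0) = cocHom cs w⁻¹ (cocHom cs v⁻¹ (t, 0)) := by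
    rw [mul_inv_rev, map_mul, Equiv.Perm.mul_apply]
  have h2 := congrArg Prod.snd h
  rw [cocHom_apply cs v⁻¹, cocHom_apply cs w⁻¹] at h2
  simpa [coc] using h2

open Classical in
theorem coc_simple (i : B) (t : W) : coc cs (cs.simple i) t = if t = cs.simple i then 1 else 0 := by
  unfold coc
  rw [cs.inv_simple, cocHom_simple, cocPerm_apply]; simp

theorem coc_one (t : W) : coc cs 1 t = 0 := by
  simp [coc]

theorem mem_lis_of_coc (ω : List B) (t : W) (h : coc cs (cs.wordProd ω) t ≠ 0) :
    t ∈ cs.leftInvSeq ω := by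
  classical
  induction ω generalizing t with
  | nil => simp [coc_one] at h
  | cons i ω ih =>
    rw [cs.wordProd_cons, coc_mul, coc_simple] at h
    simp only [CoxeterSystem.leftInvSeq, List.mem_cons, List.mem_map]
    by_cases hti : t = cs.simple i
    · exact Or.inl hti
    · right
      refine ⟨_, ih _ (by simpa [hti] using h), ?_⟩
      simp [mul_assoc]

theorem coc_refl_self {t : W} (ht : cs.IsReflection t) : coc cs t t = 1 := by
  classical
  obtain ⟨v, i, rfl⟩ := ht
  have h0 := coc_mul cs v v⁻¹ (v * cs.simple i * v⁻¹)
  have h1 := coc_mul cs v (cs.simple i * v⁻¹) (v * cs.simple i * v⁻¹)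
  have e1 : v⁻¹ * (v * cs.simple i * v⁻¹) * v = cs.simple i := by group
  rw [e1] at h0 h1
  rw [coc_mul cs (cs.simple i), coc_simple] at h1
  simp only [mul_inv_cancel, coc_one, inv_mul_cancel, one_mul, if_true] at h0 h1
  rw [← mul_assoc] at h1
  rw [h1, add_left_comm, ← h0, add_zero]

/-- `t` separates `w` from `1` (for a reflection `t`). -/
def neg (t w : W) : Prop := cs.length (t * w) < cs.length w

theorem neg_iff_coc {t : W} (ht : cs.IsReflection t) (w : W) : neg cs t w ↔ coc cs w t = 1 := by
  have A : ∀ w, coc cs w t = 1 → neg cs t w := by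
    intro w h
    obtain ⟨ω, hω, rfl⟩ := cs.exists_isReduced w
    exact (cs.isLeftInversion_of_mem_leftInvSeq hω (mem_lis_of_coc cs ω t (by rw [h]; simp))).2
  refine ⟨fun h => ?_, A w⟩
  by_contra hne
  have h0 : coc cs w t = 0 := by
    generalize coc cs w t = x at hne
    fin_cases x
    · rfl
    · exact absurd rfl hne
  have : coc cs (t * w) t = 1 := by
    rw [coc_mul, coc_refl_self cs ht]; simp [h0]
  have := A _ this
  unfold neg at this h
  rw [← mul_assoc, ht.mul_self, one_mul] at this
  omega

theorem isRefl_conj' {t : W} (ht : cs.IsReflection t) (v : W) : cs.IsReflection (v⁻¹ * t * v) := by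
  simpa using ht.conj v⁻¹

theorem neg_mul {t : W} (ht : cs.IsReflection t) (v w : W) :
    neg cs t (v * w) ↔ (neg cs t v ↔ ¬ neg cs (v⁻¹ * t * v) w) := by
  rw [neg_iff_coc cs ht, neg_iff_coc cs ht, neg_iff_coc cs (isRefl_conj' cs ht v), coc_mul]
  generalize coc cs v t = x
  generalize coc cs w (v⁻¹ * t * v) = y
  revert x y; decide

theorem neg_one (t : W) : ¬ neg cs t 1 := by simp [neg]

theorem neg_simple {t : W} (ht : cs.IsReflection t) (i : B) :
    neg cs t (cs.simple i) ↔ t = cs.simple i := by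
  classical
  rw [neg_iff_coc cs ht, coc_simple]; simp

theorem neg_self {t : W} (ht : cs.IsReflection t) : neg cs t t := by
  rw [neg_iff_coc cs ht]; exact coc_refl_self cs ht

theorem neg_self_mul {t : W} (ht : cs.IsReflection t) (w : W) :
    neg cs t (t * w) ↔ ¬ neg cs t w := by
  rw [neg_mul cs ht]; simp [neg_self cs ht]

theorem neg_adj {t : W} (ht : cs.IsReflection t) (w : W) (i : B) (h1 : neg cs t (w * cs.simple i))
    (h2 : ¬ neg cs t w) : t = w * cs.simple i * w⁻¹ := by
  rw [neg_mul cs ht, neg_simple cs (isRefl_conj' cs ht w)] at h1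
  have : w⁻¹ * t * w = cs.simple i := by tauto
  rw [← this]; group

/-- translation when `v` is on the positive side -/
theorem neg_trans {t : W} (ht : cs.IsReflection t) (v w : W) (h : ¬ neg cs t v) :
    neg cs t w ↔ neg cs (v⁻¹ * t * v) (v⁻¹ * w) := by
  have := neg_mul cs ht v (v⁻¹ * w)
  rw [mul_inv_cancel_left] at this
  tauto

end Part2

end Cox

/-! ### Part 3: rank two parabolic subgroups -/

namespace Cox

section Part3

variable {B W : Type*} [Group W] {M : CoxeterMatrix B} (cs : CoxeterSystem M W)

def OF : Prop := ∀ i j : B, i ≠ j → cs.simple i * cs.simple j ≠ 1 ∧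
  (cs.simple i * cs.simple j) ^ 2 ≠ 1 ∧ ((cs.simple i * cs.simple j) ^ 3 = 1 → M.M i j = 3)

def par (a b : B) : Subgroup W := Subgroup.closure {cs.simple a, cs.simple b}

theorem par_l (a b : B) : cs.simple a ∈ par cs a b := Subgroup.subset_closure (by simp)
theorem par_r (a b : B) : cs.simple b ∈ par cs a b := Subgroup.subset_closure (by simp)

theorem par_comm (a b : B) : par cs a b = par cs b a := by
  unfold par; rw [Set.pair_comm]

theorem par_ind {a b : B} {p : W → Prop} (h1 : p 1)
    (hl : ∀ v ∈ par cs a b, ∀ i, i = a ∨ i = b → p v → p (cs.simple i * v)) :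
    ∀ v ∈ par cs a b, p v := by
  intro v hv
  unfold par at hv
  induction hv using Subgroup.closure_induction_left with
  | one => exact h1
  | mul_left x hx y hy ih =>
    rcases hx with rfl | rfl
    · exact hl y hy a (Or.inl rfl) ih
    · exact hl y hy b (Or.inr rfl) ih
  | inv_mul_cancel x hx y hy ih =>
    rcases hx with rfl | rfl
    · rw [cs.inv_simple]; exact hl y hy a (Or.inl rfl) ih
    · rw [cs.inv_simple]; exact hl y hy b (Or.inr rfl) ih

theorem rs (i : B) : cs.IsReflection (cs.simple i) := cs.isReflection_simple i

theorem simple_ne (H : OF cs) {i j : B} (h : i ≠ j) : cs.simple i ≠ cs.simple j := by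
  intro e; apply (H i j h).1; rw [e]; simp

theorem par_word {a b : B} : ∀ v ∈ par cs a b, ∃ ω : List B, (∀ i ∈ ω, i = a ∨ i = b) ∧
    cs.IsReduced ω ∧ cs.wordProd ω = v := by
  apply par_ind
  · exact ⟨[], by simp, by simp [CoxeterSystem.IsReduced], by simp⟩
  · rintro v - i hi ⟨ω, h1, h2, rfl⟩
    unfold CoxeterSystem.IsReduced at h2
    rcases cs.length_simple_mul (cs.wordProd ω) i with h | h
    · refine ⟨i :: ω, ?_, ?_, by simp [cs.wordProd_cons]⟩
      · intro j hj
        rcases List.mem_cons.1 hj with rfl | hj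
        · exact hi
        · exact h1 j hj
      · unfold CoxeterSystem.IsReduced
        rw [cs.wordProd_cons, h, h2]; simp
    · have hn : neg cs (cs.simple i) (cs.wordProd ω) := by unfold neg; omega
      rw [neg_iff_coc cs (rs cs i)] at hn
      have hm := mem_lis_of_coc cs ω (cs.simple i) (by rw [hn]; simp)
      obtain ⟨j, hj, e⟩ := List.getElem_of_mem hm
      rw [cs.length_leftInvSeq] at hj
      have e2 := cs.getD_leftInvSeq_mul_wordProd ω j
      rw [List.getD_eq_getElem _ _ (by rw [cs.length_leftInvSeq]; exact hj), e] at e2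
      refine ⟨ω.eraseIdx j, fun k hk => h1 k (List.mem_of_mem_eraseIdx hk), ?_, e2.symm⟩
      unfold CoxeterSystem.IsReduced
      rw [← e2, List.length_eraseIdx_of_lt hj]; omega

theorem G1 {a b : B} {v : W} (hv : v ∈ par cs a b) (h1 : v ≠ 1) :
    neg cs (cs.simple a) v ∨ neg cs (cs.simple b) v := by
  obtain ⟨ω, h2, h3, rfl⟩ := par_word cs v hv
  cases ω with
  | nil => simp at h1
  | cons i ω =>
    have : neg cs (cs.simple i) (cs.wordProd (i :: ω)) := by
      unfold neg
      unfold CoxeterSystem.IsReduced at h3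
      rw [h3, cs.wordProd_cons, cs.simple_mul_simple_cancel_left]
      have := cs.length_wordProd_le ω
      simp; omega
    rcases h2 i (by simp) with rfl | rfl
    · exact Or.inl this
    · exact Or.inr this

theorem N_par {a b : B} : ∀ v ∈ par cs a b, ∀ r, cs.IsReflection r → neg cs r v → r ∈ par cs a b := by
  apply par_ind
  · intro r _ h; exact absurd h (neg_one cs r)
  · intro v hv i hi ih r hr h
    have hsi : cs.simple i ∈ par cs a b := by
      rcases hi with rfl | rfl
      · exact par_l cs _ _
      · exact par_r cs _ _
    rw [neg_mul cs hr, neg_simple cs hr] at h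
    by_cases e : r = cs.simple i
    · rw [e]; exact hsi
    · have h' : neg cs ((cs.simple i)⁻¹ * r * cs.simple i) v := by tauto
      have := ih _ (isRefl_conj' cs hr _) h'
      have h3 := mul_mem (mul_mem hsi this) (inv_mem hsi)
      simpa [mul_assoc] using h3

def red (a b : B) (w : W) : Prop := ∀ r, cs.IsReflection r → r ∈ par cs a b → ¬ neg cs r w

theorem red_symm {a b : B} {w : W} (h : red cs a b w) : red cs b a w := by
  intro r hr hm; exact h r hr (by rw [par_comm]; exact hm)

theorem exists_min (a b : B) (w : W) : ∃ v ∈ par cs a b, red cs a b (v⁻¹ * w) ∧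
    ∀ v' ∈ par cs a b, cs.length (v⁻¹ * w) ≤ cs.length (v' * w) := by
  classical
  have hex : ∃ n, ∃ v ∈ par cs a b, cs.length (v * w) = n := ⟨_, 1, one_mem _, rfl⟩
  obtain ⟨v, hv, hn⟩ := Nat.find_spec hex
  have hmin : ∀ v' ∈ par cs a b, cs.length (v * w) ≤ cs.length (v' * w) := by
    intro v' hv'
    rw [hn]; exact Nat.find_min' hex ⟨v', hv', rfl⟩
  refine ⟨v⁻¹, inv_mem hv, ?_, ?_⟩
  · intro r hr hm hneg
    have := hmin (r * v) (mul_mem hm hv)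
    unfold neg at hneg
    rw [inv_inv, ← mul_assoc] at hneg
    omega
  · simpa using hmin

theorem neg_par {a b : B} {w v r : W} (hw : red cs a b w) (hv : v ∈ par cs a b)
    (hr : cs.IsReflection r) (hm : r ∈ par cs a b) : neg cs r (v * w) ↔ neg cs r v := by
  rw [neg_mul cs hr]
  have := hw _ (isRefl_conj' cs hr v) (mul_mem (mul_mem (inv_mem hv) hm) hv)
  tauto

theorem red_uniq {a b : B} {w w' v v' : W} (hw : red cs a b w) (hw' : red cs a b w')
    (hv : v ∈ par cs a b) (hv' : v' ∈ par cs a b) (e : v * w = v' * w') : v = v' := by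
  have e2 : w = (v⁻¹ * v') * w' := by rw [mul_assoc, ← e]; group
  by_contra hne
  have h1 : v⁻¹ * v' ≠ 1 := by
    intro h; apply hne; rw [inv_mul_eq_one] at h; exact h
  have hm := mul_mem (inv_mem hv) hv'
  rcases G1 cs hm h1 with h | h
  · apply hw _ (rs cs a) (par_l cs a b)
    rw [e2, neg_par cs hw' hm (rs cs a) (par_l cs a b)]; exact h
  · apply hw _ (rs cs b) (par_r cs a b)
    rw [e2, neg_par cs hw' hm (rs cs b) (par_r cs a b)]; exact h

theorem red_len {a b : B} {w v : W} (hw : red cs a b w) (hv : v ∈ par cs a b) :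
    cs.length w ≤ cs.length (v * w) := by
  obtain ⟨v0, h0, h1, h2⟩ := exists_min cs a b w
  have : (1 : W) = v0 := red_uniq cs hw h1 (one_mem _) h0 (by group)
  subst this
  simpa using h2 v hv

theorem red_of {a b : B} {w : W} (h1 : ¬ neg cs (cs.simple a) w) (h2 : ¬ neg cs (cs.simple b) w) :
    red cs a b w := by
  obtain ⟨v, hv, hr, -⟩ := exists_min cs a b w
  by_cases e : v = 1
  · subst e; simpa using hr
  · exfalso
    have e2 : w = v * (v⁻¹ * w) := by group
    rcases G1 cs hv e with h | h
    · rw [e2, neg_par cs hr hv (rs cs a) (par_l cs a b)] at h1; exact h1 h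
    · rw [e2, neg_par cs hr hv (rs cs b) (par_r cs a b)] at h2; exact h2 h

theorem ns (i : B) (w : W) : neg cs (cs.simple i) (cs.simple i * w) ↔ ¬ neg cs (cs.simple i) w :=
  neg_self_mul cs (rs cs i) w

theorem F5a (H : OF cs) {a b : B} (hab : a ≠ b) {w : W} (h1 : neg cs (cs.simple a) w)
    (h2 : neg cs (cs.simple b) w) : neg cs (cs.simple b) (cs.simple a * w) := by
  by_contra h
  have hr : red cs a b (cs.simple a * w) := red_of cs (by rw [ns]; exact not_not.2 h1) h
  have := neg_par cs hr (par_l cs a b) (rs cs b) (par_r cs a b)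
  rw [cs.simple_mul_simple_cancel_left, neg_simple cs (rs cs b)] at this
  exact simple_ne cs H hab (this.1 h2).symm

theorem F5b (H : OF cs) {a b : B} (hab : a ≠ b) {w : W} (h1 : neg cs (cs.simple a) w)
    (h2 : neg cs (cs.simple b) w) :
    neg cs (cs.simple a) (cs.simple b * (cs.simple a * w)) := by
  by_contra h
  have h3 := F5a cs H hab h1 h2
  have hr : red cs a b (cs.simple b * (cs.simple a * w)) :=
    red_of cs h (by rw [ns]; exact not_not.2 h3)
  have := neg_par cs hr (mul_mem (par_l cs a b) (par_r cs a b)) (rs cs b) (par_r cs a b)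
  rw [mul_assoc, cs.simple_mul_simple_cancel_left, cs.simple_mul_simple_cancel_left,
    neg_mul cs (rs cs b), neg_simple cs (rs cs b), neg_simple cs (isRefl_conj' cs (rs cs b) _)] at this
  have hne := simple_ne cs H hab
  have e : (cs.simple a)⁻¹ * cs.simple b * cs.simple a = cs.simple b := by tauto
  apply (H a b hab).2.1
  rw [cs.inv_simple] at e
  calc (cs.simple a * cs.simple b) ^ 2 = cs.simple a * cs.simple b * cs.simple a * cs.simple b := by
        rw [pow_two]; simp only [mul_assoc]
    _ = 1 := by rw [e]; simp

theorem F5c (H : OF cs) {a b : B} (hab : a ≠ b) (hM : M.M a b ≠ 3) {w : W}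
    (h1 : neg cs (cs.simple a) w) (h2 : neg cs (cs.simple b) w) :
    neg cs (cs.simple b) (cs.simple a * (cs.simple b * (cs.simple a * w))) := by
  by_contra h
  have h4 := F5b cs H hab h1 h2
  have hr : red cs a b (cs.simple a * (cs.simple b * (cs.simple a * w))) :=
    red_of cs (by rw [ns]; exact not_not.2 h4) h
  have := neg_par cs hr (mul_mem (mul_mem (par_l cs a b) (par_r cs a b)) (par_l cs a b))
    (rs cs b) (par_r cs a b)
  rw [mul_assoc, mul_assoc, cs.simple_mul_simple_cancel_left, cs.simple_mul_simple_cancel_left,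
    cs.simple_mul_simple_cancel_left, neg_mul cs (rs cs b), neg_mul cs (rs cs b),
    neg_simple cs (rs cs b), neg_simple cs (isRefl_conj' cs (rs cs b) _),
    neg_simple cs (isRefl_conj' cs (rs cs b) _)] at this
  have hne := simple_ne cs H hab
  have e0 : ¬ (cs.simple a)⁻¹ * cs.simple b * cs.simple a = cs.simple b := by
    intro e
    apply (H a b hab).2.1
    rw [cs.inv_simple] at e
    calc (cs.simple a * cs.simple b) ^ 2
          = cs.simple a * cs.simple b * cs.simple a * cs.simple b := by
          rw [pow_two]; simp only [mul_assoc]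
      _ = 1 := by rw [e]; simp
  have e : (cs.simple a * cs.simple b)⁻¹ * cs.simple b * (cs.simple a * cs.simple b) =
    cs.simple a := by tauto
  apply hM
  apply (H a b hab).2.2
  rw [mul_inv_rev, cs.inv_simple, cs.inv_simple] at e
  calc (cs.simple a * cs.simple b) ^ 3 = cs.simple a * (cs.simple b * cs.simple a * cs.simple b *
        (cs.simple a * cs.simple b)) := by
        rw [pow_succ, pow_two]; simp only [mul_assoc]
    _ = 1 := by rw [e]; simp

theorem lemA (H : OF cs) (n : ℕ) : ∀ {a b c : B} (_ : a ≠ b) (_ : a ≠ c) (_ : b ≠ c) {w : W},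
    cs.length w ≤ n → neg cs (cs.simple a) w → neg cs (cs.simple b) w →
    ¬ neg cs (cs.simple c) (cs.simple a * w) := by
  induction n with
  | zero =>
    intro a b c _ _ _ w hw h
    unfold neg at h; omega
  | succ n ih =>
    intro a b c hab hac hbc w hw h1 h2 h3
    refine ih hbc hab.symm hac.symm (w := cs.simple a * w) ?_ (F5a cs H hab h1 h2) h3
      (F5b cs H hab h1 h2)
    unfold neg at h1; omega

theorem lemA' (H : OF cs) {a b c : B} (hab : a ≠ b) (hac : a ≠ c) (hbc : b ≠ c) {w : W}
    (h1 : neg cs (cs.simple a) w) (h2 : neg cs (cs.simple b) w)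
    (h3 : neg cs (cs.simple c) (cs.simple a * w)) : False :=
  lemA cs H _ hab hac hbc le_rfl h1 h2 h3

theorem pre_u_aux (H : OF cs) {s t u : B} (hst : s ≠ t) (hsu : s ≠ u) (htu : t ≠ u) {v w : W}
    (hv : v ∈ par cs s t) (hw : red cs s t w) (h : neg cs (cs.simple u) (v * w))
    (hs : neg cs (cs.simple s) v) : v = cs.simple s := by
  by_contra hne
  have hm := mul_mem (par_l cs s t) hv
  have h1 : cs.simple s * v ≠ 1 := by
    intro e; apply hne
    rw [← cs.simple_mul_simple_cancel_left s (w := v), e, mul_one]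
  rcases G1 cs hm h1 with h2 | h2
  · rw [ns] at h2; exact h2 hs
  · have a1 := (neg_par cs hw hv (rs cs s) (par_l cs s t)).2 hs
    have a2 := (neg_par cs hw hm (rs cs t) (par_r cs s t)).2 h2
    rw [mul_assoc] at a2
    exact lemA' cs H hsu hst htu.symm a1 h a2

theorem pre_u (H : OF cs) {s t u : B} (hst : s ≠ t) (hsu : s ≠ u) (htu : t ≠ u) {v w : W}
    (hv : v ∈ par cs s t) (hw : red cs s t w) (h : neg cs (cs.simple u) (v * w)) :
    v = 1 ∨ v = cs.simple s ∨ v = cs.simple t := by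
  by_cases e : v = 1
  · exact Or.inl e
  · rcases G1 cs hv e with h1 | h1
    · exact Or.inr (Or.inl (pre_u_aux cs H hst hsu htu hv hw h h1))
    · exact Or.inr (Or.inr (pre_u_aux cs H hst.symm htu hsu (by rw [par_comm]; exact hv)
        (red_symm cs hw) h h1))

theorem L1 (H : OF cs) {x y z : B} (hxy : x ≠ y) (hxz : x ≠ z) (hyz : y ≠ z) {r w : W}
    (hr : cs.IsReflection r) (hm : r ∈ par cs x y) (h1 : r ≠ cs.simple x) (h2 : r ≠ cs.simple y)
    (h3 : neg cs r w) (h4 : neg cs (cs.simple z) w) : False := by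
  obtain ⟨v, hv, hd, -⟩ := exists_min cs x y w
  have e : w = v * (v⁻¹ * w) := by group
  rw [e] at h3 h4
  rw [neg_par cs hd hv hr hm] at h3
  rcases pre_u cs H hxy hxz hyz hv hd h4 with rfl | rfl | rfl
  · exact neg_one cs r h3
  · exact h1 ((neg_simple cs hr x).1 h3)
  · exact h2 ((neg_simple cs hr y).1 h3)

end Part3

end Cox

/-! ### Part 4: the key lemmas -/

namespace Cox

section Part4

variable {B W : Type*} [Group W] {M : CoxeterMatrix B} (cs : CoxeterSystem M W)

theorem neg_up {r d : W} {x : B} (hr : cs.IsReflection r) (h : neg cs r d)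
    (hl : cs.length d < cs.length (d * cs.simple x)) : neg cs r (d * cs.simple x) := by
  by_contra hn
  have e := neg_adj cs hr (d * cs.simple x) x (by rwa [cs.simple_mul_simple_cancel_right]) hn
  have : r * d = d * cs.simple x := by
    rw [e]; simp [mul_assoc]
  unfold neg at h
  rw [this] at h; omega

theorem flip {q : W} (hq : cs.IsReflection q) (f : W) :
    neg cs q f⁻¹ ↔ neg cs (f * q * f⁻¹) f := by
  unfold neg
  have e : f * q * f⁻¹ * f = (q * f⁻¹)⁻¹ := by
    rw [mul_inv_rev, inv_inv, hq.inv]; group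
  rw [e, cs.length_inv, cs.length_inv]

theorem third {s t u : B} (hst : s ≠ t) (hsu : s ≠ u) (htu : t ≠ u)
    (hB : ∀ i : B, i = s ∨ i = t ∨ i = u) {x y : B} (hxy : x ≠ y) :
    ∃ z, x ≠ z ∧ y ≠ z ∧ (∀ i : B, i = x ∨ i = y ∨ i = z) ∧
      (z = u → (x = s ∧ y = t) ∨ (x = t ∧ y = s)) := by
  rcases hB x with rfl | rfl | rfl <;> rcases hB y with rfl | rfl | rfl
  · exact absurd rfl hxy
  · exact ⟨u, hsu, htu, hB, by tauto⟩
  · refine ⟨t, hst, htu.symm, fun i => ?_, fun h => absurd h htu⟩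
    have := hB i; tauto
  · refine ⟨u, htu, hsu, fun i => ?_, by tauto⟩
    have := hB i; tauto
  · exact absurd rfl hxy
  · refine ⟨s, hst.symm, hsu.symm, fun i => ?_, fun h => absurd h hsu⟩
    have := hB i; tauto
  · refine ⟨t, htu.symm, hst, fun i => ?_, fun h => absurd h htu⟩
    have := hB i; tauto
  · refine ⟨s, hsu.symm, hst.symm, fun i => ?_, fun h => absurd h hsu⟩
    have := hB i; tauto
  · exact absurd rfl hxy

theorem lemK (H : OF cs) {s t u : B} (hst : s ≠ t) (hsu : s ≠ u) (htu : t ≠ u)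
    (hB : ∀ i : B, i = s ∨ i = t ∨ i = u) (n : ℕ) : ∀ d : W, cs.length d ≤ n → red cs s t d →
    ∀ r, cs.IsReflection r → neg cs r d →
      (∀ w, neg cs r w → neg cs (cs.simple u) w) ∨ (∀ w, neg cs r w → ¬ neg cs (cs.simple s) w) ∨
      (∀ w, neg cs r w → ¬ neg cs (cs.simple t) w) := by
  induction n with
  | zero =>
    intro d hd _ r _ h
    unfold neg at h; omega
  | succ n ih =>
    intro d hd hred r hr hneg
    have hd1 : d ≠ 1 := by rintro rfl; exact neg_one cs r hneg
    obtain ⟨x, hx⟩ := cs.exists_rightDescent_of_ne_one hd1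
    unfold CoxeterSystem.IsRightDescent at hx
    obtain ⟨d', rfl⟩ : ∃ d', d = d' * cs.simple x := ⟨d * cs.simple x, by simp⟩
    rw [cs.simple_mul_simple_cancel_right] at hx
    have hred' : red cs s t d' := fun q hq hm hn => hred q hq hm (neg_up cs hq hn hx)
    by_cases hnd : neg cs r d'
    · exact ih d' (by omega) hred' r hr hnd
    have er := neg_adj cs hr d' x hneg hnd
    by_cases hd'1 : d' = 1
    · subst hd'1
      simp only [one_mul, inv_one, mul_one] at er hneg hred
      subst er
      rcases hB x with rfl | rfl | rfl
      · exact absurd hneg (hred _ hr (par_l cs _ _))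
      · exact absurd hneg (hred _ hr (par_r cs _ _))
      · exact Or.inl fun w h => h
    obtain ⟨y, hy⟩ := cs.exists_rightDescent_of_ne_one hd'1
    unfold CoxeterSystem.IsRightDescent at hy
    have hxy : x ≠ y := by rintro rfl; omega
    obtain ⟨v, hv, hvr, hvm⟩ := exists_min cs x y d'⁻¹
    obtain ⟨f, hf⟩ : ∃ f, f = d' * v := ⟨_, rfl⟩
    have hfi : v⁻¹ * d'⁻¹ = f⁻¹ := by rw [hf]; group
    rw [hfi] at hvr hvm
    have hfl : cs.length f < cs.length d' := by
      have h1 := hvm _ (par_r cs x y)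
      have e : cs.simple y * d'⁻¹ = (d' * cs.simple y)⁻¹ := by simp
      rw [e, cs.length_inv, cs.length_inv] at h1; omega
    have hd'f : d' = f * v⁻¹ := by rw [hf]; group
    have hfred : red cs s t f := by
      intro q hq hm hn
      by_cases hc : neg cs (f⁻¹ * q * f) v⁻¹
      · have h1 := N_par cs _ (inv_mem hv) _ (isRefl_conj' cs hq f) hc
        apply hvr _ (isRefl_conj' cs hq f) h1
        rw [flip cs (isRefl_conj' cs hq f)]
        have e : f * (f⁻¹ * q * f) * f⁻¹ = q := by group
        rwa [e]
      · apply hred' q hq hm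
        rw [hd'f, neg_mul cs hq]; tauto
    obtain ⟨ρ, hρ⟩ : ∃ ρ, ρ = v⁻¹ * cs.simple x * v := ⟨_, rfl⟩
    have hρm : ρ ∈ par cs x y := by
      rw [hρ]; exact mul_mem (mul_mem (inv_mem hv) (par_l cs x y)) hv
    have hρr : cs.IsReflection ρ := by rw [hρ]; exact isRefl_conj' cs (rs cs x) v
    have erf : r = f * ρ * f⁻¹ := by rw [er, hρ, hf]; group
    have hrf : ¬ neg cs r f := by
      rw [erf, ← flip cs hρr]; exact hvr _ hρr hρm
    have hrw : ∀ w, neg cs r w ↔ neg cs ρ (f⁻¹ * w) := by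
      intro w
      rw [neg_trans cs hr f w hrf]
      have : f⁻¹ * r * f = ρ := by rw [erf]; group
      rw [this]
    by_cases hρa : ∃ a, ρ = cs.simple a
    · obtain ⟨a, ha⟩ := hρa
      refine ih (f * cs.simple a) ?_ ?_ r hr ?_
      · have := cs.length_mul_simple f a
        omega
      · intro q hq hm hn
        have h1 := neg_adj cs hq f a hn (hfred q hq hm)
        rw [← ha, ← erf] at h1
        subst h1
        exact hred q hq hm hneg
      · rw [hrw, inv_mul_cancel_left, ← ha]; exact neg_self cs hρr
    push Not at hρa
    obtain ⟨z, hxz, hyz, hB', hzu⟩ := third hst hsu htu hB hxy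
    have hdis : ∀ w, neg cs ρ w → ¬ neg cs (cs.simple z) w := fun w h1 h2 =>
      L1 cs H hxy hxz hyz hρr hρm (hρa x) (hρa y) h1 h2
    by_cases hf1 : f = 1
    · have erρ : r = ρ := by rw [erf, hf1]; group
      rw [erρ]
      rcases hB z with rfl | rfl | rfl
      · exact Or.inr (Or.inl hdis)
      · exact Or.inr (Or.inr hdis)
      · exfalso
        apply hred r hr _ hneg
        rw [erρ]
        rcases hzu rfl with ⟨rfl, rfl⟩ | ⟨rfl, rfl⟩
        · exact hρm
        · rw [par_comm]; exact hρm
    · obtain ⟨z', hz'⟩ := cs.exists_rightDescent_of_ne_one hf1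
      unfold CoxeterSystem.IsRightDescent at hz'
      have key : ∀ a, cs.simple a ∈ par cs x y → ¬ cs.length (f * cs.simple a) < cs.length f := by
        intro a ha hl
        apply hvr _ (rs cs a) ha
        rw [flip cs (rs cs a)]
        unfold neg
        rw [inv_mul_cancel_right]; exact hl
      have hzz : z' = z := by
        rcases hB' z' with rfl | rfl | h
        · exact absurd hz' (key _ (par_l cs _ _))
        · exact absurd hz' (key _ (par_r cs _ _))
        · exact h
      subst hzz
      have hr' : cs.IsReflection (f * cs.simple z' * f⁻¹) := (rs cs z').conj f
      have hn' : neg cs (f * cs.simple z' * f⁻¹) f := by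
        unfold neg
        rw [inv_mul_cancel_right]; exact hz'
      have hsub : ∀ w, neg cs r w → neg cs (f * cs.simple z' * f⁻¹) w := by
        intro w hw
        have h1 := hdis _ ((hrw w).1 hw)
        have h2 := neg_mul cs hr' f (f⁻¹ * w)
        have e : f⁻¹ * (f * cs.simple z' * f⁻¹) * f = cs.simple z' := by group
        rw [e, mul_inv_cancel_left] at h2
        tauto
      rcases ih f (by omega) hfred _ hr' hn' with h | h | h
      · exact Or.inl fun w hw => h w (hsub w hw)
      · exact Or.inr (Or.inl fun w hw => h w (hsub w hw))
      · exact Or.inr (Or.inr fun w hw => h w (hsub w hw))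

theorem refl_pos {r : W} (hr : cs.IsReflection r) : ∃ z x, r = z * cs.simple x * z⁻¹ ∧
    ¬ neg cs r z := by
  obtain ⟨z, x, e⟩ := id hr
  by_cases h : neg cs r z
  · refine ⟨z * cs.simple x, x, by rw [e]; simp [mul_assoc], ?_⟩
    have e2 : z * cs.simple x = r * z := by rw [e]; group
    rw [e2, neg_self_mul cs hr]; exact not_not.2 h
  · exact ⟨z, x, e, h⟩

theorem connect {r : W} (hr : cs.IsReflection r) (p : W → Prop)
    (hp : ∀ w i, neg cs r w → neg cs r (w * cs.simple i) → p w → p (w * cs.simple i))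
    {w w' : W} (hw : neg cs r w) (hw' : neg cs r w') (h : p w) : p w' := by
  obtain ⟨z, x, e, hz⟩ := refl_pos cs hr
  have hrw : ∀ w, neg cs r w ↔ neg cs (cs.simple x) (z⁻¹ * w) := by
    intro w
    rw [neg_trans cs hr z w hz]
    have : z⁻¹ * r * z = cs.simple x := by rw [e]; group
    rw [this]
  have main : ∀ n, ∀ w, cs.length (z⁻¹ * w) ≤ n → neg cs r w → (p w ↔ p (z * cs.simple x)) := by
    intro n
    induction n with
    | zero =>
      intro w hl hn
      rw [hrw] at hn; unfold neg at hn; omega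
    | succ n ih =>
      intro w hl hn
      by_cases h1 : cs.simple x * (z⁻¹ * w) = 1
      · have : w = z * cs.simple x := by
          rw [← mul_assoc, mul_eq_one_iff_inv_eq] at h1
          rw [← h1]; simp
        rw [this]
      obtain ⟨y, hy⟩ := cs.exists_rightDescent_of_ne_one h1
      unfold CoxeterSystem.IsRightDescent at hy
      have hn0 := (hrw w).1 hn
      unfold neg at hn0
      have a1 := cs.length_mul_simple (z⁻¹ * w) y
      have a2 := cs.length_simple_mul (z⁻¹ * w * cs.simple y) x
      rw [mul_assoc (cs.simple x)] at hy
      have hn1 : neg cs r (w * cs.simple y) := by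
        rw [hrw]; unfold neg; rw [← mul_assoc z⁻¹]; omega
      rw [← ih (w * cs.simple y) (by rw [← mul_assoc]; omega) hn1]
      constructor
      · exact hp w y hn hn1
      · intro h3
        have := hp _ y hn1 (by rwa [cs.simple_mul_simple_cancel_right]) h3
        rwa [cs.simple_mul_simple_cancel_right] at this
  exact (main _ w' le_rfl hw').2 ((main _ w le_rfl hw).1 h)

theorem step1_aux {s t : B} {r r₁ r₂ w0 c : W} (hr : cs.IsReflection r)
    (hr₁ : cs.IsReflection r₁) (hr₂ : cs.IsReflection r₂) (hm₁ : r₁ ∈ par cs s t)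
    (hm₂ : r₂ ∈ par cs s t) (h₁p : ∃ w, neg cs r w ∧ neg cs r₁ w)
    (h₁n : ∃ w, neg cs r w ∧ ¬ neg cs r₁ w)
    (h₂p : ∃ w, neg cs r w ∧ neg cs r₂ w) (h₂n : ∃ w, neg cs r w ∧ ¬ neg cs r₂ w)
    (hc : c ∈ par cs s t) (hw0 : neg cs r w0) (hred : red cs s t (c⁻¹ * w0))
    (hno : ∀ w, neg cs r w → ¬ neg cs (cs.simple t) (c⁻¹ * w))
    (hcon : ∀ c ∈ par cs s t, (∃ w, neg cs r w ∧ red cs s t (c⁻¹ * w)) →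
      (∀ w, neg cs r w → ¬ neg cs (cs.simple s) (c⁻¹ * w)) ∨
      (∀ w, neg cs r w → ¬ neg cs (cs.simple t) (c⁻¹ * w))) : r₁ = r₂ := by
  have hcs : c * cs.simple s ∈ par cs s t := mul_mem hc (par_l cs s t)
  have ecs : ∀ w, (c * cs.simple s)⁻¹ * w = cs.simple s * (c⁻¹ * w) := by
    intro w; rw [mul_inv_rev, cs.inv_simple, mul_assoc]
  have all : ∀ w, neg cs r w → red cs s t (c⁻¹ * w) ∨ red cs s t ((c * cs.simple s)⁻¹ * w) := by
    by_cases hex : ∃ w, neg cs r w ∧ red cs s t ((c * cs.simple s)⁻¹ * w)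
    · rcases hcon _ hcs hex with h | h
      · exfalso
        apply h w0 hw0
        rw [ecs, ns]
        exact hred _ (rs cs s) (par_l cs s t)
      · intro w hw
        by_cases h2 : neg cs (cs.simple s) (c⁻¹ * w)
        · right
          refine red_of cs ?_ (h w hw)
          rw [ecs, ns]; exact not_not.2 h2
        · exact Or.inl (red_of cs h2 (hno w hw))
    · intro w hw
      left
      refine connect cs hr (fun w => red cs s t (c⁻¹ * w)) ?_ hw0 hw hred
      intro w y h1 h2 h3
      by_contra h4
      have h5 : neg cs (cs.simple s) (c⁻¹ * (w * cs.simple y)) := by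
        by_contra h6
        exact h4 (red_of cs h6 (hno _ h2))
      rw [← mul_assoc] at h5
      have e := neg_adj cs (rs cs s) _ y h5 (h3 _ (rs cs s) (par_l cs s t))
      apply hex
      refine ⟨_, h2, ?_⟩
      have e2 : (c * cs.simple s)⁻¹ * (w * cs.simple y) = c⁻¹ * w := by
        rw [ecs, e]; simp [mul_assoc]
      rw [e2]; exact h3
  have key : ∀ q, cs.IsReflection q → q ∈ par cs s t → (∃ w, neg cs r w ∧ neg cs q w) →
      (∃ w, neg cs r w ∧ ¬ neg cs q w) → q = c * cs.simple s * c⁻¹ := by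
    rintro q hq hm ⟨w, h1, h2⟩ ⟨w', h3, h4⟩
    have A : ∀ w, neg cs r w → (neg cs q w ↔ neg cs q c) ∨
        (neg cs q w ↔ neg cs q (c * cs.simple s)) := by
      intro w hw
      rcases all w hw with h | h
      · left; have := neg_par cs h hc hq hm
        rwa [mul_inv_cancel_left] at this
      · right; have := neg_par cs h hcs hq hm
        rwa [mul_inv_cancel_left] at this
    have B1 := A w h1
    have B2 := A w' h3
    by_cases h5 : neg cs q c
    · have h6 : ¬ neg cs q (c * cs.simple s) := by tauto
      have := neg_adj cs hq (c * cs.simple s) s (by rwa [cs.simple_mul_simple_cancel_right]) h6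
      rw [this]; simp [mul_assoc]
    · have h6 : neg cs q (c * cs.simple s) := by tauto
      exact neg_adj cs hq c s h6 h5
  rw [key r₁ hr₁ hm₁ h₁p h₁n, key r₂ hr₂ hm₂ h₂p h₂n]

theorem step1 {s t : B} {r r₁ r₂ : W} (hr : cs.IsReflection r)
    (hr₁ : cs.IsReflection r₁) (hr₂ : cs.IsReflection r₂) (hm₁ : r₁ ∈ par cs s t)
    (hm₂ : r₂ ∈ par cs s t) (hne : r₁ ≠ r₂) (h₁p : ∃ w, neg cs r w ∧ neg cs r₁ w)
    (h₁n : ∃ w, neg cs r w ∧ ¬ neg cs r₁ w)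
    (h₂p : ∃ w, neg cs r w ∧ neg cs r₂ w) (h₂n : ∃ w, neg cs r w ∧ ¬ neg cs r₂ w) :
    ∃ c ∈ par cs s t, (∃ w, neg cs r w ∧ red cs s t (c⁻¹ * w)) ∧
      (∃ w, neg cs r w ∧ neg cs (cs.simple s) (c⁻¹ * w)) ∧
      (∃ w, neg cs r w ∧ neg cs (cs.simple t) (c⁻¹ * w)) := by
  by_contra hcon0
  have hcon : ∀ c ∈ par cs s t, (∃ w, neg cs r w ∧ red cs s t (c⁻¹ * w)) →
      (∀ w, neg cs r w → ¬ neg cs (cs.simple s) (c⁻¹ * w)) ∨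
      (∀ w, neg cs r w → ¬ neg cs (cs.simple t) (c⁻¹ * w)) := by
    intro c hc h1
    by_contra h2
    push Not at h2
    exact hcon0 ⟨c, hc, h1, h2.1, h2.2⟩
  obtain ⟨w0, hw0, -⟩ := id h₁p
  obtain ⟨c, hc, hred, -⟩ := exists_min cs s t w0
  rcases hcon c hc ⟨w0, hw0, hred⟩ with h | h
  · rw [par_comm] at hm₁ hm₂ hc
    refine hne (step1_aux cs hr hr₁ hr₂ hm₁ hm₂ h₁p h₁n h₂p h₂n hc hw0
      (red_symm cs hred) h ?_)
    intro c hc h1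
    rw [par_comm] at hc
    obtain ⟨w, h2, h3⟩ := h1
    exact (hcon c hc ⟨w, h2, red_symm cs h3⟩).symm
  · exact hne (step1_aux cs hr hr₁ hr₂ hm₁ hm₂ h₁p h₁n h₂p h₂n hc hw0
      hred h hcon)

end Part4

end Cox

/-! ### Part 5: the induction -/

namespace Cox

section Part5

variable {B W : Type*} [Group W] {M : CoxeterMatrix B} (cs : CoxeterSystem M W)

theorem alt_facts {G : Type*} [Group G] {x y : G} (hx : x * x = 1) (hy : y * y = 1) (h1 : x ≠ 1)
    (h2 : y ≠ 1) (h3 : x * y ≠ 1) (h4 : (x * y) ^ 2 ≠ 1) :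
    y * x ≠ 1 ∧ x * (y * x) ≠ 1 ∧ y * (x * y) ≠ 1 ∧ x * (y * (x * y)) ≠ 1 ∧
    y * (x * (y * x)) ≠ 1 ∧ x * (y * (x * (y * x))) ≠ 1 ∧ y * (x * (y * (x * y))) ≠ 1 := by
  have hxl : ∀ z, x * (x * z) = z := fun z => by rw [← mul_assoc, hx, one_mul]
  have hyl : ∀ z, y * (y * z) = z := fun z => by rw [← mul_assoc, hy, one_mul]
  have cx : ∀ z, x * (z * x) = 1 → z = 1 := fun z h => by
    have : x * (x * (z * x)) * x = 1 := by rw [h, mul_one, hx]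
    rwa [hxl, mul_assoc, hx, mul_one] at this
  have cy : ∀ z, y * (z * y) = 1 → z = 1 := fun z h => by
    have : y * (y * (z * y)) * y = 1 := by rw [h, mul_one, hy]
    rwa [hyl, mul_assoc, hy, mul_one] at this
  have a1 : y * x ≠ 1 := fun h => h3 (by
    apply cy; rw [mul_assoc, hy, mul_one]; exact h)
  have a2 : x * (y * x) ≠ 1 := fun h => h2 (cx _ h)
  have a3 : y * (x * y) ≠ 1 := fun h => h1 (cy _ h)
  have a4 : x * (y * (x * y)) ≠ 1 := fun h => h4 (by rw [pow_two, mul_assoc]; exact h)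
  refine ⟨a1, a2, a3, a4, ?_, ?_, ?_⟩
  · intro h
    apply a4; apply cy
    simp only [mul_assoc, hy, mul_one]; exact h
  · intro h; apply a3; apply cx; simpa only [mul_assoc] using h
  · intro h; apply a2; apply cy; simpa only [mul_assoc] using h

theorem prefix_y (H : OF cs) {s t u : B} (hst : s ≠ t) (hsu : s ≠ u) (htu : t ≠ u) {w : W}
    (h1 : neg cs (cs.simple s) w) (h2 : neg cs (cs.simple u) w) :
    ∃ p ∈ par cs s t, red cs s t (p⁻¹ * (cs.simple u * w)) ∧
      (p = cs.simple s ∨ (p = cs.simple s * cs.simple t ∧ M.M u s = 3)) := by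
  obtain ⟨y, hy⟩ : ∃ y, y = cs.simple u * w := ⟨_, rfl⟩
  have b1 : neg cs (cs.simple s) y := by rw [hy]; exact F5a cs H hsu.symm h2 h1
  have b2 : neg cs (cs.simple u) (cs.simple s * y) := by rw [hy]; exact F5b cs H hsu.symm h2 h1
  have b3 : ¬ neg cs (cs.simple t) y := by
    rw [hy]; exact lemA' cs H hsu.symm htu.symm hst h2 h1
  obtain ⟨p, hp, hred, -⟩ := exists_min cs s t y
  rw [← hy]
  refine ⟨p, hp, hred, ?_⟩
  have ey : y = p * (p⁻¹ * y) := by group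
  have hm := mul_mem (par_l cs s t) hp
  have b4 := b2
  rw [ey, ← mul_assoc] at b4
  have e0 : p = cs.simple s * (cs.simple s * p) := by simp
  rcases pre_u cs H hst hsu htu hm hred b4 with h | h | h
  · left; rw [e0, h, mul_one]
  · exfalso
    have : p = 1 := by rw [e0, h]; simp
    rw [ey, neg_par cs hred hp (rs cs s) (par_l cs s t), this] at b1
    exact neg_one cs _ b1
  · right
    refine ⟨by rw [e0, h], ?_⟩
    by_contra hM
    have b5 : neg cs (cs.simple s) (cs.simple u * (cs.simple s * y)) := by
      rw [hy]; exact F5c cs H hsu.symm hM h2 h1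
    have b6 : neg cs (cs.simple t) (cs.simple s * y) := by
      rw [ey, ← mul_assoc, neg_par cs hred hm (rs cs t) (par_r cs s t), h]
      exact neg_self cs (rs cs t)
    exact lemA' cs H htu.symm hsu.symm hst.symm b2 b6 b5

theorem neg_two {q : W} (hq : cs.IsReflection q) {s t : B}
    (h : neg cs q (cs.simple s * cs.simple t)) :
    q = cs.simple s ∨ q = cs.simple s * cs.simple t * cs.simple s := by
  rw [neg_mul cs hq, neg_simple cs hq, neg_simple cs (isRefl_conj' cs hq _)] at h
  by_cases e : q = cs.simple s
  · exact Or.inl e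
  · right
    have : (cs.simple s)⁻¹ * q * cs.simple s = cs.simple t := by tauto
    rw [← this]; simp [mul_assoc]

/-- The conclusion proved by induction. -/
def Theta (s t u : B) (n : ℕ) : Prop := ∀ r r₁ r₂ : W, cs.IsReflection r →
  cs.IsReflection r₁ → cs.IsReflection r₂ → r₁ ∈ par cs s t → r₂ ∈ par cs s t → r₁ ≠ r₂ →
  (∀ v ∈ par cs s t, ¬ neg cs r v) →
  (∃ w, neg cs r w ∧ ∃ v ∈ par cs s t, cs.length (v * w) ≤ n) →
  (∃ w, neg cs r w ∧ neg cs r₁ w) → (∃ w, neg cs r w ∧ ¬ neg cs r₁ w) →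
  (∃ w, neg cs r w ∧ neg cs r₂ w) → (∃ w, neg cs r w ∧ ¬ neg cs r₂ w) →
  ∃ c ∈ par cs s t, r = c * cs.simple u * c⁻¹

theorem theta_core (H : OF cs) {s t u : B} (hst : s ≠ t) (hsu : s ≠ u) (htu : t ≠ u)
    (hB : ∀ i : B, i = s ∨ i = t ∨ i = u)
    (hhyp : ¬ (M.M s t = 3 ∧ M.M u s = 3 ∧ M.M u t = 3)) (n : ℕ)
    (ih : ∀ m, m < n → Theta cs s t u m) {r : W} (hr : cs.IsReflection r)
    (hn : ∃ w, neg cs r w ∧ ∃ v ∈ par cs s t, cs.length (v * w) ≤ n)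
    (h0 : ∃ w, neg cs r w ∧ red cs s t w) (h1 : ∃ w, neg cs r w ∧ neg cs (cs.simple s) w)
    (h2 : ∃ w, neg cs r w ∧ neg cs (cs.simple t) w) : r = cs.simple u := by
  by_contra hru
  obtain ⟨w0, hw0, hred0⟩ := h0
  obtain ⟨w1, hw1, hs1⟩ := h1
  obtain ⟨w2, hw2, ht2⟩ := h2
  have hsub : ∀ w, neg cs r w → neg cs (cs.simple u) w := by
    rcases lemK cs H hst hsu htu hB _ w0 le_rfl hred0 r hr hw0 with h | h | h
    · exact h
    · exact absurd hs1 (h _ hw1)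
    · exact absurd ht2 (h _ hw2)
  have hu : ¬ neg cs r (cs.simple u) := by rwa [neg_simple cs hr]
  obtain ⟨q, hq⟩ : ∃ q, q = (cs.simple u)⁻¹ * r * cs.simple u := ⟨_, rfl⟩
  have hqr : cs.IsReflection q := by rw [hq]; exact isRefl_conj' cs hr _
  have htr : ∀ w, neg cs r w → neg cs q (cs.simple u * w) := by
    intro w hw
    rw [neg_trans cs hr _ w hu, ← hq, cs.inv_simple] at hw
    exact hw
  obtain ⟨ps, hps, hreds, hps'⟩ := prefix_y cs H hst hsu htu hs1 (hsub _ hw1)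
  obtain ⟨pt, hpt, hredt, hpt'⟩ := prefix_y cs H hst.symm htu hsu ht2 (hsub _ hw2)
  rw [par_comm] at hpt
  replace hredt := red_symm cs hredt
  have hqs := htr _ hw1
  have hqt := htr _ hw2
  have nus : ¬ neg cs (cs.simple u) (cs.simple u * w1) := by
    rw [ns]; exact not_not.2 (hsub _ hw1)
  have ss : neg cs (cs.simple s) (cs.simple u * w1) := F5a cs H hsu.symm (hsub _ hw1) hs1
  have tt : neg cs (cs.simple t) (cs.simple u * w2) := F5a cs H htu.symm (hsub _ hw2) ht2
  have st' : ¬ neg cs (cs.simple t) (cs.simple u * w1) :=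
    lemA' cs H hsu.symm htu.symm hst (hsub _ hw1) hs1
  have ts' : ¬ neg cs (cs.simple s) (cs.simple u * w2) :=
    lemA' cs H htu.symm hsu.symm hst.symm (hsub _ hw2) ht2
  obtain ⟨y1, hy1⟩ : ∃ y, y = cs.simple u * w1 := ⟨_, rfl⟩
  obtain ⟨y2, hy2⟩ : ∃ y, y = cs.simple u * w2 := ⟨_, rfl⟩
  rw [← hy1] at hreds hqs nus ss st'
  rw [← hy2] at hredt hqt tt ts'
  have ey1 : y1 = ps * (ps⁻¹ * y1) := by group
  have ey2 : y2 = pt * (pt⁻¹ * y2) := by group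
  have xs : cs.simple s * cs.simple s = 1 := by simp
  have xt : cs.simple t * cs.simple t = 1 := by simp
  have xsl : ∀ z, cs.simple s * (cs.simple s * z) = z := by simp
  have xtl : ∀ z, cs.simple t * (cs.simple t * z) = z := by simp
  have f1 : ∀ i, cs.simple i ≠ 1 := by
    intro i e
    have := cs.length_simple i
    rw [e, cs.length_one] at this; omega
  have f2 : cs.simple s * cs.simple t ≠ 1 := (H s t hst).1
  obtain ⟨g1, g2, g3, g4, g5, g6, g7⟩ := alt_facts xs xt (f1 s) (f1 t) f2 (H s t hst).2.1
  have fs := f1 s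
  have ft := f1 t
  have h6 : cs.simple s * (cs.simple t * (cs.simple s * (cs.simple t *
      (cs.simple s * cs.simple t)))) = 1 → M.M s t = 3 := by
    intro e
    apply (H s t hst).2.2
    rw [pow_succ, pow_two]; simpa only [mul_assoc] using e
  by_cases hA : ∃ v ∈ par cs s t, neg cs q v
  · obtain ⟨v, hv, hqv⟩ := hA
    have hqm := N_par cs v hv q hqr hqv
    rw [ey1, neg_par cs hreds hps hqr hqm] at hqs
    rw [ey2, neg_par cs hredt hpt hqr hqm] at hqt
    have c1 : q = cs.simple s ∨ (q = cs.simple s * cs.simple t * cs.simple s ∧ M.M u s = 3) := by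
      rcases hps' with h | ⟨h, hM⟩
      · rw [h, neg_simple cs hqr] at hqs; exact Or.inl hqs
      · rw [h] at hqs
        rcases neg_two cs hqr hqs with h | h
        · exact Or.inl h
        · exact Or.inr ⟨h, hM⟩
    have c2 : q = cs.simple t ∨ (q = cs.simple t * cs.simple s * cs.simple t ∧ M.M u t = 3) := by
      rcases hpt' with h | ⟨h, hM⟩
      · rw [h, neg_simple cs hqr] at hqt; exact Or.inl hqt
      · rw [h] at hqt
        rcases neg_two cs hqr hqt with h | h
        · exact Or.inl h
        · exact Or.inr ⟨h, hM⟩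
    rcases c1 with c1 | ⟨c1, m1⟩ <;> rcases c2 with c2 | ⟨c2, m2⟩ <;>
      have e := mul_inv_eq_one.2 (c1.symm.trans c2) <;>
      simp only [mul_inv_rev, cs.inv_simple, mul_assoc] at e
    · exact f2 e
    · exact g4 e
    · exact g4 e
    · exact hhyp ⟨h6 e, m1, m2⟩
  · push Not at hA
    obtain ⟨wn, hwn, vn, hvn, hln⟩ := hn
    have hlow : ∃ m, m < n ∧ ∃ w, neg cs q w ∧ ∃ v ∈ par cs s t, cs.length (v * w) ≤ m := by
      obtain ⟨p, hp, hpr, -⟩ := exists_min cs s t wn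
      have ew : wn = p * (p⁻¹ * wn) := by group
      have hl : cs.length (p⁻¹ * wn) ≤ n := by
        refine le_trans (red_len cs hpr (mul_mem hvn hp)) ?_
        rw [mul_assoc, mul_inv_cancel_left]; exact hln
      have huw := hsub wn hwn
      have huw2 := huw
      rw [ew] at huw2
      have gen : ∀ a, cs.simple a ∈ par cs s t → a ≠ u → p = cs.simple a → 
          ∃ m, m < n ∧ ∃ w, neg cs q w ∧ ∃ v ∈ par cs s t, cs.length (v * w) ≤ m := by
        intro a ha hau e
        have n1 : neg cs (cs.simple a) wn := by
          rw [ew, neg_par cs hpr hp (rs cs a) ha, e]; exact neg_self cs (rs cs a)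
        have n2 := F5a cs H hau.symm huw n1
        have n3 : cs.length wn ≤ cs.length (p⁻¹ * wn) + 1 := by
          rw [e, cs.inv_simple]
          have := cs.length_simple_mul wn a
          omega
        unfold neg at n2 huw
        exact ⟨_, by omega, _, htr wn hwn, _, ha, le_rfl⟩
      rcases pre_u cs H hst hsu htu hp hpr huw2 with e | e | e
      · rw [e] at hl
        unfold neg at huw
        simp only [inv_one, one_mul] at hl
        exact ⟨cs.length (cs.simple u * wn), by omega, _, htr wn hwn, 1, one_mem _, by simp⟩
      · exact gen s (par_l cs s t) hsu e
      · exact gen t (par_r cs s t) htu e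
    obtain ⟨m, hm, hlow⟩ := hlow
    obtain ⟨c, hc, ec⟩ := ih m hm q (cs.simple s) (cs.simple t) hqr (rs cs s) (rs cs t)
      (par_l cs s t) (par_r cs s t) (simple_ne cs H hst) hA hlow ⟨y1, hqs, ss⟩ ⟨y2, hqt, ts'⟩
      ⟨y2, hqt, tt⟩ ⟨y1, hqs, st'⟩
    have hqc : ∀ w, neg cs q w → neg cs (cs.simple u) (c⁻¹ * w) := by
      intro w hw
      rw [neg_trans cs hqr c w (hA c hc)] at hw
      have : c⁻¹ * q * c = cs.simple u := by rw [ec]; group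
      rwa [this] at hw
    have k1 := hqc _ hqs
    have k2 := hqc _ hqt
    rw [ey1, ← mul_assoc] at k1
    rw [ey2, ← mul_assoc] at k2
    have i1 := pre_u cs H hst hsu htu (mul_mem (inv_mem hc) hps) hreds k1
    have i2 := pre_u cs H hst hsu htu (mul_mem (inv_mem hc) hpt) hredt k2
    have cc : ∀ p x : W, c⁻¹ * p = x → c = p * x⁻¹ := by
      rintro p x rfl; group
    have hc1 : c ≠ 1 := by
      rintro rfl
      apply nus
      rw [ec] at hqs; simpa using hqs
    rcases hps' with e1 | ⟨e1, m1⟩ <;> rcases hpt' with e2 | ⟨e2, m2⟩ <;>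
    rcases i1 with i1 | i1 | i1 <;> rcases i2 with i2 | i2 | i2 <;>
    ( have j1 := cc _ _ i1
      have j2 := cc _ _ i2
      have e := mul_inv_eq_one.2 (j1.symm.trans j2)
      rw [e1] at j1 e
      rw [e2] at e
      simp only [mul_inv_rev, cs.inv_simple, mul_assoc, inv_one, mul_one, one_mul, inv_inv, xs, xt,
        xsl, xtl] at e j1
      first
        | contradiction
        | exact hhyp ⟨h6 e, m1, m2⟩ )

theorem theta (H : OF cs) {s t u : B} (hst : s ≠ t) (hsu : s ≠ u) (htu : t ≠ u)
    (hB : ∀ i : B, i = s ∨ i = t ∨ i = u)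
    (hhyp : ¬ (M.M s t = 3 ∧ M.M u s = 3 ∧ M.M u t = 3)) (n : ℕ) : Theta cs s t u n := by
  induction n using Nat.strong_induction_on with
  | _ n ih =>
    intro r r₁ r₂ hr hr₁ hr₂ hm₁ hm₂ hne hout hn h₁p h₁n h₂p h₂n
    obtain ⟨c, hc, ⟨w0, a0, b0⟩, ⟨w1, a1, b1⟩, ⟨w2, a2, b2⟩⟩ :=
      step1 cs hr hr₁ hr₂ hm₁ hm₂ hne h₁p h₁n h₂p h₂n
    have htr : ∀ w, neg cs r w → neg cs (c⁻¹ * r * c) (c⁻¹ * w) := by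
      intro w hw
      rwa [neg_trans cs hr c w (hout c hc)] at hw
    obtain ⟨w, hw, v, hv, hl⟩ := hn
    have := theta_core cs H hst hsu htu hB hhyp n ih (isRefl_conj' cs hr c)
      ⟨_, htr w hw, v * c, mul_mem hv hc, by rwa [mul_assoc, mul_inv_cancel_left]⟩
      ⟨_, htr w0 a0, b0⟩ ⟨_, htr w1 a1, b1⟩ ⟨_, htr w2 a2, b2⟩
    exact ⟨c, hc, by rw [← this]; group⟩

end Part5

end Cox

/-! ### Part 6: assembly -/

namespace Cox

section Part6

variable {B W : Type*} [Group W] {M : CoxeterMatrix B} (cs : CoxeterSystem M W)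

theorem fin_pow {r q : W} (hr : cs.IsReflection r) (hq : cs.IsReflection q)
    (h : IsOfFinOrder (r * q)) : ∃ m : ℕ, (r * q) ^ m = q * r := by
  obtain ⟨n, hn, e⟩ := isOfFinOrder_iff_pow_eq_one.1 h
  obtain ⟨m, rfl⟩ : ∃ m, n = m + 1 := ⟨n - 1, by omega⟩
  refine ⟨m, ?_⟩
  rw [pow_succ] at e
  rw [eq_inv_of_mul_eq_one_left e, mul_inv_rev, hr.inv, hq.inv]

theorem cross_pos {r q : W} (hr : cs.IsReflection r) (hq : cs.IsReflection q)
    (h : IsOfFinOrder (r * q)) : ∃ w, neg cs r w ∧ neg cs q w := by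
  by_contra hno
  push Not at hno
  obtain ⟨m, hm⟩ := fin_pow cs hr hq h
  have step : ∀ w, neg cs r w → neg cs r (r * q * w) := by
    intro w hw
    rw [mul_assoc, neg_self_mul cs hr]
    intro h1
    exact hno _ h1 ((neg_self_mul cs hq w).2 (hno w hw))
  have all : ∀ k : ℕ, ∀ w, neg cs r w → neg cs r ((r * q) ^ k * w) := by
    intro k
    induction k with
    | zero => intro w hw; simpa using hw
    | succ k ih =>
      intro w hw
      rw [pow_succ', mul_assoc]; exact step _ (ih w hw)
  have h1 := all m r (neg_self cs hr)
  rw [hm, mul_assoc, hr.mul_self, mul_one] at h1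
  exact hno _ h1 (neg_self cs hq)

theorem cross_neg {r q : W} (hr : cs.IsReflection r) (hq : cs.IsReflection q) (hne : r ≠ q)
    (h : IsOfFinOrder (q * r)) : ∃ w, neg cs r w ∧ ¬ neg cs q w := by
  by_contra hno
  push Not at hno
  obtain ⟨m, hm⟩ := fin_pow cs hq hr h
  have step : ∀ w, ¬ neg cs q w → ¬ neg cs q (q * r * w) := by
    intro w hw
    rw [mul_assoc, neg_self_mul cs hq, not_not]
    apply hno
    rw [neg_self_mul cs hr]
    exact fun h1 => hw (hno w h1)
  have all : ∀ k : ℕ, ∀ w, ¬ neg cs q w → ¬ neg cs q ((q * r) ^ k * w) := by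
    intro k
    induction k with
    | zero => intro w hw; simpa using hw
    | succ k ih =>
      intro w hw
      rw [pow_succ', mul_assoc]; exact step _ (ih w hw)
  have conv : ∀ w, neg cs q w → neg cs r w := by
    intro w hw
    by_contra hrw
    have h1 := all m (q * w) (by rw [neg_self_mul cs hq]; exact not_not.2 hw)
    rw [hm, mul_assoc, ← mul_assoc q q, hq.mul_self, one_mul] at h1
    exact h1 (hno _ ((neg_self_mul cs hr w).2 hrw))
  obtain ⟨z, x, e, hz⟩ := refl_pos cs hr
  have ez : z * cs.simple x = r * z := by rw [e]; group
  have h1 : neg cs q (z * cs.simple x) := by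
    apply hno; rw [ez]; exact (neg_self_mul cs hr z).2 hz
  exact hne (e.trans (neg_adj cs hq z x h1 (fun h2 => hz (conv z h2))).symm)

theorem fin_conj {g : W} (h : IsOfFinOrder g) (c : W) : IsOfFinOrder (c⁻¹ * g * c) := by
  have := (MulAut.conj c⁻¹).toMonoidHom.isOfFinOrder h
  simpa using this

theorem fin_conj2 {a b : W} (h : IsOfFinOrder (a * b)) (c : W) :
    IsOfFinOrder (c⁻¹ * a * c * (c⁻¹ * b * c)) := by
  have := fin_conj h c
  have e : c⁻¹ * a * c * (c⁻¹ * b * c) = c⁻¹ * (a * b) * c := by group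
  rwa [e]

theorem fin_swap {a b : W} (ha : cs.IsReflection a) (hb : cs.IsReflection b)
    (h : IsOfFinOrder (a * b)) : IsOfFinOrder (b * a) := by
  have := h.inv
  rwa [mul_inv_rev, ha.inv, hb.inv] at this

theorem root_form {α : Set W} {r : W} (h : IsRootPair cs α r) : cs.IsReflection r ∧
    ∀ c, (∀ w, c * w ∈ α ↔ neg cs (c⁻¹ * r * c) w) ∨ (∀ w, c * w ∈ α ↔ ¬ neg cs (c⁻¹ * r * c) w) := by
  obtain ⟨v, s, rfl, rfl⟩ := h
  refine ⟨(rs cs s).conj v, fun c => ?_⟩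
  have h1 : ∀ x, x ∈ (v * ·) '' simpleRoot cs s ↔ ¬ neg cs (cs.simple s) (v⁻¹ * x) := by
    intro x
    have h2 : ∀ y, y ∈ simpleRoot cs s ↔ ¬ neg cs (cs.simple s) y := by
      intro y
      unfold simpleRoot neg
      have := cs.length_simple_mul y s
      simp only [Set.mem_setOf_eq]; omega
    rw [← h2]
    constructor
    · rintro ⟨y, hy, rfl⟩; simpa using hy
    · intro hx; exact ⟨_, hx, by simp⟩
  have h3 : ∀ w, neg cs (cs.simple s) (v⁻¹ * (c * w)) ↔ (neg cs (cs.simple s) (v⁻¹ * c) ↔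
      ¬ neg cs (c⁻¹ * (v * cs.simple s * v⁻¹) * c) w) := by
    intro w
    rw [← mul_assoc, neg_mul cs (rs cs s)]
    have e : (v⁻¹ * c)⁻¹ * cs.simple s * (v⁻¹ * c) = c⁻¹ * (v * cs.simple s * v⁻¹) * c := by group
    rw [e]
  by_cases h4 : neg cs (cs.simple s) (v⁻¹ * c)
  · left; intro w; rw [h1, h3]; tauto
  · right; intro w; rw [h1, h3]; tauto

theorem res2_stab {r : W} {σ : Set W} (h : σ ∈ res2 cs r) {x : W} (hx : x ∈ σ) : r * x ∈ σ := by
  have := h.2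
  rw [← this]; exact ⟨x, hx, rfl⟩

theorem sign_pos (H : OF cs) {a b c : B} (hab : a ≠ b) (hac : a ≠ c) (hbc : b ≠ c)
    {α : Set W} {r₁ r₂ r₃ C : W} (hα : IsRootPair cs α r₁)
    (e1 : C⁻¹ * r₁ * C = cs.simple a) (e2 : C⁻¹ * r₂ * C = cs.simple b)
    (e3 : C⁻¹ * r₃ * C = cs.simple c)
    (hσ : ∃ σ : Set W, σ ∈ res2 cs r₂ ∧ σ ∈ res2 cs r₃ ∧ σ ⊆ α) :
    ∀ w, C * w ∈ α ↔ ¬ neg cs (cs.simple a) w := by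
  have h := (root_form cs hα).2 C
  rw [e1] at h
  rcases h with h | h
  · exfalso
    obtain ⟨σ, s2, s3, hsub⟩ := hσ
    have f2 : r₂ * C = C * cs.simple b := by rw [← e2]; group
    have f3 : r₃ * C = C * cs.simple c := by rw [← e3]; group
    obtain ⟨x, hx⟩ : ∃ x, C * x ∈ σ := by
      obtain ⟨d, s, t, -, -, e⟩ := s2.1
      refine ⟨C⁻¹ * d, ?_⟩
      rw [mul_inv_cancel_left, e]; exact ⟨1, one_mem _, by simp⟩
    have all : ∀ v ∈ par cs b c, C * (v * x) ∈ σ := by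
      apply par_ind
      · simpa using hx
      · rintro v - i (rfl | rfl) hv
        · have := res2_stab cs s2 hv
          rwa [← mul_assoc, f2, mul_assoc, ← mul_assoc _ v] at this
        · have := res2_stab cs s3 hv
          rwa [← mul_assoc, f3, mul_assoc, ← mul_assoc _ v] at this
    obtain ⟨v, hv, hred, -⟩ := exists_min cs b c x
    have n1 : neg cs (cs.simple a) (cs.simple b * (cs.simple c * (v⁻¹ * x))) := by
      rw [← h]
      apply hsub
      have := all (cs.simple b * cs.simple c * v⁻¹)
        (mul_mem (mul_mem (par_l cs b c) (par_r cs b c)) (inv_mem hv))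
      simpa only [mul_assoc] using this
    have n3 : neg cs (cs.simple c) (cs.simple c * (v⁻¹ * x)) := by
      rw [ns]; exact hred _ (rs cs c) (par_r cs b c)
    have n2 : neg cs (cs.simple b) (cs.simple b * (cs.simple c * (v⁻¹ * x))) := by
      rw [ns, neg_par cs hred (par_r cs b c) (rs cs b) (par_l cs b c), neg_simple cs (rs cs b)]
      exact simple_ne cs H hbc
    exact lemA' cs H hab.symm hbc hac n2 n1 (by rwa [cs.simple_mul_simple_cancel_left])
  · exact h

theorem final (H : OF cs) {a b c : B} (hab : a ≠ b) (hac : a ≠ c) (hbc : b ≠ c)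
    (hB : ∀ i : B, i = a ∨ i = b ∨ i = c)
    {α₁ α₂ α₃ : Set W} {r₁ r₂ r₃ C : W}
    (hα₁ : IsRootPair cs α₁ r₁) (hα₂ : IsRootPair cs α₂ r₂) (hα₃ : IsRootPair cs α₃ r₃)
    (e1 : C⁻¹ * r₁ * C = cs.simple a) (e2 : C⁻¹ * r₂ * C = cs.simple b)
    (e3 : C⁻¹ * r₃ * C = cs.simple c)
    (hσ₁ : ∃ σ : Set W, σ ∈ res2 cs r₂ ∧ σ ∈ res2 cs r₃ ∧ σ ⊆ α₁)
    (hσ₂ : ∃ σ : Set W, σ ∈ res2 cs r₁ ∧ σ ∈ res2 cs r₃ ∧ σ ⊆ α₂)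
    (hσ₃ : ∃ σ : Set W, σ ∈ res2 cs r₁ ∧ σ ∈ res2 cs r₂ ∧ σ ⊆ α₃) :
    ∃! c : W, c ∈ α₁ ∩ α₂ ∩ α₃ := by
  have p1 := sign_pos cs H hab hac hbc hα₁ e1 e2 e3 hσ₁
  have p2 := sign_pos cs H hab.symm hbc hac hα₂ e2 e1 e3 hσ₂
  have p3 := sign_pos cs H hac.symm hbc.symm hab hα₃ e3 e1 e2 hσ₃
  refine ⟨C, ⟨⟨?_, ?_⟩, ?_⟩, ?_⟩
  · rw [← mul_one C, p1]; exact neg_one cs _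
  · rw [← mul_one C, p2]; exact neg_one cs _
  · rw [← mul_one C, p3]; exact neg_one cs _
  · rintro y ⟨⟨y1, y2⟩, y3⟩
    have ey : y = C * (C⁻¹ * y) := by group
    rw [ey, p1] at y1
    rw [ey, p2] at y2
    rw [ey, p3] at y3
    by_contra hne
    have h1 : C⁻¹ * y ≠ 1 := by
      intro h; apply hne; rw [ey, h, mul_one]
    obtain ⟨i, hi⟩ := cs.exists_leftDescent_of_ne_one h1
    rcases hB i with rfl | rfl | rfl
    · exact y1 hi
    · exact y2 hi
    · exact y3 hi

theorem main [Fintype B] (hcard : Fintype.card B = 3)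
    (h3 : ∀ s t : B, s ≠ t → 3 ≤ M.M s t)
    (hhyp : ∃ s t : B, s ≠ t ∧ M.M s t ≠ 3)
    (α₁ α₂ α₃ : Set W) (r₁ r₂ r₃ : W)
    (hα₁ : IsRootPair cs α₁ r₁) (hα₂ : IsRootPair cs α₂ r₂) (hα₃ : IsRootPair cs α₃ r₃)
    (hfin13 : IsOfFinOrder (r₁ * r₃)) (hfin23 : IsOfFinOrder (r₂ * r₃))
    (hempty : ¬ ∃ R : Set W, R ∈ res2 cs r₁ ∧ R ∈ res2 cs r₂ ∧ R ∈ res2 cs r₃)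
    (hσ₁ : ∃ σ : Set W, σ ∈ res2 cs r₂ ∧ σ ∈ res2 cs r₃ ∧ σ ⊆ α₁)
    (hσ₂ : ∃ σ : Set W, σ ∈ res2 cs r₁ ∧ σ ∈ res2 cs r₃ ∧ σ ⊆ α₂)
    (hσ₃ : ∃ σ : Set W, σ ∈ res2 cs r₁ ∧ σ ∈ res2 cs r₂ ∧ σ ⊆ α₃) :
    ∃! c : W, c ∈ α₁ ∩ α₂ ∩ α₃ := by
  classical
  have H : OF cs := fun i j hij => order_facts cs h3 hij
  have hne12 : r₁ ≠ r₂ := by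
    rintro rfl
    obtain ⟨σ, a1, a2, -⟩ := hσ₂
    exact hempty ⟨σ, a1, a1, a2⟩
  obtain ⟨R1, F1⟩ := root_form cs hα₁
  obtain ⟨R2, F2⟩ := root_form cs hα₂
  obtain ⟨R3, F3⟩ := root_form cs hα₃
  obtain ⟨σ, m1, m2, hsub⟩ := id hσ₃
  obtain ⟨d, s, t, hst, -, eσ⟩ := id m1.1
  obtain ⟨u, hsu, htu, hB⟩ : ∃ u, s ≠ u ∧ t ≠ u ∧ (∀ i : B, i = s ∨ i = t ∨ i = u) := by
    rw [← Finset.card_univ, Finset.card_eq_three] at hcard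
    obtain ⟨x, y, z, hxy, hxz, hyz, e⟩ := hcard
    have hB : ∀ i : B, i = x ∨ i = y ∨ i = z := by
      intro i
      have := Finset.mem_univ i
      rw [e] at this
      simpa using this
    obtain ⟨u, h1, h2, h3, -⟩ := third hxy hxz hyz hB hst
    exact ⟨u, h1, h2, h3⟩
  have hh : ¬ (M.M s t = 3 ∧ M.M u s = 3 ∧ M.M u t = 3) := by
    rintro ⟨a1, a2, a3⟩
    obtain ⟨x, y, hxy, hm⟩ := hhyp
    have b1 : M.M t s = 3 := by rw [← a1]; exact M.symmetric _ _
    have b2 : M.M s u = 3 := by rw [← a2]; exact M.symmetric _ _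
    have b3 : M.M t u = 3 := by rw [← a3]; exact M.symmetric _ _
    rcases hB x with rfl | rfl | rfl <;> rcases hB y with rfl | rfl | rfl <;>
      first | exact hxy rfl | exact hm (by assumption)
  have mem : ∀ x, x ∈ σ ↔ d⁻¹ * x ∈ par cs s t := by
    intro x
    rw [eσ]
    constructor
    · rintro ⟨y, hy, rfl⟩
      have hy' : y ∈ par cs s t := hy
      simpa using hy'
    · intro hx; exact ⟨_, hx, by simp⟩
  have hd : d ∈ σ := by rw [mem]; simp
  have q1 : d⁻¹ * r₁ * d ∈ par cs s t := by
    rw [mul_assoc, ← mem]; exact res2_stab cs m1 hd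
  have q2 : d⁻¹ * r₂ * d ∈ par cs s t := by
    rw [mul_assoc, ← mem]; exact res2_stab cs m2 hd
  have R1' := isRefl_conj' cs R1 d
  have R2' := isRefl_conj' cs R2 d
  have R3' := isRefl_conj' cs R3 d
  have hout : ∀ v ∈ par cs s t, ¬ neg cs (d⁻¹ * r₃ * d) v := by
    have hin : ∀ v ∈ par cs s t, d * v ∈ α₃ := by
      intro v hv
      apply hsub; rw [mem]; simpa using hv
    rcases F3 d with h | h
    · exact absurd ((h 1).1 (hin 1 (one_mem _))) (neg_one cs _)
    · intro v hv; exact (h v).1 (hin v hv)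
  have n3 : d⁻¹ * r₃ * d ∉ par cs s t := fun h => hout _ h (neg_self cs R3')
  have ne1 : d⁻¹ * r₃ * d ≠ d⁻¹ * r₁ * d := fun h => n3 (h ▸ q1)
  have ne2 : d⁻¹ * r₃ * d ≠ d⁻¹ * r₂ * d := fun h => n3 (h ▸ q2)
  have ne12 : d⁻¹ * r₁ * d ≠ d⁻¹ * r₂ * d := by
    intro h; apply hne12; simpa using h
  have fin13 := fin_conj2 hfin13 d
  have fin23 := fin_conj2 hfin23 d
  obtain ⟨c, hc, ec⟩ := theta cs H hst hsu htu hB hh _ (d⁻¹ * r₃ * d) (d⁻¹ * r₁ * d)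
    (d⁻¹ * r₂ * d) R3' R1' R2' q1 q2 ne12 hout
    ⟨_, neg_self cs R3', 1, one_mem _, le_rfl⟩
    (cross_pos cs R3' R1' (fin_swap cs R1' R3' fin13))
    (cross_neg cs R3' R1' ne1 fin13)
    (cross_pos cs R3' R2' (fin_swap cs R2' R3' fin23))
    (cross_neg cs R3' R2' ne2 fin23)
  have E3 : (d * c)⁻¹ * r₃ * (d * c) = cs.simple u := by
    have : (d * c)⁻¹ * r₃ * (d * c) = c⁻¹ * (d⁻¹ * r₃ * d) * c := by group
    rw [this, ec]; group
  have key : ∀ r, cs.IsReflection r → d⁻¹ * r * d ∈ par cs s t → IsOfFinOrder (r * r₃) →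
      (d * c)⁻¹ * r * (d * c) = cs.simple s ∨ (d * c)⁻¹ * r * (d * c) = cs.simple t := by
    intro r hr hm hf
    have hm' : (d * c)⁻¹ * r * (d * c) ∈ par cs s t := by
      have : (d * c)⁻¹ * r * (d * c) = c⁻¹ * (d⁻¹ * r * d) * c := by group
      rw [this]; exact mul_mem (mul_mem (inv_mem hc) hm) hc
    have hf' := fin_conj2 hf (d * c)
    rw [E3] at hf'
    by_contra hno
    push Not at hno
    obtain ⟨w, w1, w2⟩ := cross_pos cs (isRefl_conj' cs hr _) (rs cs u) hf'
    exact L1 cs H hst hsu htu (isRefl_conj' cs hr _) hm' hno.1 hno.2 w1 w2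
  have inj : (d * c)⁻¹ * r₁ * (d * c) ≠ (d * c)⁻¹ * r₂ * (d * c) := by
    intro h; apply hne12
    exact mul_left_cancel (mul_right_cancel h)
  rcases key r₁ R1 q1 hfin13 with k1 | k1 <;> rcases key r₂ R2 q2 hfin23 with k2 | k2
  · exact absurd (k1.trans k2.symm) inj
  · exact final cs H hst hsu htu hB hα₁ hα₂ hα₃ k1 k2 E3 hσ₁ hσ₂ hσ₃
  · exact final cs H hst.symm htu hsu (fun i => by have := hB i; tauto)
      hα₁ hα₂ hα₃ k1 k2 E3 hσ₁ hσ₂ hσ₃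
  · exact absurd (k1.trans k2.symm) inj

end Part6

end Cox


/-- Let `(W,S)` be a 2-spherical cyclic hyperbolic Coxeter system of
rank 3 (`3 ≤ m_{st} < ∞` for all `s ≠ t`, not all equal to `3`).  Then every
combinatorial triangle `{α₁, α₂, α₃}` of roots contains a unique chamber. -/
theorem stmt18 [Fintype B] (hcard : Fintype.card B = 3)
    (cs : CoxeterSystem M W)
    (h2sph : ∀ s t : B, s ≠ t → 3 ≤ M.M s t ∧ M.M s t ≠ 0)
    (hhyp : ∃ s t : B, s ≠ t ∧ M.M s t ≠ 3)
    (α₁ α₂ α₃ : Set W) (r₁ r₂ r₃ : W)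
    (hα₁ : IsRootPair cs α₁ r₁) (hα₂ : IsRootPair cs α₂ r₂) (hα₃ : IsRootPair cs α₃ r₃)
    (hne12 : α₁ ≠ α₂) (hne13 : α₁ ≠ α₃) (hne23 : α₂ ≠ α₃)
    -- (CT1): `{r₁, r₂, r₃}` is a reflection triangle:
    (hfin12 : IsOfFinOrder (r₁ * r₂)) (hfin13 : IsOfFinOrder (r₁ * r₃))
    (hfin23 : IsOfFinOrder (r₂ * r₃))
    (hempty : ¬ ∃ R : Set W, R ∈ res2 cs r₁ ∧ R ∈ res2 cs r₂ ∧ R ∈ res2 cs r₃)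
    -- (CT2):
    (hσ₁ : ∃ σ : Set W, σ ∈ res2 cs r₂ ∧ σ ∈ res2 cs r₃ ∧ σ ⊆ α₁)
    (hσ₂ : ∃ σ : Set W, σ ∈ res2 cs r₁ ∧ σ ∈ res2 cs r₃ ∧ σ ⊆ α₂)
    (hσ₃ : ∃ σ : Set W, σ ∈ res2 cs r₁ ∧ σ ∈ res2 cs r₂ ∧ σ ⊆ α₃) :
    ∃! c : W, c ∈ α₁ ∩ α₂ ∩ α₃ := by
  exact Cox.main cs hcard (fun s t h => (h2sph s t h).1) hhyp α₁ α₂ α₃ r₁ r₂ r₃ hα₁ hα₂ hα₃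
    hfin13 hfin23 hempty hσ₁ hσ₂ hσ₃
end
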